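/- arXiv:1905.02083 — 2 statements merged into one kernel-verified Lean document; each statement's English description precedes it below -/
import Mathlib

section
/- For every n ≥ 1, R_n(x,y,z,t) = Σ_{T ∈ G_{n+1}} y^{unl(T)} t^{impp(T)} x^{deg_T(1)-1} z^{lead(T)-deg_T(1)-1}, where the sum is over all Greg trees of size n+1 rooted at 1. -/
noncomputable section

open MvPolynomial Function

/-! ### The polynomial sequences -/

/-- The generalized Ramanujan polynomials `Q n`, in the variables
`x = X 0`, `y = X 1`, `z = X 2`, `t = X 3`:
`Q 1 = 1` and `Q (n+1) = (x + n z + n (y+t)) Q n + (y+t) y ∂_y (Q n)` for `n ≥ 1`. -/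
def Qpoly : ℕ → MvPolynomial (Fin 4) ℚ
  | 0 => 1
  | 1 => 1
  | n + 2 =>
      (X 0 + C ((n : ℚ) + 1) * X 2 + C ((n : ℚ) + 1) * (X 1 + X 3)) * Qpoly (n + 1)
        + (X 1 + X 3) * (X 1 * pderiv 1 (Qpoly (n + 1)))

/-- `R n (x,y,z,t) = Q n (x, y+1, z, t-1)`. -/
def Rpoly (n : ℕ) : MvPolynomial (Fin 4) ℚ :=
  bind₁ (fun i : Fin 4 => if i = 1 then X 1 + 1 else if i = 3 then X 3 - 1 else X i) (Qpoly n)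

/-- `H 1 = 1` and `H (n+1) = (2n-1+(n+1)y) H n + (1+y)^2 H n'` for `n ≥ 1`. -/
def Hpoly : ℕ → Polynomial ℚ
  | 0 => 1
  | 1 => 1
  | n + 2 =>
      (Polynomial.C (2 * (n : ℚ) + 1) + Polynomial.C ((n : ℚ) + 2) * Polynomial.X)
          * Hpoly (n + 1)
        + (1 + Polynomial.X) ^ 2 * Polynomial.derivative (Hpoly (n + 1))

/-- The Ramanujan polynomials, in the variables `x = X 0`, `y = X 1`:
`P 1 = 1` and `P (n+1) = (x + n + n y) P n + y^2 ∂_y (P n)` for `n ≥ 1`. -/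
def Ppoly : ℕ → MvPolynomial (Fin 2) ℚ
  | 0 => 1
  | 1 => 1
  | n + 2 =>
      (X 0 + C ((n : ℚ) + 1) * (1 + X 1)) * Ppoly (n + 1)
        + X 1 ^ 2 * pderiv 1 (Ppoly (n + 1))

/-- `C 1 = 1` and `C (n+1) = n (1+y) C n + y^2 C n'` for `n ≥ 1`. -/
def Cpoly : ℕ → Polynomial ℚ
  | 0 => 1
  | 1 => 1
  | n + 2 =>
      Polynomial.C ((n : ℚ) + 1) * (1 + Polynomial.X) * Cpoly (n + 1)
        + Polynomial.X ^ 2 * Polynomial.derivative (Cpoly (n + 1))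

/-! ### Cayley trees

A Cayley tree of size `n`, rooted at the vertex with label `1`, is encoded by its parent
function on `Fin n` (vertex `v` carries label `v+1`; the root is the vertex with value `0`).
The root is a fixed point and every vertex reaches the root by iterating the parent map. -/

def CayleyTree (n : ℕ) : Type :=
  {p : Fin n → Fin n //
    (∀ v, v.val = 0 → p v = v) ∧ ∀ v : Fin n, ∃ k, k < n ∧ (p^[k] v).val = 0}

noncomputable instance (n : ℕ) : Fintype (CayleyTree n) := by
  unfold CayleyTree; exact Fintype.ofFinite _

namespace CayleyTree

variable {n : ℕ} (T : CayleyTree n)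

/-- `Desc T v a` : `v` is a descendant of `a` (including `a` itself). -/
def Desc (v a : Fin n) : Prop := ∃ k, T.1^[k] v = a

/-- `β_T(a)` : the smallest label among the descendants of `a`, as a 0-based index. -/
def beta (a : Fin n) : ℕ := sInf {j : ℕ | ∃ v : Fin n, v.val = j ∧ T.Desc v a}

/-- The edge from `c` to its parent is improper: `λ(parent c) > β(c)`. -/
def ImproperEdge (c : Fin n) : Prop := c.val ≠ 0 ∧ T.beta c < (T.1 c).val

/-- The number of improper edges. -/
def impe : ℕ := {c : Fin n | T.ImproperEdge c}.ncard

/-- `a` is an improper parent, i.e. `β_T(a) ≠ λ_T(a)`. -/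
def ImproperParent (a : Fin n) : Prop := T.beta a ≠ a.val

/-- The number of improper parents. -/
def impp : ℕ := {a : Fin n | T.ImproperParent a}.ncard

/-- The degree of the root (= its number of children). -/
def degRoot : ℕ := {c : Fin n | c.val ≠ 0 ∧ (T.1 c).val = 0}.ncard

/-- The length of the greater ancestors path of `i` : the largest `k` such that all the
ancestors `p^[l] i`, `l ≤ k`, have a label `≥ λ(i)`. -/
def bapLen (i : Fin n) : ℕ := Nat.findGreatest (fun k => ∀ l ≤ k, i ≤ T.1^[l] i) n

/-- `i` is a leading vertex: `β_T(a_p) = λ_T(i)` where `a_p` is the top of the greater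
ancestors path of `i`. -/
def Leading (i : Fin n) : Prop := T.beta (T.1^[T.bapLen i] i) = i.val

/-- The number of leading vertices. -/
def lead : ℕ := {i : Fin n | T.Leading i}.ncard

end CayleyTree

/-! ### Greg trees

A Greg tree of size `n`, rooted at the vertex with label `1`, has labelled vertices `Fin n`
(vertex `Sum.inl v` carries label `v+1`) and unlabelled vertices `Fin m`, each of degree at
least `3`.  It is encoded by its parent function.  To make the encoding canonical, the
unlabelled vertices are required to be indexed in increasing order of the pair
`(β, depth)` (this pair is distinct for distinct unlabelled vertices, so every abstract Greg
tree admits exactly one such encoding). -/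

/-- The root: the labelled vertex with label `1` (value `0`). -/
def gregRoot {n m : ℕ} (v : Fin n ⊕ Fin m) : Prop := ∃ w : Fin n, w.val = 0 ∧ v = Sum.inl w

namespace GregRaw

variable {n m : ℕ} (p : Fin n ⊕ Fin m → Fin n ⊕ Fin m)

/-- `v` is a descendant of `a` (including `a` itself). -/
def Desc (v a : Fin n ⊕ Fin m) : Prop := ∃ k, p^[k] v = a

/-- `β(a)` : smallest label among the descendants of `a`, as a 0-based index. -/
def beta (a : Fin n ⊕ Fin m) : ℕ :=
  sInf {j : ℕ | ∃ w : Fin n, w.val = j ∧ Desc p (Sum.inl w) a}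

/-- Distance from `v` to the root. -/
def depth (v : Fin n ⊕ Fin m) : ℕ := sInf {k : ℕ | gregRoot (p^[k] v)}

/-- Sorting key for unlabelled vertices: the pair `(β, depth)` encoded as a number. -/
def key (u : Fin m) : ℕ := beta p (Sum.inr u) * (n + m + 1) + depth p (Sum.inr u)

/-- The set of children of a vertex. -/
def children (a : Fin n ⊕ Fin m) : Set (Fin n ⊕ Fin m) := {w | w ≠ a ∧ p w = a}

end GregRaw

/-- The conditions making a parent function on `Fin n ⊕ Fin m` a (canonically encoded)
Greg tree: the root is a fixed point, every vertex reaches the root, every unlabelled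
vertex has at least two children (hence, having also a parent, degree at least `3`),
and unlabelled vertices are indexed in increasing order of `(β, depth)`. -/
def GregCond (n m : ℕ) (p : Fin n ⊕ Fin m → Fin n ⊕ Fin m) : Prop :=
  (∀ v, gregRoot v → p v = v) ∧
  (∀ v, ∃ k, k < n + m ∧ gregRoot (p^[k] v)) ∧
  (∀ u : Fin m, 2 ≤ (GregRaw.children p (Sum.inr u)).ncard) ∧
  (∀ u w : Fin m, u < w ↔ GregRaw.key p u < GregRaw.key p w)

/-- Greg trees of size `n` rooted at `1`.  (The number of unlabelled vertices of a Greg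
tree with `n` labelled vertices is always at most `n`, so the bound `m ≤ n` does not
exclude any Greg tree.) -/
def GregTree (n : ℕ) : Type :=
  Σ m : Fin (n + 1), {p : Fin n ⊕ Fin m.val → Fin n ⊕ Fin m.val // GregCond n m.val p}

noncomputable instance (n : ℕ) : Fintype (GregTree n) := by
  unfold GregTree; exact Fintype.ofFinite _

namespace GregTree

variable {n : ℕ} (T : GregTree n)

/-- The number of unlabelled vertices. -/
def unl : ℕ := T.1.val

/-- `β_T`. -/
def beta (a : Fin n ⊕ Fin T.1.val) : ℕ := GregRaw.beta T.2.1 a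

/-- The labelled vertex `a` is an improper parent, i.e. `β_T(a) ≠ λ_T(a)`. -/
def ImproperParent (a : Fin n) : Prop := T.beta (Sum.inl a) ≠ a.val

/-- The number of improper parents. -/
def impp : ℕ := {a : Fin n | T.ImproperParent a}.ncard

/-- The degree of the root (= its number of children). -/
def degRoot : ℕ :=
  {w : Fin n ⊕ Fin T.1.val | ¬gregRoot w ∧ gregRoot (T.2.1 w)}.ncard

/-- The length of the greater ancestors path of the labelled vertex `i` : the largest `k`
such that all labelled vertices among the ancestors `p^[l] (inl i)`, `l ≤ k`, have a label
`≥ λ(i)`. -/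
def bapLen (i : Fin n) : ℕ :=
  Nat.findGreatest
    (fun k => ∀ l ≤ k, ∀ j : Fin n, T.2.1^[l] (Sum.inl i) = Sum.inl j → i ≤ j)
    (n + T.1.val)

/-- The labelled vertex `i` is a leading vertex. -/
def Leading (i : Fin n) : Prop := T.beta (T.2.1^[T.bapLen i] (Sum.inl i)) = i.val

/-- The number of leading vertices. -/
def lead : ℕ := {i : Fin n | T.Leading i}.ncard

end GregTree

/-! ### Planar trees

A planar tree of size `n` rooted at `1` is encoded by a parent function together with a
rank function giving each non-root vertex its position (from the left, starting at `0`)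
among the children of its parent; ranks of the children of a fixed vertex form an initial
segment of `ℕ`, so the encoding is canonical. -/

def PlanarTree (n : ℕ) : Type :=
  {pr : (Fin n → Fin n) × (Fin n → Fin n) //
    (∀ v, v.val = 0 → pr.1 v = v) ∧
    (∀ v : Fin n, ∃ k, k < n ∧ (pr.1^[k] v).val = 0) ∧
    (∀ v, v.val = 0 → (pr.2 v).val = 0) ∧
    (∀ c d, c.val ≠ 0 → d.val ≠ 0 → pr.1 c = pr.1 d → pr.2 c = pr.2 d → c = d) ∧
    (∀ c, c.val ≠ 0 → ∀ s : Fin n, s < pr.2 c →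
      ∃ d, d.val ≠ 0 ∧ pr.1 d = pr.1 c ∧ pr.2 d = s)}

noncomputable instance (n : ℕ) : Fintype (PlanarTree n) := by
  unfold PlanarTree; exact Fintype.ofFinite _

namespace PlanarTree

variable {n : ℕ} (T : PlanarTree n)

/-- `β_T(a)` : the smallest label among the descendants of `a`, as a 0-based index. -/
def beta (a : Fin n) : ℕ := sInf {j : ℕ | ∃ v : Fin n, v.val = j ∧ ∃ k, T.1.1^[k] v = a}

/-- `j` is elder: it has a brother to its right with a smaller `β`. -/
def Elder (j : Fin n) : Prop :=
  j.val ≠ 0 ∧ ∃ k : Fin n, k.val ≠ 0 ∧ T.1.1 k = T.1.1 j ∧ T.1.2 j < T.1.2 k ∧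
    T.beta k < T.beta j

/-- The number of elder vertices. -/
def eld : ℕ := {j : Fin n | T.Elder j}.ncard

/-- The edge from `c` to its parent is improper: `c` is a younger child and
`λ(parent c) > β(c)`. -/
def ImproperEdge (c : Fin n) : Prop := c.val ≠ 0 ∧ ¬T.Elder c ∧ T.beta c < (T.1.1 c).val

/-- The number of improper edges. -/
def impe : ℕ := {c : Fin n | T.ImproperEdge c}.ncard

/-- `young_T(i)` : the number of younger children of `i`. -/
def young (i : Fin n) : ℕ := {c : Fin n | c.val ≠ 0 ∧ T.1.1 c = i ∧ ¬T.Elder c}.ncard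

/-- `young_T(1)` : the number of younger children of the root. -/
def youngRoot : ℕ := {c : Fin n | c.val ≠ 0 ∧ (T.1.1 c).val = 0 ∧ ¬T.Elder c}.ncard

end PlanarTree

/-!
A Greg tree is determined by the laminar family of its clusters, the label sets of the descendants
of its vertices; an unlabelled vertex is one whose cluster is not the least cluster containing some
label. Erasing the largest label from all clusters of a tree gives a Greg tree with one label less.
Conversely, a new largest label can be inserted at a vertex in four ways: as a leaf below it, as a
leaf below a new unlabelled vertex on the edge above it, as a vertex on that edge, or, if the vertex
is unlabelled, as its label. At the root only the first way exists and multiplies the monomial of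
the tree by `x`; at any other labelled vertex the first three exist and multiply it by `z`, `y` and
`t`; at an unlabelled vertex the four ways multiply it by `1`, `y`, `t` and `t / y`, which add up to
`(y + t) * (y + 1) / y`. Summing over the vertices gives the recurrence
`R (n + 1) = (x + n * z + n * (y + t)) * R n + (y + t) * (y + 1) * ∂R n/∂y`, because `y * ∂/∂y`
multiplies a monomial by the number of unlabelled vertices.
-/

namespace GregFamily

open Finset

theorem exists_least_of_total {α : Type*} [PartialOrder α] {s : Finset α} (hs : s.Nonempty)
    (h : ∀ a ∈ s, ∀ b ∈ s, a ≤ b ∨ b ≤ a) : ∃ a ∈ s, ∀ b ∈ s, a ≤ b := by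
  obtain ⟨a, ha⟩ := s.exists_minimal hs
  exact ⟨a, ha.prop, fun b hb => (h a ha.prop b hb).elim id fun hba => ha.le_of_le hb hba⟩

/-! ### Families of clusters -/

/-- `LabelDesc F j i` : in the tree with clusters `F`, the vertex labelled `j` is a descendant of
the vertex labelled `i`, that is, every cluster containing `i` contains `j`. -/
def LabelDesc (F : Finset (Finset ℕ)) (j i : ℕ) : Prop := ∀ S ∈ F, i ∈ S → j ∈ S

/-- `IsGreg n F` : the finite sets in `F` are the clusters (the sets of labels of the
descendants of a vertex) of a Greg tree with label set `{0, …, n - 1}` rooted at the vertex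
labelled `0`. -/
structure IsGreg (n : ℕ) (F : Finset (Finset ℕ)) : Prop where
  subset_range : ∀ S ∈ F, S ⊆ range n
  nonempty : ∀ S ∈ F, S.Nonempty
  range_mem : range n ∈ F
  eq_range_of_zero_mem : ∀ S ∈ F, 0 ∈ S → S = range n
  subset_or_subset : ∀ S ∈ F, ∀ T ∈ F, ∀ i ∈ S, i ∈ T → S ⊆ T ∨ T ⊆ S
  eq_of_labelDesc : ∀ i < n, ∀ j < n, LabelDesc F i j → LabelDesc F j i → i = j

open Classical in
/-- The cluster of the vertex labelled `i`. -/
def labelCluster (n : ℕ) (F : Finset (Finset ℕ)) (i : ℕ) : Finset ℕ :=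
  {j ∈ range n | LabelDesc F j i}

/-- The clusters of the labelled vertices. -/
def labelledClusters (n : ℕ) (F : Finset (Finset ℕ)) : Finset (Finset ℕ) :=
  (range n).image (labelCluster n F)

section Basic

variable {n i j : ℕ} {F : Finset (Finset ℕ)} {S T : Finset ℕ}

theorem IsGreg.pos (hF : IsGreg n F) : 0 < n :=
  nonempty_range_iff.1 (hF.nonempty _ hF.range_mem) |>.bot_lt

theorem IsGreg.notMem (hF : IsGreg n F) : ∀ S ∈ F, n ∉ S :=
  fun S hS hn => notMem_range_self (hF.subset_range S hS hn)

theorem IsGreg.empty_notMem (hF : IsGreg n F) : ∅ ∉ F :=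
  fun h => not_nonempty_empty (hF.nonempty _ h)

theorem mem_labelCluster : j ∈ labelCluster n F i ↔ j < n ∧ LabelDesc F j i := by
  simp only [labelCluster, mem_filter, mem_range]

theorem mem_labelCluster_self (hi : i < n) : i ∈ labelCluster n F i :=
  mem_labelCluster.2 ⟨hi, fun _ _ => id⟩

theorem labelCluster_subset (hS : S ∈ F) (hi : i ∈ S) : labelCluster n F i ⊆ S :=
  fun _ hj => (mem_labelCluster.1 hj).2 S hS hi

theorem IsGreg.labelCluster_mem (hF : IsGreg n F) (hi : i < n) : labelCluster n F i ∈ F := by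
  obtain ⟨L, hL, hmin⟩ := exists_least_of_total (s := {S ∈ F | i ∈ S})
    ⟨range n, mem_filter.2 ⟨hF.range_mem, mem_range.2 hi⟩⟩ fun S hS T hT => by
      rw [mem_filter] at hS hT
      exact hF.subset_or_subset S hS.1 T hT.1 i hS.2 hT.2
  rw [mem_filter] at hL
  suffices labelCluster n F i = L from this ▸ hL.1
  refine (labelCluster_subset hL.1 hL.2).antisymm fun j hj => ?_
  exact mem_labelCluster.2 ⟨mem_range.1 (hF.subset_range L hL.1 hj),
    fun S hS hiS => hmin S (mem_filter.2 ⟨hS, hiS⟩) hj⟩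

theorem IsGreg.labelCluster_injOn (hF : IsGreg n F) :
    Set.InjOn (labelCluster n F) (range n : Finset ℕ) := by
  intro i hi j hj h
  rw [mem_coe, mem_range] at hi hj
  have hij : i ∈ labelCluster n F j := h ▸ mem_labelCluster_self hi
  have hji : j ∈ labelCluster n F i := h ▸ mem_labelCluster_self hj
  exact hF.eq_of_labelDesc i hi j hj (mem_labelCluster.1 hij).2 (mem_labelCluster.1 hji).2

theorem IsGreg.labelledClusters_subset (hF : IsGreg n F) : labelledClusters n F ⊆ F :=
  image_subset_iff.2 fun _ hi => hF.labelCluster_mem (mem_range.1 hi)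

theorem IsGreg.card_labelledClusters (hF : IsGreg n F) : #(labelledClusters n F) = n := by
  rw [labelledClusters, card_image_of_injOn hF.labelCluster_injOn, card_range]

theorem IsGreg.le_card (hF : IsGreg n F) : n ≤ #F :=
  hF.card_labelledClusters ▸ card_le_card hF.labelledClusters_subset

theorem IsGreg.mem_labelledClusters_iff (hF : IsGreg n F) (hS : S ∈ F) :
    S ∈ labelledClusters n F ↔ ∃ i ∈ S, ∀ T ∈ F, i ∈ T → S ⊆ T := by
  simp only [labelledClusters, mem_image, mem_range]
  constructor
  · rintro ⟨i, hi, rfl⟩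
    exact ⟨i, mem_labelCluster_self hi, fun _ hT hiT => labelCluster_subset hT hiT⟩
  · rintro ⟨i, hiS, hmin⟩
    have hi : i < n := mem_range.1 (hF.subset_range S hS hiS)
    exact ⟨i, hi, (labelCluster_subset hS hiS).antisymm
      (hmin _ (hF.labelCluster_mem hi) (mem_labelCluster_self hi))⟩

theorem IsGreg.range_mem_labelledClusters (hF : IsGreg n F) : range n ∈ labelledClusters n F :=
  (hF.mem_labelledClusters_iff hF.range_mem).2 ⟨0, mem_range.2 hF.pos,
    fun T hT h0 => (hF.eq_range_of_zero_mem T hT h0).ge⟩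

end Basic

/-! ### Inserting and erasing the largest label -/

/-- The cluster `T` after a vertex labelled `n` has been inserted below all vertices whose
cluster contains `S`. -/
def insertAbove (n : ℕ) (S T : Finset ℕ) : Finset ℕ := if S ⊆ T then insert n T else T

/-- The family obtained by inserting the label `n` at the vertex with cluster `S`. The clusters
`⊇ S` receive the new label; `keep` retains the old cluster `S` besides `insert n S`, and `leaf`
adds the leaf `{n}`. So `n` becomes a leaf attached to the vertex (`leaf` only), a leaf attached
to a new unlabelled vertex in the middle of the edge above it (both), a vertex in the middle of
that edge (`keep` only), or the label of the vertex itself (neither). -/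
def insertLabel (n : ℕ) (F : Finset (Finset ℕ)) (S : Finset ℕ) (keep leaf : Bool) :
    Finset (Finset ℕ) :=
  F.image (insertAbove n S) ∪ (if keep then {S} else ∅) ∪ (if leaf then {{n}} else ∅)

/-- The family obtained by erasing the label `n`. -/
def eraseLabel (n : ℕ) (F : Finset (Finset ℕ)) : Finset (Finset ℕ) :=
  (F.image (·.erase n)).erase ∅

/-- The choices for which inserting the label `n` in a Greg tree gives a Greg tree: there is no
edge above the root, and a labelled vertex cannot receive a second label. -/
def IsAdmissible (n : ℕ) (F : Finset (Finset ℕ)) (S : Finset ℕ) (keep leaf : Bool) : Prop :=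
  S ∈ F ∧ (keep → S ≠ range n) ∧ (S ∈ labelledClusters n F → keep ∨ leaf)

section Insert

variable {n i j : ℕ} {F : Finset (Finset ℕ)} {S T U : Finset ℕ} {keep leaf : Bool}

theorem mem_insertAbove : i ∈ insertAbove n S T ↔ i ∈ T ∨ i = n ∧ S ⊆ T := by
  unfold insertAbove
  split_ifs with h <;> simp [h, or_comm]

theorem insertAbove_subset_insertAbove_iff (hS : n ∉ S) :
    insertAbove n U S ⊆ insertAbove n U T ↔ S ⊆ T := by
  simp only [subset_iff, mem_insertAbove]
  constructor
  · intro h i hi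
    exact (h (Or.inl hi)).resolve_right fun hin => hS (hin.1 ▸ hi)
  · rintro h i (hi | ⟨hin, hU⟩)
    · exact Or.inl (h hi)
    · exact Or.inr ⟨hin, fun k hk => h (hU hk)⟩

theorem insertAbove_inj (hS : n ∉ S) (hT : n ∉ T) :
    insertAbove n U S = insertAbove n U T ↔ S = T := by
  rw [Subset.antisymm_iff, insertAbove_subset_insertAbove_iff hS,
    insertAbove_subset_insertAbove_iff hT, ← Subset.antisymm_iff]

theorem insertAbove_range (hS : S ⊆ range n) : insertAbove n S (range n) = range (n + 1) := by
  rw [insertAbove, if_pos hS, range_add_one]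

theorem mem_insertLabel : U ∈ insertLabel n F S keep leaf ↔
    (∃ T ∈ F, insertAbove n S T = U) ∨ (keep ∧ U = S) ∨ (leaf ∧ U = {n}) := by
  cases keep <;> cases leaf <;> simp [insertLabel, or_comm, or_assoc]

theorem insertAbove_mem_insertLabel (hT : T ∈ F) :
    insertAbove n S T ∈ insertLabel n F S keep leaf :=
  mem_insertLabel.2 (Or.inl ⟨T, hT, rfl⟩)

theorem forall_mem_insertLabel {P : Finset ℕ → Prop} :
    (∀ U ∈ insertLabel n F S keep leaf, P U) ↔
      (∀ T ∈ F, P (insertAbove n S T)) ∧ (keep → P S) ∧ (leaf → P {n}) := by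
  simp only [mem_insertLabel, or_imp, forall_and, forall_exists_index, and_imp,
    forall_apply_eq_imp_iff₂, forall_comm (α := Finset ℕ) (β := keep = true),
    forall_comm (α := Finset ℕ) (β := leaf = true), forall_eq]

theorem mem_insertLabel_of_notMem (hS : S ∈ F) (hU : n ∉ U) :
    U ∈ insertLabel n F S keep leaf ↔ U ∈ F ∧ (S ⊆ U → keep ∧ U = S) := by
  rw [mem_insertLabel]
  constructor
  · rintro (⟨T, hT, rfl⟩ | ⟨hk, rfl⟩ | ⟨-, rfl⟩)
    · by_cases h : S ⊆ T
      · simp [insertAbove, h] at hU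
      · simp [insertAbove, h, hT]
    · exact ⟨hS, fun _ => ⟨hk, rfl⟩⟩
    · simp at hU
  · rintro ⟨hUF, h⟩
    by_cases hSU : S ⊆ U
    · exact Or.inr (Or.inl (h hSU))
    · exact Or.inl ⟨U, hUF, if_neg hSU⟩

theorem insert_mem_insertLabel (hF : ∀ T ∈ F, n ∉ T) (hS : S ∈ F) (hU : n ∉ U) :
    insert n U ∈ insertLabel n F S keep leaf ↔ (U ∈ F ∧ S ⊆ U) ∨ (leaf ∧ U = ∅) := by
  have insert_eq {T : Finset ℕ} (hT : n ∉ T) (h : insert n T = insert n U) : T = U := by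
    rw [← erase_insert hT, h, erase_insert hU]
  rw [mem_insertLabel]
  constructor
  · rintro (⟨T, hT, h⟩ | ⟨-, h⟩ | ⟨hl, h⟩)
    · by_cases hST : S ⊆ T
      · rw [insertAbove, if_pos hST] at h
        obtain rfl := insert_eq (hF T hT) h
        exact Or.inl ⟨hT, hST⟩
      · rw [insertAbove, if_neg hST] at h
        exact absurd (h ▸ mem_insert_self n U) (hF T hT)
    · exact absurd (h ▸ mem_insert_self n U) (hF S hS)
    · exact Or.inr ⟨hl, (insert_eq (notMem_empty n) h.symm).symm⟩
  · rintro (⟨hUF, hSU⟩ | ⟨hl, rfl⟩)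
    · exact Or.inl ⟨U, hUF, if_pos hSU⟩
    · exact Or.inr (Or.inr ⟨hl, rfl⟩)

theorem mem_eraseLabel :
    U ∈ eraseLabel n F ↔ U.Nonempty ∧ ∃ T ∈ F, T.erase n = U := by
  rw [eraseLabel, mem_erase, mem_image, nonempty_iff_ne_empty]

theorem notMem_of_mem_eraseLabel (hU : U ∈ eraseLabel n F) : n ∉ U := by
  obtain ⟨-, T, -, rfl⟩ := mem_eraseLabel.1 hU
  exact notMem_erase n T

theorem mem_eraseLabel_of_notMem (hU : n ∉ U) :
    U ∈ eraseLabel n F ↔ U.Nonempty ∧ (U ∈ F ∨ insert n U ∈ F) := by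
  rw [mem_eraseLabel]
  refine and_congr_right fun _ => ⟨?_, ?_⟩
  · rintro ⟨T, hT, rfl⟩
    by_cases hn : n ∈ T
    · exact Or.inr (by rwa [insert_erase hn])
    · exact Or.inl (by rwa [erase_eq_of_notMem hn])
  · rintro (h | h)
    · exact ⟨U, h, erase_eq_of_notMem hU⟩
    · exact ⟨_, h, erase_insert hU⟩

theorem eraseLabel_insertLabel (hF : ∀ T ∈ F, n ∉ T) (h0 : ∅ ∉ F) (hS : S ∈ F) :
    eraseLabel n (insertLabel n F S keep leaf) = F := by
  ext U
  by_cases hU : n ∈ U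
  · exact iff_of_false (fun h => notMem_of_mem_eraseLabel h hU) (fun h => hF U h hU)
  rw [mem_eraseLabel_of_notMem hU, mem_insertLabel_of_notMem hS hU,
    insert_mem_insertLabel hF hS hU]
  constructor
  · rintro ⟨hne, ⟨h, -⟩ | ⟨h, -⟩ | ⟨-, rfl⟩⟩
    · exact h
    · exact h
    · exact absurd hne not_nonempty_empty
  · intro h
    refine ⟨nonempty_iff_ne_empty.2 fun h' => h0 (h' ▸ h), ?_⟩
    by_cases hSU : S ⊆ U
    · exact Or.inr (Or.inl ⟨h, hSU⟩)
    · exact Or.inl ⟨h, fun h' => absurd h' hSU⟩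

theorem mem_insertLabel_self_iff (hF : ∀ T ∈ F, n ∉ T) (hS : S ∈ F) :
    S ∈ insertLabel n F S keep leaf ↔ keep := by
  simp [mem_insertLabel_of_notMem hS (hF S hS), hS]

theorem singleton_mem_insertLabel_iff (hF : ∀ T ∈ F, n ∉ T) (h0 : ∅ ∉ F) (hS : S ∈ F) :
    {n} ∈ insertLabel n F S keep leaf ↔ leaf := by
  have := insert_mem_insertLabel (keep := keep) (leaf := leaf) hF hS (notMem_empty n)
  simpa [h0] using this

theorem insertLabel_inj {S' : Finset ℕ} {keep' leaf' : Bool} (hF : ∀ T ∈ F, n ∉ T) (h0 : ∅ ∉ F)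
    (hS : S ∈ F) (hS' : S' ∈ F)
    (h : insertLabel n F S keep leaf = insertLabel n F S' keep' leaf') :
    S = S' ∧ keep = keep' ∧ leaf = leaf' := by
  have subset_of_eq {S S' : Finset ℕ} {keep leaf keep' leaf' : Bool} (hS : S ∈ F) (hS' : S' ∈ F)
      (h : insertLabel n F S keep leaf = insertLabel n F S' keep' leaf') : S' ⊆ S := by
    have hmem : insert n S ∈ insertLabel n F S keep leaf :=
      (insert_mem_insertLabel hF hS (hF S hS)).2 (Or.inl ⟨hS, Subset.rfl⟩)
    rw [h, insert_mem_insertLabel hF hS' (hF S hS)] at hmem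
    exact (hmem.resolve_right fun h' => h0 (h'.2 ▸ hS)).2
  obtain rfl : S = S' := (subset_of_eq hS' hS h.symm).antisymm (subset_of_eq hS hS' h)
  refine ⟨rfl, Bool.eq_iff_iff.2 ?_, Bool.eq_iff_iff.2 ?_⟩
  · rw [← mem_insertLabel_self_iff (leaf := leaf) hF hS, h, mem_insertLabel_self_iff hF hS]
  · rw [← singleton_mem_insertLabel_iff (keep := keep) hF h0 hS, h,
      singleton_mem_insertLabel_iff hF h0 hS]

theorem labelDesc_insertLabel_iff (hS : S ∈ F) (hi : i ≠ n) (hj : j ≠ n) :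
    LabelDesc (insertLabel n F S keep leaf) j i ↔ LabelDesc F j i := by
  rw [LabelDesc, forall_mem_insertLabel]
  simp only [mem_insertAbove, hi, hj, false_and, or_false, mem_singleton, false_imp_iff,
    implies_true, and_true]
  exact ⟨And.left, fun h => ⟨h, fun _ => h S hS⟩⟩

theorem labelDesc_insertLabel_left (hF : ∀ T ∈ F, n ∉ T) (hS : S ∈ F) (hi : i ≠ n) :
    LabelDesc (insertLabel n F S keep leaf) n i ↔
      (keep → i ∉ S) ∧ ∀ T ∈ F, i ∈ T → S ⊆ T := by
  have hnS : n ∉ S := hF S hS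
  rw [LabelDesc, forall_mem_insertLabel]
  simp only [mem_insertAbove, hi, hnS, false_and, or_false, true_and, mem_singleton,
    implies_true, and_true, imp_false]
  rw [and_comm]
  refine and_congr_right fun _ => forall₂_congr fun T hT => ?_
  simp [hF T hT]

theorem labelDesc_insertLabel_right (hF : ∀ T ∈ F, n ∉ T) (hS : S ∈ F) (hi : i ≠ n) :
    LabelDesc (insertLabel n F S keep leaf) i n ↔ leaf = false ∧ i ∈ S := by
  have hnS : n ∉ S := hF S hS
  rw [LabelDesc, forall_mem_insertLabel]
  simp only [mem_insertAbove, hi, hnS, false_and, or_false, true_and, mem_singleton,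
    false_imp_iff, implies_true, not_true_eq_false, imp_false, Bool.not_eq_true]
  rw [and_comm]
  refine and_congr_right fun _ => ⟨fun h => h S hS (Or.inr Subset.rfl), ?_⟩
  rintro hiS T hT (h | h)
  · exact absurd h (hF T hT)
  · exact h hiS

theorem labelDesc_eraseLabel_iff (hi : i ≠ n) (hj : j ≠ n) :
    LabelDesc (eraseLabel n F) j i ↔ LabelDesc F j i := by
  constructor
  · intro h S hS hiS
    have hi' : i ∈ S.erase n := mem_erase.2 ⟨hi, hiS⟩
    exact mem_of_mem_erase (h _ (mem_eraseLabel.2 ⟨⟨i, hi'⟩, S, hS, rfl⟩) hi')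
  · intro h U hU hiU
    obtain ⟨-, S, hS, rfl⟩ := mem_eraseLabel.1 hU
    exact mem_erase.2 ⟨hj, h S hS (mem_of_mem_erase hiU)⟩

theorem card_insertLabel (hF : ∀ T ∈ F, n ∉ T) (h0 : ∅ ∉ F) (hS : S ∈ F) :
    #(insertLabel n F S keep leaf) = #F + keep.toNat + leaf.toNat := by
  have hlift : #(F.image (insertAbove n S)) = #F :=
    card_image_of_injOn fun T hT T' hT' => (insertAbove_inj (hF T hT) (hF T' hT')).1
  have hS' : S ∉ F.image (insertAbove n S) := by
    have := mem_insertLabel_self_iff (keep := false) (leaf := false) hF hS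
    simpa [insertLabel] using this
  have hn : {n} ∉ F.image (insertAbove n S) ∪ (if keep then {S} else ∅) := by
    have := singleton_mem_insertLabel_iff (keep := keep) (leaf := false) hF h0 hS
    simpa [insertLabel] using this
  rw [insertLabel, card_union_of_disjoint, card_union_of_disjoint, hlift]
  · cases keep <;> cases leaf <;> rfl
  · cases keep
    · simp
    · exact disjoint_singleton_right.2 hS'
  · cases leaf
    · simp
    · exact disjoint_singleton_right.2 hn

end Insert

section IsGregInsert

variable {n : ℕ} {F : Finset (Finset ℕ)} {S T U : Finset ℕ} {keep leaf : Bool}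

theorem IsGreg.insertAbove_subset_or_subset (hF : IsGreg n F) (hS : S ∈ F) {T T' : Finset ℕ}
    (hT : T ∈ F) (hT' : T' ∈ F) {i : ℕ} (hi : i ∈ insertAbove n S T)
    (hi' : i ∈ insertAbove n S T') :
    insertAbove n S T ⊆ insertAbove n S T' ∨ insertAbove n S T' ⊆ insertAbove n S T := by
  rw [insertAbove_subset_insertAbove_iff (hF.notMem T hT),
    insertAbove_subset_insertAbove_iff (hF.notMem T' hT')]
  obtain ⟨j, hj, hj'⟩ : ∃ j ∈ T, j ∈ T' := by
    rcases mem_insertAbove.1 hi with hi | ⟨rfl, hST⟩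
    · exact ⟨i, hi, (mem_insertAbove.1 hi').resolve_right fun h => hF.notMem T hT (h.1 ▸ hi)⟩
    · obtain ⟨k, hk⟩ := hF.nonempty S hS
      exact ⟨k, hST hk, ((mem_insertAbove.1 hi').resolve_left (hF.notMem T' hT')).2 hk⟩
  exact hF.subset_or_subset T hT T' hT' j hj hj'

theorem IsGreg.subset_or_subset_insertLabel (hF : IsGreg n F) (hS : S ∈ F) :
    ∀ U ∈ insertLabel n F S keep leaf, ∀ V ∈ insertLabel n F S keep leaf,
      ∀ i ∈ U, i ∈ V → U ⊆ V ∨ V ⊆ U := by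
  have insertAbove_self : ∀ T ∈ F, ∀ i ∈ S, i ∈ insertAbove n S T →
      S ⊆ insertAbove n S T ∨ insertAbove n S T ⊆ S := by
    intro T hT i hiS hi
    by_cases hST : S ⊆ T
    · exact Or.inl fun j hj => mem_insertAbove.2 (Or.inl (hST hj))
    · rw [insertAbove, if_neg hST] at hi ⊢
      exact hF.subset_or_subset S hS T hT i hiS hi
  intro U hU V hV i hiU hiV
  rw [mem_insertLabel] at hU hV
  rcases hU with ⟨T, hT, rfl⟩ | ⟨-, rfl⟩ | ⟨-, rfl⟩
  · rcases hV with ⟨T', hT', rfl⟩ | ⟨-, rfl⟩ | ⟨-, rfl⟩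
    · exact hF.insertAbove_subset_or_subset hS hT hT' hiU hiV
    · exact (insertAbove_self T hT i hiV hiU).symm
    · exact Or.inr (singleton_subset_iff.2 (mem_singleton.1 hiV ▸ hiU))
  · rcases hV with ⟨T, hT, rfl⟩ | ⟨-, rfl⟩ | ⟨-, rfl⟩
    · exact insertAbove_self T hT i hiU hiV
    · exact Or.inl Subset.rfl
    · exact Or.inr (singleton_subset_iff.2 (mem_singleton.1 hiV ▸ hiU))
  · exact Or.inl (singleton_subset_iff.2 (mem_singleton.1 hiU ▸ hiV))

theorem IsGreg.eq_of_labelDesc_insertLabel (hF : IsGreg n F)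
    (hA : IsAdmissible n F S keep leaf) :
    ∀ i < n + 1, ∀ j < n + 1, LabelDesc (insertLabel n F S keep leaf) i j →
      LabelDesc (insertLabel n F S keep leaf) j i → i = j := by
  obtain ⟨hS, -, hlab⟩ := hA
  have not_mutual {i : ℕ} (hi : i ≠ n)
      (h : LabelDesc (insertLabel n F S keep leaf) n i)
      (h' : LabelDesc (insertLabel n F S keep leaf) i n) : False := by
    rw [labelDesc_insertLabel_left hF.notMem hS hi] at h
    rw [labelDesc_insertLabel_right hF.notMem hS hi] at h'
    rcases hlab ((hF.mem_labelledClusters_iff hS).2 ⟨i, h'.2, h.2⟩) with hk | hl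
    · exact h.1 hk h'.2
    · simp [h'.1] at hl
  intro i hi j hj hij hji
  rcases eq_or_ne i n with rfl | hin
  · by_contra hne
    exact not_mutual (Ne.symm hne) hij hji
  rcases eq_or_ne j n with rfl | hjn
  · exact (not_mutual hin hji hij).elim
  · rw [labelDesc_insertLabel_iff hS hjn hin] at hij
    rw [labelDesc_insertLabel_iff hS hin hjn] at hji
    exact hF.eq_of_labelDesc i (by omega) j (by omega) hij hji

theorem isGreg_insertLabel (hF : IsGreg n F) (hA : IsAdmissible n F S keep leaf) :
    IsGreg (n + 1) (insertLabel n F S keep leaf) where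
  subset_range := by
    refine forall_mem_insertLabel.2 ⟨fun T hT i hi => ?_, fun _ => ?_, fun _ => ?_⟩
    · rcases mem_insertAbove.1 hi with hi | ⟨rfl, -⟩
      · exact range_mono n.le_succ (hF.subset_range T hT hi)
      · exact self_mem_range_succ i
    · exact (hF.subset_range S hA.1).trans (range_mono n.le_succ)
    · exact singleton_subset_iff.2 (self_mem_range_succ n)
  nonempty := forall_mem_insertLabel.2
    ⟨fun T hT => (hF.nonempty T hT).mono fun _ hi => mem_insertAbove.2 (Or.inl hi),
      fun _ => hF.nonempty S hA.1, fun _ => singleton_nonempty n⟩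
  range_mem := insertAbove_range (hF.subset_range S hA.1) ▸
    insertAbove_mem_insertLabel hF.range_mem
  eq_range_of_zero_mem := by
    have hn0 : 0 ≠ n := hF.pos.ne
    refine forall_mem_insertLabel.2 ⟨fun T hT h0 => ?_, fun hk h0 => ?_, fun _ h0 => ?_⟩
    · have h0T : 0 ∈ T := (mem_insertAbove.1 h0).resolve_right fun h => hn0 h.1
      rw [hF.eq_range_of_zero_mem T hT h0T, insertAbove_range (hF.subset_range S hA.1)]
    · exact absurd (hF.eq_range_of_zero_mem S hA.1 h0) (hA.2.1 hk)
    · exact absurd (mem_singleton.1 h0) hn0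
  subset_or_subset := hF.subset_or_subset_insertLabel hA.1
  eq_of_labelDesc := hF.eq_of_labelDesc_insertLabel hA

theorem isGreg_eraseLabel (hn : 0 < n) (hF : IsGreg (n + 1) F) : IsGreg n (eraseLabel n F) where
  subset_range U hU := by
    obtain ⟨-, T, hT, rfl⟩ := mem_eraseLabel.1 hU
    rw [← erase_insert (notMem_range_self (n := n)), ← range_add_one]
    exact erase_subset_erase n (hF.subset_range T hT)
  nonempty U hU := (mem_eraseLabel.1 hU).1
  range_mem := (mem_eraseLabel_of_notMem notMem_range_self).2
    ⟨nonempty_range_iff.2 hn.ne', Or.inr (range_add_one ▸ hF.range_mem)⟩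
  eq_range_of_zero_mem U hU h0 := by
    obtain ⟨-, T, hT, rfl⟩ := mem_eraseLabel.1 hU
    rw [hF.eq_range_of_zero_mem T hT (mem_of_mem_erase h0), range_add_one,
      erase_insert notMem_range_self]
  subset_or_subset U hU V hV i hiU hiV := by
    obtain ⟨-, T, hT, rfl⟩ := mem_eraseLabel.1 hU
    obtain ⟨-, T', hT', rfl⟩ := mem_eraseLabel.1 hV
    exact (hF.subset_or_subset T hT T' hT' i (mem_of_mem_erase hiU) (mem_of_mem_erase hiV)).imp
      (erase_subset_erase n) (erase_subset_erase n)
  eq_of_labelDesc i hi j hj hij hji := by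
    rw [labelDesc_eraseLabel_iff hj.ne hi.ne] at hij
    rw [labelDesc_eraseLabel_iff hi.ne hj.ne] at hji
    exact hF.eq_of_labelDesc i (by omega) j (by omega) hij hji

/-- `S` is the cluster, without `n`, of the lowest vertex with a descendant labelled `n` and a
further label among its descendants: erasing the label `n` is undone by inserting it at `S`. -/
structure IsAttachedAt (n : ℕ) (F : Finset (Finset ℕ)) (S : Finset ℕ) : Prop where
  notMem : n ∉ S
  nonempty : S.Nonempty
  insert_mem : insert n S ∈ F
  subset_of_mem : ∀ T ∈ F, n ∈ T → T ≠ {n} → insert n S ⊆ T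

theorem IsGreg.exists_isAttachedAt (hn : 0 < n) (hF : IsGreg (n + 1) F) :
    ∃ S, IsAttachedAt n F S := by
  have hrange : range (n + 1) ≠ {n} := fun h =>
    hn.ne (mem_singleton.1 (h ▸ mem_range.2 n.succ_pos))
  obtain ⟨M, hM, hmin⟩ := exists_least_of_total (s := {T ∈ F | n ∈ T ∧ T ≠ {n}})
    ⟨_, mem_filter.2 ⟨hF.range_mem, self_mem_range_succ n, hrange⟩⟩ fun T hT T' hT' => by
      rw [mem_filter] at hT hT'
      exact hF.subset_or_subset T hT.1 T' hT'.1 n hT.2.1 hT'.2.1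
  obtain ⟨hMF, hnM, hM1⟩ := mem_filter.1 hM
  refine ⟨M.erase n, notMem_erase n M, ?_, by rwa [insert_erase hnM], fun T hT hnT hT1 => ?_⟩
  · rw [nonempty_iff_ne_empty, Ne, erase_eq_empty_iff, not_or]
    exact ⟨ne_empty_of_mem hnM, hM1⟩
  · rw [insert_erase hnM]
    exact hmin T (mem_filter.2 ⟨hT, hnT, hT1⟩)

theorem IsAttachedAt.eq_of_subset (hF : IsGreg (n + 1) F) (hS : IsAttachedAt n F S) (hT : T ∈ F)
    (hnT : n ∉ T) (hST : S ⊆ T) : T = S := by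
  obtain ⟨i, hi⟩ := hS.nonempty
  refine Subset.antisymm ?_ hST
  rcases hF.subset_or_subset T hT _ hS.insert_mem i (hST hi) (mem_insert_of_mem hi) with h | h
  · exact (subset_insert_iff_of_notMem hnT).1 h
  · exact absurd (h (mem_insert_self n S)) hnT

theorem IsAttachedAt.subset_of_insert_mem (hS : IsAttachedAt n F S) (hU : U.Nonempty)
    (hnU : n ∉ U) (hUF : insert n U ∈ F) : S ⊆ U := by
  have hU1 : insert n U ≠ {n} := fun h => by
    obtain ⟨i, hi⟩ := hU
    exact hnU (mem_singleton.1 (h ▸ mem_insert_of_mem hi : i ∈ ({n} : Finset ℕ)) ▸ hi)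
  have := hS.subset_of_mem _ hUF (mem_insert_self n U) hU1
  exact (insert_subset_insert_iff hS.notMem).1 this

theorem IsAttachedAt.self_mem_eraseLabel (hS : IsAttachedAt n F S) : S ∈ eraseLabel n F :=
  (mem_eraseLabel_of_notMem hS.notMem).2 ⟨hS.nonempty, Or.inr hS.insert_mem⟩

theorem IsAttachedAt.insertLabel_eraseLabel (hF : IsGreg (n + 1) F) (hS : IsAttachedAt n F S) :
    insertLabel n (eraseLabel n F) S (S ∈ F) ({n} ∈ F) = F := by
  have hnE : ∀ T ∈ eraseLabel n F, n ∉ T := fun T => notMem_of_mem_eraseLabel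
  ext W
  by_cases hnW : n ∈ W
  · obtain ⟨U, hnU, rfl⟩ : ∃ U, n ∉ U ∧ insert n U = W :=
      ⟨W.erase n, notMem_erase n W, insert_erase hnW⟩
    rw [insert_mem_insertLabel hnE hS.self_mem_eraseLabel hnU, mem_eraseLabel_of_notMem hnU,
      decide_eq_true_eq]
    constructor
    · rintro (⟨⟨-, hUF | hUF⟩, hSU⟩ | ⟨hn, rfl⟩)
      · exact (hS.eq_of_subset hF hUF hnU hSU) ▸ hS.insert_mem
      · exact hUF
      · exact hn
    · intro hUF
      rcases U.eq_empty_or_nonempty with rfl | hU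
      · exact Or.inr ⟨hUF, rfl⟩
      · exact Or.inl ⟨⟨hU, Or.inr hUF⟩, hS.subset_of_insert_mem hU hnU hUF⟩
  · rw [mem_insertLabel_of_notMem hS.self_mem_eraseLabel hnW, mem_eraseLabel_of_notMem hnW,
      decide_eq_true_eq]
    constructor
    · rintro ⟨⟨hW, hWF | hWF⟩, h⟩
      · exact hWF
      · obtain ⟨hSF, rfl⟩ := h (hS.subset_of_insert_mem hW hnW hWF)
        exact hSF
    · intro hWF
      refine ⟨⟨hF.nonempty W hWF, Or.inl hWF⟩, fun hSW => ?_⟩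
      obtain rfl := hS.eq_of_subset hF hWF hnW hSW
      exact ⟨hWF, rfl⟩

theorem IsAttachedAt.isAdmissible (hn : 0 < n) (hF : IsGreg (n + 1) F)
    (hS : IsAttachedAt n F S) :
    IsAdmissible n (eraseLabel n F) S (S ∈ F) ({n} ∈ F) := by
  simp only [IsAdmissible, decide_eq_true_eq]
  refine ⟨hS.self_mem_eraseLabel, ?_, fun hlab => ?_⟩
  · rintro hSF rfl
    have := hF.eq_range_of_zero_mem _ hSF (mem_range.2 hn)
    exact hS.notMem (this ▸ self_mem_range_succ n)
  · by_contra! h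
    obtain ⟨i, hiS, hmin⟩ :=
      ((isGreg_eraseLabel hn hF).mem_labelledClusters_iff hS.self_mem_eraseLabel).1 hlab
    have hin : i ≠ n := fun h => hS.notMem (h ▸ hiS)
    have hi : i < n + 1 := mem_range.1 (hF.subset_range _ hS.insert_mem (mem_insert_of_mem hiS))
    refine hin (hF.eq_of_labelDesc i hi n n.lt_succ_self (fun T hT hnT => ?_)
      fun T hT hiT => ?_)
    · exact hS.subset_of_mem T hT hnT (fun h1 => h.2 (h1 ▸ hT)) (mem_insert_of_mem hiS)
    · by_contra hnT
      have hTE : T ∈ eraseLabel n F :=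
        (mem_eraseLabel_of_notMem hnT).2 ⟨⟨i, hiT⟩, Or.inl hT⟩
      exact h.1 (hS.eq_of_subset hF hT hnT (hmin T hTE hiT) ▸ hT)

theorem IsGreg.exists_insertLabel (hn : 0 < n) (hF : IsGreg (n + 1) F) :
    ∃ S keep leaf, IsAdmissible n (eraseLabel n F) S keep leaf ∧
      insertLabel n (eraseLabel n F) S keep leaf = F := by
  obtain ⟨S, hS⟩ := hF.exists_isAttachedAt hn
  exact ⟨S, _, _, hS.isAdmissible hn hF, hS.insertLabel_eraseLabel hF⟩

end IsGregInsert

/-! ### Statistics of a family of clusters -/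

section Statistics

variable {n i : ℕ} {F : Finset (Finset ℕ)} {S T U : Finset ℕ} {keep leaf : Bool}

open Classical in
/-- The labels of the improper parents, i.e. of the vertices with a smaller descendant. -/
def improperParents (n : ℕ) (F : Finset (Finset ℕ)) : Finset ℕ :=
  {i ∈ range n | ∃ j < i, LabelDesc F j i}

/-- `i` is the label of a leading vertex: every cluster that contains `i` and a smaller label
contains a smaller label of an ancestor of `i`, so that the cluster of the top of the greater
ancestors path of `i` has minimum `i`. -/
def IsLeading (F : Finset (Finset ℕ)) (i : ℕ) : Prop :=
  ∀ S ∈ F, i ∈ S → (∃ k ∈ S, k < i) → ∃ j ∈ S, j < i ∧ LabelDesc F i j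

open Classical in
/-- The labels of the leading vertices. -/
def leadingLabels (n : ℕ) (F : Finset (Finset ℕ)) : Finset ℕ := {i ∈ range n | IsLeading F i}

open Classical in
/-- The clusters of the children of the root: the maximal proper clusters. -/
def rootChildren (n : ℕ) (F : Finset (Finset ℕ)) : Finset (Finset ℕ) :=
  {S ∈ F | Maximal (· ∈ F.erase (range n)) S}

theorem mem_improperParents : i ∈ improperParents n F ↔ i < n ∧ ∃ j < i, LabelDesc F j i := by
  simp only [improperParents, mem_filter, mem_range]

theorem mem_leadingLabels : i ∈ leadingLabels n F ↔ i < n ∧ IsLeading F i := by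
  simp only [leadingLabels, mem_filter, mem_range]

theorem improperParents_subset : improperParents n F ⊆ range n := fun _ hi =>
  mem_range.2 (mem_improperParents.1 hi).1

theorem leadingLabels_subset : leadingLabels n F ⊆ range n := fun _ hi =>
  mem_range.2 (mem_leadingLabels.1 hi).1

theorem mem_rootChildren :
    S ∈ rootChildren n F ↔ S ∈ F ∧ S ≠ range n ∧ ∀ T ∈ F, T ≠ range n → S ⊆ T → T ⊆ S := by
  classical
  rw [rootChildren, mem_filter]
  simp only [Maximal, mem_erase]
  exact ⟨fun h => ⟨h.1, h.2.1.1, fun T hT hT' => h.2.2 ⟨hT', hT⟩⟩,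
    fun h => ⟨h.1, ⟨h.2.1, h.1⟩, fun T hT => h.2.2 T hT.2 hT.1⟩⟩

theorem IsGreg.improperParents_insertLabel (hF : IsGreg n F) (hS : S ∈ F) :
    improperParents (n + 1) (insertLabel n F S keep leaf) =
      improperParents n F ∪ if leaf then ∅ else {n} := by
  ext i
  rw [mem_union, mem_improperParents, mem_improperParents]
  rcases lt_trichotomy i n with hi | rfl | hi
  · have hmem : i ∉ (if leaf then ∅ else {n} : Finset ℕ) := by
      split_ifs <;> simp [hi.ne]
    simp only [hi, hi.trans n.lt_succ_self, hmem, true_and, or_false]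
    exact exists_congr fun j => and_congr_right fun hj =>
      labelDesc_insertLabel_iff hS hi.ne (hj.trans hi).ne
  · obtain ⟨j, hj⟩ := hF.nonempty S hS
    have hji : j < i := mem_range.1 (hF.subset_range S hS hj)
    have hex : (∃ j < i, LabelDesc (insertLabel i F S keep leaf) j i) ↔ leaf = false :=
      ⟨fun ⟨k, hk, h⟩ => ((labelDesc_insertLabel_right hF.notMem hS hk.ne).1 h).1,
        fun h => ⟨j, hji, (labelDesc_insertLabel_right hF.notMem hS hji.ne).2 ⟨h, hj⟩⟩⟩
    cases leaf <;> simp [hex]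
  · have hmem : i ∉ (if leaf then ∅ else {n} : Finset ℕ) := by
      split_ifs <;> simp [hi.ne']
    simp [hmem, show ¬i < n + 1 by omega, hi.not_gt]

theorem isLeading_insertLabel_iff (hS : S ∈ F) (hi : i < n) :
    IsLeading (insertLabel n F S keep leaf) i ↔ IsLeading F i := by
  have hmem {T : Finset ℕ} {j : ℕ} (hj : j ≤ i) : j ∈ insertAbove n S T ↔ j ∈ T := by
    simp [mem_insertAbove, (hj.trans_lt hi).ne]
  have hlt {T : Finset ℕ} : (∃ k ∈ insertAbove n S T, k < i) ↔ ∃ k ∈ T, k < i :=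
    exists_congr fun k => and_congr_left fun hk => hmem hk.le
  have hdesc {T : Finset ℕ} : (∃ j ∈ T, j < i ∧
      LabelDesc (insertLabel n F S keep leaf) i j) ↔ ∃ j ∈ T, j < i ∧ LabelDesc F i j :=
    exists_congr fun j => and_congr_right fun _ => and_congr_right fun hj =>
      labelDesc_insertLabel_iff hS (hj.trans hi).ne hi.ne
  have hanc {T : Finset ℕ} : (∃ j ∈ insertAbove n S T, j < i ∧ LabelDesc F i j) ↔
      ∃ j ∈ T, j < i ∧ LabelDesc F i j :=
    exists_congr fun j => and_congr_left fun hj => hmem hj.1.le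
  rw [IsLeading, forall_mem_insertLabel]
  simp only [hdesc, hanc, hlt, hmem le_rfl, mem_singleton, hi.ne, false_imp_iff, implies_true,
    and_true]
  exact ⟨And.left, fun h => ⟨h, fun _ => h S hS⟩⟩

theorem IsGreg.isLeading_insertLabel_self_iff (hF : IsGreg n F) (hS : S ∈ F) :
    IsLeading (insertLabel n F S keep leaf) n ↔
      keep = false ∧ S ∈ labelledClusters n F := by
  have hlt {T : Finset ℕ} (hT : T ∈ F) {k : ℕ} (hk : k ∈ T) : k < n :=
    mem_range.1 (hF.subset_range T hT hk)
  rw [IsLeading, forall_mem_insertLabel, hF.mem_labelledClusters_iff hS]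
  constructor
  · rintro ⟨h, -, -⟩
    obtain ⟨k, hk⟩ := hF.nonempty S hS
    obtain ⟨j, hj, hjn, hdesc⟩ := h S hS (mem_insertAbove.2 (Or.inr ⟨rfl, Subset.rfl⟩))
      ⟨k, mem_insertAbove.2 (Or.inl hk), hlt hS hk⟩
    have hjS : j ∈ S := (mem_insertAbove.1 hj).resolve_right fun h => hjn.ne h.1
    rw [labelDesc_insertLabel_left hF.notMem hS hjn.ne] at hdesc
    exact ⟨Bool.eq_false_iff.2 fun hk => hdesc.1 hk hjS, j, hjS, hdesc.2⟩
  · rintro ⟨hkeep, j, hjS, hmin⟩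
    have hdesc : LabelDesc (insertLabel n F S keep leaf) n j :=
      (labelDesc_insertLabel_left hF.notMem hS (hlt hS hjS).ne).2 ⟨by simp [hkeep], hmin⟩
    refine ⟨fun T hT hn _ => ?_, by simp [hkeep], fun _ _ => by simp⟩
    have hST : S ⊆ T := ((mem_insertAbove.1 hn).resolve_left (hF.notMem T hT)).2
    exact ⟨j, mem_insertAbove.2 (Or.inl (hST hjS)), hlt hS hjS, hdesc⟩

theorem IsGreg.leadingLabels_insertLabel (hF : IsGreg n F) (hS : S ∈ F) :
    leadingLabels (n + 1) (insertLabel n F S keep leaf) =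
      leadingLabels n F ∪ if keep = false ∧ S ∈ labelledClusters n F then {n} else ∅ := by
  ext i
  rw [mem_union, mem_leadingLabels, mem_leadingLabels]
  rcases lt_trichotomy i n with hi | rfl | hi
  · have hmem : i ∉ (if keep = false ∧ S ∈ labelledClusters n F then {n} else ∅ : Finset ℕ) := by
      split_ifs <;> simp [hi.ne]
    simp [isLeading_insertLabel_iff hS hi, hmem, hi, hi.trans n.lt_succ_self]
  · rw [hF.isLeading_insertLabel_self_iff hS]
    split_ifs with h <;> simp [h]
  · have hmem : i ∉ (if keep = false ∧ S ∈ labelledClusters n F then {n} else ∅ : Finset ℕ) := by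
      split_ifs <;> simp [hi.ne']
    simp [hmem, show ¬i < n + 1 by omega, hi.not_gt]

theorem IsGreg.card_improperParents_insertLabel (hF : IsGreg n F) (hS : S ∈ F) :
    #(improperParents (n + 1) (insertLabel n F S keep leaf)) =
      #(improperParents n F) + (!leaf).toNat := by
  have hn : n ∉ improperParents n F := fun h => (mem_improperParents.1 h).1.false
  rw [hF.improperParents_insertLabel hS]
  cases leaf <;> simp [hn]

theorem IsGreg.card_leadingLabels_insertLabel (hF : IsGreg n F) (hS : S ∈ F) :
    #(leadingLabels (n + 1) (insertLabel n F S keep leaf)) =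
      #(leadingLabels n F) + if keep = false ∧ S ∈ labelledClusters n F then 1 else 0 := by
  have hn : n ∉ leadingLabels n F := fun h => (mem_leadingLabels.1 h).1.false
  rw [hF.leadingLabels_insertLabel hS]
  split_ifs <;> simp [hn]

theorem IsGreg.not_insertAbove_subset_singleton (hF : IsGreg n F) (hT : T ∈ F) :
    ¬insertAbove n S T ⊆ {n} := by
  intro h
  obtain ⟨i, hi⟩ := hF.nonempty T hT
  have hin := mem_singleton.1 (h (mem_insertAbove.2 (Or.inl hi)))
  exact hF.notMem T hT (hin ▸ hi)

theorem IsGreg.insertAbove_mem_rootChildren_iff (hF : IsGreg n F)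
    (hA : IsAdmissible n F S keep leaf) (hT : T ∈ F) :
    insertAbove n S T ∈ rootChildren (n + 1) (insertLabel n F S keep leaf) ↔
      T ∈ rootChildren n F := by
  have hrange : insertAbove n S (range n) = range (n + 1) :=
    insertAbove_range (hF.subset_range S hA.1)
  have hne : ∀ U ∈ F, insertAbove n S U ≠ range (n + 1) ↔ U ≠ range n := fun U hU => by
    rw [← hrange, Ne, insertAbove_inj (hF.notMem U hU) notMem_range_self]
  have hsub {U V : Finset ℕ} (hU : U ∈ F) :
      insertAbove n S U ⊆ insertAbove n S V ↔ U ⊆ V :=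
    insertAbove_subset_insertAbove_iff (hF.notMem U hU)
  rw [mem_rootChildren, mem_rootChildren]
  simp only [insertAbove_mem_insertLabel hT, hT, hne T hT, true_and]
  refine and_congr_right fun _ => ?_
  rw [forall_mem_insertLabel]
  constructor
  · rintro ⟨h, -⟩ U hU hU' hTU
    exact (hsub hU).1 (h U hU ((hne U hU).2 hU') ((hsub hT).2 hTU))
  · refine fun h => ⟨fun U hU hU' hTU => ?_, fun hk _ hTS => ?_, fun _ _ hTn => ?_⟩
    · exact (hsub hU).2 (h U hU ((hne U hU).1 hU') ((hsub hT).1 hTU))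
    · have hTS' : T ⊆ S := fun i hi => hTS (mem_insertAbove.2 (Or.inl hi))
      have hST : S ⊆ T := h S hA.1 (hA.2.1 hk) hTS'
      exact fun i hi => mem_insertAbove.2 (Or.inl (hST hi))
    · exact absurd hTn (hF.not_insertAbove_subset_singleton hT)

theorem IsGreg.self_notMem_rootChildren (hF : IsGreg n F) (hA : IsAdmissible n F S keep leaf)
    (hk : keep) : S ∉ rootChildren (n + 1) (insertLabel n F S keep leaf) := by
  intro h
  obtain ⟨-, -, hmax⟩ := mem_rootChildren.1 h
  have hne : insertAbove n S S ≠ range (n + 1) := by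
    rw [← insertAbove_range (hF.subset_range S hA.1), Ne,
      insertAbove_inj (hF.notMem S hA.1) notMem_range_self]
    exact hA.2.1 hk
  exact hF.notMem S hA.1 (hmax _ (insertAbove_mem_insertLabel hA.1) hne
    (fun i hi => mem_insertAbove.2 (Or.inl hi)) (mem_insertAbove.2 (Or.inr ⟨rfl, Subset.rfl⟩)))

theorem IsGreg.singleton_mem_rootChildren_iff (hF : IsGreg n F)
    (hA : IsAdmissible n F S keep leaf) (hl : leaf) :
    {n} ∈ rootChildren (n + 1) (insertLabel n F S keep leaf) ↔ S = range n := by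
  have hrange : insertAbove n S (range n) = range (n + 1) :=
    insertAbove_range (hF.subset_range S hA.1)
  rw [mem_rootChildren]
  constructor
  · rintro ⟨-, -, hmax⟩
    by_contra hS
    have hne : insertAbove n S S ≠ range (n + 1) := by
      rwa [← hrange, Ne, insertAbove_inj (hF.notMem S hA.1) notMem_range_self]
    have hnS : n ∈ insertAbove n S S := mem_insertAbove.2 (Or.inr ⟨rfl, Subset.rfl⟩)
    exact hF.not_insertAbove_subset_singleton hA.1
      (hmax _ (insertAbove_mem_insertLabel hA.1) hne (singleton_subset_iff.2 hnS))
  · rintro rfl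
    have h0 : 0 ∉ ({n} : Finset ℕ) := fun h => hF.pos.ne (mem_singleton.1 h)
    refine ⟨(singleton_mem_insertLabel_iff hF.notMem hF.empty_notMem hA.1).2 hl,
      fun h => h0 (h ▸ mem_range.2 n.succ_pos), ?_⟩
    rw [forall_mem_insertLabel]
    refine ⟨fun T hT hne hnT => ?_, fun hk => absurd rfl (hA.2.1 hk), fun _ _ _ => Subset.rfl⟩
    have hT' := ((mem_insertAbove.1 (singleton_subset_iff.1 hnT)).resolve_left
      (hF.notMem T hT)).2
    rw [(hF.subset_range T hT).antisymm hT', hrange] at hne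
    exact absurd rfl hne

theorem IsGreg.rootChildren_insertLabel (hF : IsGreg n F) (hA : IsAdmissible n F S keep leaf) :
    rootChildren (n + 1) (insertLabel n F S keep leaf) =
      (rootChildren n F).image (insertAbove n S) ∪ if S = range n then {{n}} else ∅ := by
  have hleaf : S = range n → leaf = true := by
    rintro rfl
    exact (hA.2.2 hF.range_mem_labelledClusters).resolve_left fun hk => hA.2.1 hk rfl
  ext U
  rw [mem_union, mem_image]
  constructor
  · intro hU
    rcases mem_insertLabel.1 (mem_rootChildren.1 hU).1 with ⟨T, hT, rfl⟩ | ⟨hk, rfl⟩ | ⟨hl, rfl⟩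
    · exact Or.inl ⟨T, (hF.insertAbove_mem_rootChildren_iff hA hT).1 hU, rfl⟩
    · exact absurd hU (hF.self_notMem_rootChildren hA hk)
    · simp [(hF.singleton_mem_rootChildren_iff hA hl).1 hU]
  · rintro (⟨T, hT, rfl⟩ | hU)
    · exact (hF.insertAbove_mem_rootChildren_iff hA (mem_rootChildren.1 hT).1).2 hT
    · split_ifs at hU with hS
      · rw [mem_singleton.1 hU]
        exact (hF.singleton_mem_rootChildren_iff hA (hleaf hS)).2 hS
      · exact absurd hU (notMem_empty U)

theorem IsGreg.card_rootChildren_insertLabel (hF : IsGreg n F)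
    (hA : IsAdmissible n F S keep leaf) :
    #(rootChildren (n + 1) (insertLabel n F S keep leaf)) =
      #(rootChildren n F) + if S = range n then 1 else 0 := by
  have mem_of_mem {T : Finset ℕ} (hT : T ∈ rootChildren n F) : T ∈ F :=
    (mem_rootChildren.1 hT).1
  have himage : #((rootChildren n F).image (insertAbove n S)) = #(rootChildren n F) :=
    card_image_of_injOn fun T hT T' hT' =>
      (insertAbove_inj (hF.notMem T (mem_of_mem hT)) (hF.notMem T' (mem_of_mem hT'))).1
  have hn : {n} ∉ (rootChildren n F).image (insertAbove n S) := by
    rw [mem_image]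
    rintro ⟨T, hT, h⟩
    exact hF.not_insertAbove_subset_singleton (mem_of_mem hT) h.le
  rw [hF.rootChildren_insertLabel hA]
  split_ifs
  · rw [card_union_of_disjoint (disjoint_singleton_right.2 hn), himage, card_singleton]
  · rw [union_empty, himage, add_zero]

end Statistics

section Invariants

variable {n : ℕ} {F : Finset (Finset ℕ)}

theorem isGreg_one_iff : IsGreg 1 F ↔ F = {{0}} := by
  constructor
  · intro hF
    refine eq_singleton_iff_unique_mem.2 ⟨by simpa using hF.range_mem, fun S hS => ?_⟩
    exact (subset_singleton_iff.1 (by simpa using hF.subset_range S hS)).resolve_left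
      (hF.nonempty S hS).ne_empty
  · rintro rfl
    constructor <;> simp

theorem improperParents_one : improperParents 1 {{0}} = ∅ := by
  ext i
  rw [mem_improperParents, Nat.lt_one_iff]
  exact iff_of_false (fun ⟨hi, j, hj, _⟩ => j.not_lt_zero (hi ▸ hj)) (notMem_empty i)

theorem leadingLabels_one : leadingLabels 1 {{0}} = {0} := by
  ext i
  rw [mem_leadingLabels, Nat.lt_one_iff, mem_singleton, and_iff_left_iff_imp]
  rintro rfl S - - ⟨k, -, hk⟩
  exact absurd hk k.not_lt_zero

theorem rootChildren_one : rootChildren 1 {{0}} = ∅ := by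
  ext S
  simp +contextual [mem_rootChildren]

theorem IsGreg.induction {P : ℕ → Finset (Finset ℕ) → Prop} (one : P 1 {{0}})
    (insert : ∀ {n F S keep leaf}, IsGreg n F → IsAdmissible n F S keep leaf → P n F →
      P (n + 1) (insertLabel n F S keep leaf)) (hF : IsGreg n F) : P n F := by
  induction n, Nat.succ_le_of_lt hF.pos using Nat.le_induction generalizing F with
  | base => rwa [isGreg_one_iff.1 hF]
  | succ n hn ih =>
    obtain ⟨S, keep, leaf, hA, hins⟩ := hF.exists_insertLabel hn
    have hE : IsGreg n (eraseLabel n F) := isGreg_eraseLabel hn hF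
    exact hins ▸ insert hE hA (ih hE)

theorem IsGreg.card_lt_two_mul (hF : IsGreg n F) : #F < 2 * n := by
  refine IsGreg.induction (P := fun n F => #F < 2 * n) (by simp) ?_ hF
  intro n F S keep leaf hF hA ih
  rw [card_insertLabel hF.notMem hF.empty_notMem hA.1]
  have := keep.toNat_le
  have := leaf.toNat_le
  omega

theorem IsGreg.rootChildren_nonempty (hn : 1 < n) (hF : IsGreg n F) :
    (rootChildren n F).Nonempty := by
  have hcard : 0 < #(F.erase (range n)) := by
    rw [card_erase_of_mem hF.range_mem]
    have := hF.le_card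
    omega
  obtain ⟨S, hS⟩ := (F.erase (range n)).exists_maximal (card_pos.1 hcard)
  have hS' := mem_erase.1 hS.prop
  exact ⟨S, mem_rootChildren.2 ⟨hS'.2, hS'.1, fun T hT hne =>
    hS.le_of_ge (mem_erase.2 ⟨hne, hT⟩)⟩⟩

theorem IsGreg.card_rootChildren_lt (hF : IsGreg n F) :
    #(rootChildren n F) < #(leadingLabels n F) := by
  refine IsGreg.induction (P := fun n F => #(rootChildren n F) < #(leadingLabels n F))
    (by simp [rootChildren_one, leadingLabels_one]) ?_ hF
  intro n F S keep leaf hF hA ih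
  rw [hF.card_rootChildren_insertLabel hA, hF.card_leadingLabels_insertLabel hA.1]
  by_cases hS : S = range n
  · have hkeep : keep = false := Bool.eq_false_iff.2 fun hk => hA.2.1 hk hS
    have hlab : S ∈ labelledClusters n F := hS ▸ hF.range_mem_labelledClusters
    rw [if_pos hS, if_pos ⟨hkeep, hlab⟩]
    omega
  · rw [if_neg hS]
    omega

end Invariants

/-! ### The generating polynomial -/

section GeneratingPolynomial

open Classical in
/-- The finite set of all cluster families of Greg trees with label set `{0, …, n - 1}`. -/
def families (n : ℕ) : Finset (Finset (Finset ℕ)) := {F ∈ (range n).powerset.powerset | IsGreg n F}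

/-- The monomial recorded by a Greg tree with `u` unlabelled vertices, `i` improper parents, root
degree `d` and `l` leading vertices. -/
def statMonomial (u i d l : ℕ) : MvPolynomial (Fin 4) ℚ :=
  X 1 ^ u * X 3 ^ i * X 0 ^ (d - 1) * X 2 ^ (l - d - 1)

/-- The monomial recorded by the Greg tree with cluster family `F`. -/
def weight (n : ℕ) (F : Finset (Finset ℕ)) : MvPolynomial (Fin 4) ℚ :=
  statMonomial (#F - n) #(improperParents n F) #(rootChildren n F) #(leadingLabels n F)

open Classical in
/-- The total weight of the Greg trees obtained by inserting the label `n` at `S`. -/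
def insertionWeight (n : ℕ) (F : Finset (Finset ℕ)) (S : Finset ℕ) : MvPolynomial (Fin 4) ℚ :=
  ∑ keep : Bool, ∑ leaf : Bool,
    if IsAdmissible n F S keep leaf then weight (n + 1) (insertLabel n F S keep leaf) else 0

variable {n : ℕ} {F : Finset (Finset ℕ)} {S : Finset ℕ} {keep leaf : Bool}

theorem mem_families : F ∈ families n ↔ IsGreg n F := by
  simp only [families, mem_filter, mem_powerset, and_iff_right_iff_imp]
  exact fun hF S hS => mem_powerset.2 (hF.subset_range S hS)

open Classical in
theorem sum_families_succ {M : Type*} [AddCommMonoid M] (hn : 0 < n)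
    (f : Finset (Finset ℕ) → M) :
    ∑ F ∈ families (n + 1), f F = ∑ F ∈ families n, ∑ S ∈ F, ∑ keep : Bool, ∑ leaf : Bool,
      if IsAdmissible n F S keep leaf then f (insertLabel n F S keep leaf) else 0 := by
  have hsum (F : Finset (Finset ℕ)) : (∑ S ∈ F, ∑ keep : Bool, ∑ leaf : Bool,
      if IsAdmissible n F S keep leaf then f (insertLabel n F S keep leaf) else 0) =
      ∑ x ∈ (F ×ˢ (univ : Finset (Bool × Bool))).filter
        (fun x => IsAdmissible n F x.1 x.2.1 x.2.2), f (insertLabel n F x.1 x.2.1 x.2.2) := by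
    simp_rw [sum_filter, sum_product, Fintype.sum_prod_type]
  simp_rw [hsum, sum_sigma']
  refine (sum_bij (fun x _ => insertLabel n x.1 x.2.1 x.2.2.1 x.2.2.2) ?_ ?_ ?_ ?_).symm
  · rintro ⟨F, S, keep, leaf⟩ hx
    simp only [mem_sigma, mem_filter, mem_families] at hx
    exact mem_families.2 (isGreg_insertLabel hx.1 hx.2.2)
  · rintro ⟨F, S, keep, leaf⟩ hx ⟨F', S', keep', leaf'⟩ hx' h
    simp only [mem_sigma, mem_filter, mem_families] at hx hx' h
    obtain rfl : F = F' := by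
      rw [← eraseLabel_insertLabel hx.1.notMem hx.1.empty_notMem hx.2.2.1, h,
        eraseLabel_insertLabel hx'.1.notMem hx'.1.empty_notMem hx'.2.2.1]
    obtain ⟨rfl, rfl, rfl⟩ :=
      insertLabel_inj hx.1.notMem hx.1.empty_notMem hx.2.2.1 hx'.2.2.1 h
    rfl
  · intro F hF
    rw [mem_families] at hF
    obtain ⟨S, keep, leaf, hA, h⟩ := hF.exists_insertLabel hn
    refine ⟨⟨eraseLabel n F, S, keep, leaf⟩, ?_, h⟩
    simp only [mem_sigma, mem_filter, mem_families, mem_product, mem_univ, and_true]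
    exact ⟨isGreg_eraseLabel hn hF, hA.1, hA⟩
  · exact fun _ _ => rfl

theorem pderiv_statMonomial (u i d l : ℕ) :
    pderiv 1 (statMonomial u i d l) = u * statMonomial (u - 1) i d l := by
  simp only [statMonomial, Derivation.leibniz, Derivation.leibniz_pow, pderiv_X, smul_eq_mul]
  simp only [ne_eq, Fin.reduceEq, not_false_eq_true, Pi.single_eq_of_ne, mul_zero,
    zero_ne_one, Pi.single_eq_same, mul_one, nsmul_eq_mul, zero_add]
  ring

theorem IsGreg.weight_insertLabel (hF : IsGreg n F) (hA : IsAdmissible n F S keep leaf) :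
    weight (n + 1) (insertLabel n F S keep leaf) =
      statMonomial (#F - n + keep.toNat + leaf.toNat - 1)
        (#(improperParents n F) + (!leaf).toNat)
        (#(rootChildren n F) + if S = range n then 1 else 0)
        (#(leadingLabels n F) + if keep = false ∧ S ∈ labelledClusters n F then 1 else 0) := by
  rw [weight, card_insertLabel hF.notMem hF.empty_notMem hA.1,
    hF.card_improperParents_insertLabel hA.1, hF.card_rootChildren_insertLabel hA,
    hF.card_leadingLabels_insertLabel hA.1]
  congr 1
  have := hF.le_card
  omega

theorem IsGreg.insertionWeight_range (hn : 1 < n) (hF : IsGreg n F) :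
    insertionWeight n F (range n) = X 0 * weight n F := by
  have hlab := hF.range_mem_labelledClusters
  have hA : ∀ keep leaf, IsAdmissible n F (range n) keep leaf ↔ keep = false ∧ leaf = true := by
    rintro (_ | _) (_ | _) <;> simp [IsAdmissible, hF.range_mem, hlab]
  have hw : weight (n + 1) (insertLabel n F (range n) false true) = X 0 * weight n F := by
    obtain ⟨d, hd⟩ := Nat.exists_eq_succ_of_ne_zero (card_pos.2 (hF.rootChildren_nonempty hn)).ne'
    rw [hF.weight_insertLabel ((hA false true).2 ⟨rfl, rfl⟩), if_pos rfl, if_pos ⟨rfl, hlab⟩]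
    simp only [weight, statMonomial, hd, Bool.toNat_false, Bool.toNat_true, Bool.not_true,
      Nat.add_sub_add_right, Nat.succ_eq_add_one, Nat.add_sub_cancel, add_zero]
    ring
  simp [insertionWeight, hA, hw]

theorem IsGreg.insertionWeight_of_mem_labelledClusters (hF : IsGreg n F)
    (hS : S ≠ range n) (hlab : S ∈ labelledClusters n F) :
    insertionWeight n F S = (X 2 + X 3 + X 1) * weight n F := by
  have hA : ∀ keep leaf, IsAdmissible n F S keep leaf ↔ keep = true ∨ leaf = true := by
    rintro (_ | _) (_ | _) <;> simp [IsAdmissible, hF.labelledClusters_subset hlab, hS, hlab]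
  obtain ⟨l, hl⟩ := Nat.exists_eq_add_of_lt hF.card_rootChildren_lt
  have hw {keep leaf : Bool} (h : keep = true ∨ leaf = true) :=
    hF.weight_insertLabel ((hA keep leaf).2 h)
  have hleaf : weight (n + 1) (insertLabel n F S false true) = X 2 * weight n F := by
    rw [hw (Or.inr rfl), if_neg hS, if_pos ⟨rfl, hlab⟩]
    simp only [weight, statMonomial, hl, Bool.toNat_false, Bool.toNat_true, Bool.not_true, add_zero,
      add_assoc, Nat.reduceAdd, add_tsub_cancel_left, add_tsub_cancel_right, Nat.add_one_sub_one]
    ring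
  have hkeep : weight (n + 1) (insertLabel n F S true false) = X 3 * weight n F := by
    rw [hw (Or.inl rfl), if_neg hS]
    simp only [weight, statMonomial, hl, Bool.toNat_false, Bool.toNat_true, Bool.not_false,
      Bool.true_eq_false, false_and, ↓reduceIte, add_zero, add_assoc, add_tsub_cancel_left,
      add_tsub_cancel_right]
    ring
  have hboth : weight (n + 1) (insertLabel n F S true true) = X 1 * weight n F := by
    rw [hw (Or.inl rfl), if_neg hS]
    simp only [weight, statMonomial, hl, Bool.toNat_false, Bool.toNat_true, Bool.not_true,
      Bool.true_eq_false, false_and, ↓reduceIte, add_zero, add_assoc, Nat.reduceAdd,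
      add_tsub_cancel_left, add_tsub_cancel_right, Nat.add_one_sub_one]
    ring
  simp only [insertionWeight, Fintype.sum_bool, hA, hboth, hkeep, hleaf, Bool.false_eq_true,
    or_true, or_false, ↓reduceIte, add_zero]
  ring

theorem IsGreg.insertionWeight_of_notMem_labelledClusters (hF : IsGreg n F) (hS : S ∈ F)
    (hlab : S ∉ labelledClusters n F) :
    insertionWeight n F S = (X 1 + X 3) * (X 1 + 1) * statMonomial (#F - n - 1)
      #(improperParents n F) #(rootChildren n F) #(leadingLabels n F) := by
  have hne : S ≠ range n := fun h => hlab (h ▸ hF.range_mem_labelledClusters)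
  have hA : ∀ keep leaf, IsAdmissible n F S keep leaf := by simp [IsAdmissible, hS, hne, hlab]
  have hss : labelledClusters n F ⊂ F := ⟨hF.labelledClusters_subset, fun h => hlab (h hS)⟩
  have hcard : n < #F := hF.card_labelledClusters.symm.trans_lt (card_lt_card hss)
  obtain ⟨u, hu⟩ := Nat.exists_eq_succ_of_ne_zero (Nat.sub_pos_of_lt hcard).ne'
  simp only [insertionWeight, Fintype.sum_bool, hA, hF.weight_insertLabel, statMonomial, hne, hlab,
    hu, Nat.succ_eq_add_one, Bool.toNat_true, Bool.toNat_false, Bool.not_true, Bool.not_false,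
    and_false, ↓reduceIte, add_zero, zero_add, add_assoc, Nat.reduceAdd, Nat.add_one_sub_one,
    add_tsub_cancel_right]
  ring

theorem IsGreg.sum_insertionWeight (hn : 1 < n) (hF : IsGreg n F) :
    ∑ S ∈ F, insertionWeight n F S =
      (X 0 + C ((n : ℚ) - 1) * X 2 + C ((n : ℚ) - 1) * (X 1 + X 3)) * weight n F
        + (X 1 + X 3) * ((X 1 + 1) * pderiv 1 (weight n F)) := by
  have hsub := hF.labelledClusters_subset
  have hroot := hF.range_mem_labelledClusters
  have hlab : ∑ S ∈ (labelledClusters n F).erase (range n), insertionWeight n F S =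
      C ((n : ℚ) - 1) * ((X 2 + X 3 + X 1) * weight n F) := by
    rw [sum_congr rfl fun S hS => hF.insertionWeight_of_mem_labelledClusters
      (mem_erase.1 hS).1 (mem_erase.1 hS).2, sum_const, card_erase_of_mem hroot,
      hF.card_labelledClusters, nsmul_eq_mul, Nat.cast_pred hF.pos]
    simp
  have hunl : ∑ S ∈ F \ labelledClusters n F, insertionWeight n F S =
      (X 1 + X 3) * (X 1 + 1) * pderiv 1 (weight n F) := by
    rw [sum_congr rfl fun S hS => hF.insertionWeight_of_notMem_labelledClusters
      (mem_sdiff.1 hS).1 (mem_sdiff.1 hS).2, sum_const, card_sdiff_of_subset hsub,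
      hF.card_labelledClusters, nsmul_eq_mul, weight, pderiv_statMonomial]
    ring
  rw [← sum_sdiff hsub, hunl, ← add_sum_erase _ _ hroot, hlab, hF.insertionWeight_range hn]
  ring

theorem pderiv_bind₁ {σ R : Type*} [CommSemiring R] {i : σ} {f : σ → MvPolynomial σ R}
    (hf : ∀ j, pderiv i (f j) = pderiv i (X j)) (p : MvPolynomial σ R) :
    pderiv i (bind₁ f p) = bind₁ f (pderiv i p) := by
  classical
  induction p using MvPolynomial.induction_on with
  | C a => simp
  | add p q hp hq => simp only [map_add, hp, hq]
  | mul_X p j hp =>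
    have hX : bind₁ f (pderiv i (X j : MvPolynomial σ R)) = pderiv i (X j) := by
      rw [pderiv_X]
      by_cases h : i = j <;> simp [h]
    simp only [map_mul, bind₁_X_right, Derivation.leibniz, hp, hf, smul_eq_mul, map_add, hX]

theorem Rpoly_one : Rpoly 1 = 1 := by simp [Rpoly, Qpoly]

theorem Rpoly_succ (hn : 0 < n) :
    Rpoly (n + 1) = (X 0 + C (n : ℚ) * X 2 + C (n : ℚ) * (X 1 + X 3)) * Rpoly n
      + (X 1 + X 3) * ((X 1 + 1) * pderiv 1 (Rpoly n)) := by
  obtain ⟨k, rfl⟩ := Nat.exists_eq_add_of_le' hn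
  unfold Rpoly
  rw [pderiv_bind₁]
  · rw [Qpoly]
    simp only [map_add, map_mul, bind₁_X_right, bind₁_C_right]
    simp
  · intro j
    fin_cases j <;> simp [pderiv_X]

theorem sum_families_two : ∑ F ∈ families 2, weight 2 F = 1 := by
  have hF : IsGreg 1 {{0}} := isGreg_one_iff.2 rfl
  have hfam : families 1 = {{{0}}} := by
    ext F
    rw [mem_families, isGreg_one_iff, mem_singleton]
  have hlab : {0} ∈ labelledClusters 1 {{0}} := hF.range_mem_labelledClusters
  have hA : ∀ keep leaf, IsAdmissible 1 {{0}} {0} keep leaf ↔ keep = false ∧ leaf = true := by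
    rintro (_ | _) (_ | _) <;> simp [IsAdmissible, hlab]
  have hw : weight 2 (insertLabel 1 {{0}} {0} false true) = 1 := by
    rw [hF.weight_insertLabel ((hA false true).2 ⟨rfl, rfl⟩), if_pos range_one.symm,
      if_pos ⟨rfl, hlab⟩, improperParents_one, rootChildren_one, leadingLabels_one]
    simp [statMonomial]
  rw [sum_families_succ one_pos, hfam]
  simp [hA, hw]

theorem Rpoly_eq_sum_families (hn : 0 < n) :
    Rpoly n = ∑ F ∈ families (n + 1), weight (n + 1) F := by
  induction n, hn using Nat.le_induction with
  | base => rw [Rpoly_one, sum_families_two]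
  | succ n hn ih =>
    have hsum : ∑ F ∈ families (n + 1), ∑ S ∈ F, insertionWeight (n + 1) F S = _ :=
      sum_congr rfl fun F hF => (mem_families.1 hF).sum_insertionWeight (by omega)
    rw [Rpoly_succ hn, ih, sum_families_succ n.succ_pos]
    simp only [insertionWeight] at hsum
    rw [hsum, sum_add_distrib, map_sum, mul_sum, mul_sum, mul_sum]
    push_cast
    simp

end GeneratingPolynomial

end GregFamily

namespace GregRaw

open Finset GregFamily

variable {n m : ℕ} {p q : Fin n ⊕ Fin m → Fin n ⊕ Fin m} {a b c d v w : Fin n ⊕ Fin m}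

/-! ### Descendants -/

theorem Desc.refl (v : Fin n ⊕ Fin m) : Desc p v v := ⟨0, rfl⟩

theorem desc_iterate (k : ℕ) (v : Fin n ⊕ Fin m) : Desc p v (p^[k] v) := ⟨k, rfl⟩

theorem desc_parent (v : Fin n ⊕ Fin m) : Desc p v (p v) := ⟨1, rfl⟩

theorem Desc.trans (h : Desc p a b) (h' : Desc p b c) : Desc p a c := by
  obtain ⟨k, rfl⟩ := h
  obtain ⟨l, rfl⟩ := h'
  exact ⟨l + k, iterate_add_apply p l k a⟩

theorem desc_iterate_of_le {k l : ℕ} (h : k ≤ l) (v : Fin n ⊕ Fin m) :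
    Desc p (p^[k] v) (p^[l] v) :=
  ⟨l - k, by rw [← iterate_add_apply, Nat.sub_add_cancel h]⟩

theorem Desc.total (h : Desc p w a) (h' : Desc p w b) : Desc p a b ∨ Desc p b a := by
  obtain ⟨k, rfl⟩ := h
  obtain ⟨l, rfl⟩ := h'
  exact (le_total k l).imp (fun h => desc_iterate_of_le h w) fun h => desc_iterate_of_le h w

theorem Desc.eq_or_parent (h : Desc p v a) : v = a ∨ Desc p (p v) a := by
  obtain ⟨_ | k, rfl⟩ := h
  exacts [Or.inl rfl, Or.inr ⟨k, rfl⟩]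

theorem Desc.exists_mem_children (h : Desc p v a) (hne : v ≠ a) :
    ∃ c ∈ children p a, Desc p v c := by
  obtain ⟨k, hk⟩ := h
  induction k with
  | zero => exact absurd hk hne
  | succ k ih =>
    by_cases hka : p^[k] v = a
    · exact ih hka
    · exact ⟨p^[k] v, ⟨hka, by rw [← iterate_succ_apply' p k v, hk]⟩, desc_iterate k v⟩

theorem desc_of_mem_children (h : c ∈ children p a) : Desc p c a := h.2 ▸ desc_parent c

/-! ### Rooted parent functions -/

theorem eq_of_gregRoot (hv : gregRoot v) (hw : gregRoot w) : v = w := by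
  obtain ⟨i, hi, rfl⟩ := hv
  obtain ⟨j, hj, rfl⟩ := hw
  rw [Fin.ext (hi.trans hj.symm)]

/-- `p` is the parent function of a rooted tree, with the convention that the root is its own
parent. -/
structure IsRooted (p : Fin n ⊕ Fin m → Fin n ⊕ Fin m) : Prop where
  fix : ∀ v, gregRoot v → p v = v
  reach : ∀ v, ∃ k, gregRoot (p^[k] v)

theorem IsRooted.iterate_eq (hp : IsRooted p) (hv : gregRoot v) (k : ℕ) : p^[k] v = v :=
  iterate_fixed (hp.fix v hv) k

theorem IsRooted.gregRoot_iterate_of_le (hp : IsRooted p) {k l : ℕ} (hkl : k ≤ l)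
    (hk : gregRoot (p^[k] v)) : gregRoot (p^[l] v) := by
  rwa [← Nat.sub_add_cancel hkl, iterate_add_apply, hp.iterate_eq hk]

theorem IsRooted.gregRoot_of_iterate_eq (hp : IsRooted p) {k : ℕ} (hk : 0 < k)
    (h : p^[k] v = v) : gregRoot v := by
  obtain ⟨K, hK⟩ := hp.reach v
  have hroot : gregRoot (p^[k * K] v) :=
    hp.gregRoot_iterate_of_le (Nat.le_mul_of_pos_left K hk) hK
  rwa [iterate_mul, iterate_fixed h] at hroot

theorem IsRooted.desc_antisymm (hp : IsRooted p) (h : Desc p v a) (h' : Desc p a v) : v = a := by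
  obtain ⟨k, rfl⟩ := h
  obtain ⟨l, hl⟩ := h'
  rcases Nat.eq_zero_or_pos k with rfl | hk
  · rfl
  · rw [← iterate_add_apply] at hl
    exact (hp.iterate_eq (hp.gregRoot_of_iterate_eq (by omega) hl) k).symm

theorem IsRooted.desc_of_gregRoot (hp : IsRooted p) (hw : gregRoot w) (v : Fin n ⊕ Fin m) :
    Desc p v w :=
  (hp.reach v).imp fun _ hk => eq_of_gregRoot hk hw

theorem IsRooted.eq_of_desc_gregRoot (hp : IsRooted p) (hv : gregRoot v) (h : Desc p v a) :
    a = v := by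
  obtain ⟨k, rfl⟩ := h
  exact hp.iterate_eq hv k

theorem IsRooted.pos (hp : IsRooted p) (v : Fin n ⊕ Fin m) : 0 < n := by
  obtain ⟨k, i, -⟩ := hp.reach v
  exact i.pos

theorem IsRooted.not_desc_of_mem_children (hp : IsRooted p) (h : c ∈ children p a) :
    ¬Desc p a c :=
  fun hac => h.1 (hp.desc_antisymm (desc_of_mem_children h) hac)

theorem IsRooted.eq_of_mem_children (hp : IsRooted p) (hc : c ∈ children p a)
    (hd : d ∈ children p a) (h : Desc p w c) (h' : Desc p w d) : c = d := by
  rcases h.total h' with hcd | hdc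
  · refine hcd.eq_or_parent.resolve_right fun had => ?_
    rw [hc.2] at had
    exact hp.not_desc_of_mem_children hd had
  · refine (hdc.eq_or_parent.resolve_right fun hac => ?_).symm
    rw [hd.2] at hac
    exact hp.not_desc_of_mem_children hc hac

theorem IsRooted.ext (hp : IsRooted p) (hq : IsRooted q)
    (h : ∀ v a, Desc p v a ↔ Desc q v a) : p = q := by
  funext v
  by_cases hv : gregRoot v
  · rw [hp.fix v hv, hq.fix v hv]
  · have hpq : Desc p (p v) (q v) := by
      refine ((h v (q v)).2 (desc_parent v)).eq_or_parent.resolve_left fun hqv => ?_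
      exact hv (hq.gregRoot_of_iterate_eq one_pos hqv.symm)
    have hqp : Desc p (q v) (p v) := by
      refine (h _ _).2 (((h v (p v)).1 (desc_parent v)).eq_or_parent.resolve_left fun hpv => ?_)
      exact hv (hp.gregRoot_of_iterate_eq one_pos hpv.symm)
    exact hp.desc_antisymm hpq hqp

theorem depth_eq_zero (hv : gregRoot v) : depth p v = 0 :=
  Nat.sInf_eq_zero.2 (Or.inl hv)

theorem IsRooted.gregRoot_iterate_depth (hp : IsRooted p) (v : Fin n ⊕ Fin m) :
    gregRoot (p^[depth p v] v) :=
  Nat.sInf_mem (s := {k | gregRoot (p^[k] v)}) (hp.reach v)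

theorem depth_le {k : ℕ} (h : gregRoot (p^[k] v)) : depth p v ≤ k :=
  Nat.sInf_le (s := {k | gregRoot (p^[k] v)}) h

theorem IsRooted.depth_eq_succ (hp : IsRooted p) (hv : ¬gregRoot v) :
    depth p v = depth p (p v) + 1 := by
  refine (depth_le (k := depth p (p v) + 1) (hp.gregRoot_iterate_depth (p v))).antisymm ?_
  have hroot := hp.gregRoot_iterate_depth v
  generalize depth p v = k at hroot ⊢
  cases k with
  | zero => exact absurd hroot hv
  | succ k => exact Nat.succ_le_succ (depth_le (v := p v) hroot)

/-! ### Clusters of a tree -/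

open Classical in
/-- The cluster of `v` : the set of the labels of its descendants. -/
def cluster (p : Fin n ⊕ Fin m → Fin n ⊕ Fin m) (v : Fin n ⊕ Fin m) : Finset ℕ :=
  ({i | Desc p (Sum.inl i) v} : Finset (Fin n)).image Fin.val

/-- The family of all clusters of a tree. -/
def clusters (p : Fin n ⊕ Fin m → Fin n ⊕ Fin m) : Finset (Finset ℕ) := univ.image (cluster p)

theorem mem_cluster {j : ℕ} : j ∈ cluster p v ↔ ∃ i : Fin n, i.val = j ∧ Desc p (Sum.inl i) v := by
  simp only [cluster, mem_image, mem_filter, mem_univ, true_and, and_comm]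

theorem val_mem_cluster {i : Fin n} : i.val ∈ cluster p v ↔ Desc p (Sum.inl i) v := by
  rw [mem_cluster]
  exact ⟨fun ⟨_, hj, h⟩ => Fin.ext hj ▸ h, fun h => ⟨i, rfl, h⟩⟩

theorem val_mem_cluster_self (i : Fin n) : i.val ∈ cluster p (Sum.inl i) :=
  val_mem_cluster.2 (Desc.refl _)

theorem cluster_subset_of_desc (h : Desc p v a) : cluster p v ⊆ cluster p a := by
  intro j hj
  obtain ⟨i, rfl, hi⟩ := mem_cluster.1 hj
  exact val_mem_cluster.2 (hi.trans h)

theorem cluster_subset_range (v : Fin n ⊕ Fin m) : cluster p v ⊆ range n := by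
  intro j hj
  obtain ⟨i, rfl, -⟩ := mem_cluster.1 hj
  exact mem_range.2 i.isLt

theorem mem_clusters {S : Finset ℕ} : S ∈ clusters p ↔ ∃ v, cluster p v = S := by
  simp only [clusters, mem_image, mem_univ, true_and]

theorem cluster_mem_clusters (v : Fin n ⊕ Fin m) : cluster p v ∈ clusters p :=
  mem_clusters.2 ⟨v, rfl⟩

theorem beta_eq_sInf_cluster (a : Fin n ⊕ Fin m) : beta p a = sInf (cluster p a : Set ℕ) := by
  simp only [beta, ← mem_cluster, ← mem_coe, Set.ofPred_mem_eq]

theorem beta_eq_iff {j : ℕ} (hj : j ∈ cluster p a) :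
    beta p a = j ↔ ∀ i ∈ cluster p a, j ≤ i := by
  rw [beta_eq_sInf_cluster]
  refine ⟨fun h i hi => h ▸ Nat.sInf_le hi, fun h => (Nat.sInf_le (mem_coe.2 hj)).antisymm ?_⟩
  exact h _ (Nat.sInf_mem (s := (cluster p a : Set ℕ)) ⟨j, hj⟩)

theorem labelDesc_clusters_iff {i j : Fin n} :
    LabelDesc (clusters p) j i ↔ Desc p (Sum.inl j) (Sum.inl i) := by
  constructor
  · exact fun h => val_mem_cluster.1 (h _ (cluster_mem_clusters _) (val_mem_cluster_self i))
  · intro h S hS hi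
    obtain ⟨v, rfl⟩ := mem_clusters.1 hS
    exact val_mem_cluster.2 (h.trans (val_mem_cluster.1 hi))

theorem cluster_inl (i : Fin n) : cluster p (Sum.inl i) = labelCluster n (clusters p) i := by
  ext j
  rw [mem_labelCluster]
  constructor
  · intro hj
    obtain ⟨j, rfl, h⟩ := mem_cluster.1 hj
    exact ⟨j.isLt, labelDesc_clusters_iff.2 h⟩
  · rintro ⟨hj, h⟩
    exact val_mem_cluster.2 (labelDesc_clusters_iff (j := ⟨j, hj⟩).1 h)

/-- `p` is the parent function of a rooted tree that is determined by its family of clusters. -/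
structure IsFaithful (p : Fin n ⊕ Fin m → Fin n ⊕ Fin m) : Prop extends IsRooted p where
  cluster_nonempty : ∀ v, (cluster p v).Nonempty
  desc_of_cluster_subset : ∀ {v a}, cluster p v ⊆ cluster p a → Desc p v a

theorem IsFaithful.desc_iff (hp : IsFaithful p) : Desc p v a ↔ cluster p v ⊆ cluster p a :=
  ⟨cluster_subset_of_desc, hp.desc_of_cluster_subset⟩

theorem IsFaithful.cluster_injective (hp : IsFaithful p) : Injective (cluster p) := fun _ _ h =>
  hp.desc_antisymm (hp.desc_iff.2 h.subset) (hp.desc_iff.2 h.superset)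

theorem IsFaithful.card_clusters (hp : IsFaithful p) : #(clusters p) = n + m := by
  rw [clusters, card_image_of_injective _ hp.cluster_injective, card_univ, Fintype.card_sum,
    Fintype.card_fin, Fintype.card_fin]

theorem IsRooted.cluster_of_gregRoot (hp : IsRooted p) (hv : gregRoot v) :
    cluster p v = range n :=
  (cluster_subset_range v).antisymm fun j hj =>
    mem_cluster.2 ⟨⟨j, mem_range.1 hj⟩, rfl, hp.desc_of_gregRoot hv _⟩

theorem IsFaithful.gregRoot_iff (hp : IsFaithful p) : gregRoot v ↔ cluster p v = range n := by
  refine ⟨hp.cluster_of_gregRoot, fun h => ?_⟩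
  have hr : gregRoot (p^[depth p v] v) := hp.gregRoot_iterate_depth v
  exact hp.cluster_injective (h.trans (hp.cluster_of_gregRoot hr).symm) ▸ hr

theorem IsFaithful.isGreg (hp : IsFaithful p) (hn : 0 < n) : IsGreg n (clusters p) := by
  have hroot : gregRoot (Sum.inl ⟨0, hn⟩ : Fin n ⊕ Fin m) := ⟨⟨0, hn⟩, rfl, rfl⟩
  have forall_clusters {P : Finset ℕ → Prop} (h : ∀ v, P (cluster p v)) : ∀ S ∈ clusters p, P S :=
    forall_mem_image.2 fun v _ => h v
  constructor
  · exact forall_clusters cluster_subset_range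
  · exact forall_clusters hp.cluster_nonempty
  · exact mem_clusters.2 ⟨_, hp.cluster_of_gregRoot hroot⟩
  · refine forall_clusters fun v h0 => ?_
    rw [hp.eq_of_desc_gregRoot hroot (val_mem_cluster (i := ⟨0, hn⟩).1 h0),
      hp.cluster_of_gregRoot hroot]
  · refine forall_clusters fun v => forall_clusters fun w j hv hw => ?_
    obtain ⟨i, rfl, hiv⟩ := mem_cluster.1 hv
    exact (hiv.total (val_mem_cluster.1 hw)).imp cluster_subset_of_desc cluster_subset_of_desc
  · intro i hi j hj hij hji
    have h := hp.desc_antisymm (labelDesc_clusters_iff (i := ⟨j, hj⟩) (j := ⟨i, hi⟩).1 hij)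
      (labelDesc_clusters_iff (i := ⟨i, hi⟩) (j := ⟨j, hj⟩).1 hji)
    exact congrArg Fin.val (Sum.inl_injective h)

theorem _root_.GregCond.isRooted (hp : GregCond n m p) : IsRooted p :=
  ⟨hp.1, fun v => (hp.2.1 v).imp fun _ h => h.2⟩

theorem _root_.GregCond.cluster_nonempty (hp : GregCond n m p) (v : Fin n ⊕ Fin m) :
    (cluster p v).Nonempty := by
  classical
  -- A deepest descendant of `v` has no child, so it is labelled.
  obtain ⟨w, hw, hmax⟩ := ({w | Desc p w v} : Finset _).exists_max_image (depth p)
    ⟨v, mem_filter.2 ⟨mem_univ v, Desc.refl v⟩⟩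
  simp only [mem_filter, mem_univ, true_and] at hw hmax
  rcases w with i | u
  · exact ⟨i, val_mem_cluster.2 hw⟩
  · obtain ⟨c, hc⟩ := Set.nonempty_of_ncard_ne_zero (zero_lt_two.trans_le (hp.2.2.1 u)).ne'
    have hroot : ¬gregRoot c := fun h => hc.1 ((hp.1 c h).symm.trans hc.2)
    have hdepth := hmax c ((desc_of_mem_children hc).trans hw)
    rw [hp.isRooted.depth_eq_succ hroot, hc.2] at hdepth
    exact absurd hdepth (Nat.not_succ_le_self _)

theorem _root_.GregCond.not_cluster_subset (hp : GregCond n m p) (hc : c ∈ children p a) :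
    ¬cluster p a ⊆ cluster p c := by
  intro h
  rcases a with i | u
  · exact hp.isRooted.not_desc_of_mem_children hc (val_mem_cluster.1 (h (val_mem_cluster_self i)))
  · obtain ⟨d, hd, hdc⟩ := Set.exists_ne_of_one_lt_ncard (hp.2.2.1 u) c
    obtain ⟨j, hj⟩ := hp.cluster_nonempty d
    obtain ⟨i, rfl, hid⟩ := mem_cluster.1 hj
    have hic := val_mem_cluster.1 (h (cluster_subset_of_desc (desc_of_mem_children hd) hj))
    exact hdc (hp.isRooted.eq_of_mem_children hd hc hid hic)

theorem _root_.GregCond.isFaithful (hp : GregCond n m p) : IsFaithful p where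
  toIsRooted := hp.isRooted
  cluster_nonempty := hp.cluster_nonempty
  desc_of_cluster_subset := by
    intro v a h
    obtain ⟨j, hj⟩ := hp.cluster_nonempty v
    obtain ⟨i, rfl, hiv⟩ := mem_cluster.1 hj
    refine (hiv.total (val_mem_cluster.1 (h hj))).elim id fun hav => ?_
    by_contra hva
    obtain ⟨c, hc, hac⟩ := hav.exists_mem_children fun h => hva (h ▸ Desc.refl a)
    exact hp.not_cluster_subset hc (h.trans (cluster_subset_of_desc hac))

/-! ### Statistics of a tree -/

theorem ncard_setOf_val_mem {s : Finset ℕ} (hs : s ⊆ range n) :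
    {i : Fin n | i.val ∈ s}.ncard = #s := by
  rw [← Set.ncard_image_of_injective _ Fin.val_injective, ← Set.ncard_coe_finset]
  congr 1
  ext j
  simp only [Set.mem_image, Set.mem_ofPred_eq, mem_coe]
  exact ⟨fun ⟨_, hi, hij⟩ => hij ▸ hi, fun hj => ⟨⟨j, mem_range.1 (hs hj)⟩, hj, rfl⟩⟩

theorem beta_ne_iff (i : Fin n) :
    beta p (Sum.inl i) ≠ i.val ↔ i.val ∈ improperParents n (clusters p) := by
  rw [Ne, beta_eq_iff (val_mem_cluster_self i), mem_improperParents, and_iff_right i.isLt]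
  push Not
  refine exists_congr fun j => ⟨fun ⟨hj, hji⟩ => ?_, fun ⟨hji, hj⟩ => ?_⟩
  · rw [cluster_inl, mem_labelCluster] at hj
    exact ⟨hji, hj.2⟩
  · rw [cluster_inl, mem_labelCluster]
    exact ⟨⟨hji.trans i.isLt, hj⟩, hji⟩

theorem IsFaithful.cluster_mem_rootChildren_iff (hp : IsFaithful p) :
    cluster p w ∈ rootChildren n (clusters p) ↔ ¬gregRoot w ∧ gregRoot (p w) := by
  rw [mem_rootChildren, and_iff_right (cluster_mem_clusters w), Ne, ← hp.gregRoot_iff]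
  refine and_congr_right fun hw => ⟨fun h => ?_, fun hpw T hT hne hwT => ?_⟩
  · by_contra hpw
    have hsub := h _ (cluster_mem_clusters (p w)) (mt hp.gregRoot_iff.2 hpw)
      (cluster_subset_of_desc (desc_parent w))
    have hfix : p w = w := hp.desc_antisymm (hp.desc_iff.2 hsub) (desc_parent w)
    exact hw (hp.gregRoot_of_iterate_eq one_pos hfix)
  · obtain ⟨a, rfl⟩ := mem_clusters.1 hT
    rcases (hp.desc_iff.2 hwT).eq_or_parent with rfl | hpa
    · exact Subset.rfl
    · obtain rfl := hp.eq_of_desc_gregRoot hpw hpa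
      exact absurd (hp.gregRoot_iff.1 hpw) hne

theorem IsFaithful.ncard_children_root (hp : IsFaithful p) :
    {w : Fin n ⊕ Fin m | ¬gregRoot w ∧ gregRoot (p w)}.ncard = #(rootChildren n (clusters p)) := by
  rw [← Set.ncard_image_of_injective _ hp.cluster_injective, ← Set.ncard_coe_finset]
  congr 1
  ext S
  simp only [Set.mem_image, Set.mem_ofPred_eq, mem_coe, ← hp.cluster_mem_rootChildren_iff]
  refine ⟨fun ⟨_, hw, hS⟩ => hS ▸ hw, fun hS => ?_⟩
  obtain ⟨w, rfl⟩ := mem_clusters.1 (mem_rootChildren.1 hS).1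
  exact ⟨w, hS, rfl⟩

/-- The first `k` ancestors of the vertex labelled `i` belong to its greater ancestors path. -/
abbrev StaysAbove (p : Fin n ⊕ Fin m → Fin n ⊕ Fin m) (i : Fin n) (k : ℕ) : Prop :=
  ∀ l ≤ k, ∀ j, p^[l] (Sum.inl i) = Sum.inl j → i ≤ j

theorem StaysAbove.zero (i : Fin n) : StaysAbove p i 0 := by
  intro l hl j hj
  obtain rfl := Nat.le_zero.1 hl
  exact (Sum.inl_injective hj).le

theorem IsFaithful.isLeading_clusters_iff (hp : IsFaithful p) {i : Fin n} :
    IsLeading (clusters p) i ↔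
      ∀ k, StaysAbove p i k → ∀ j ∈ cluster p (p^[k] (Sum.inl i)), i.val ≤ j := by
  constructor
  · intro h k hk j hj
    by_contra! hji
    obtain ⟨j', hj', hji', hdesc⟩ := h _ (cluster_mem_clusters _)
      (val_mem_cluster.2 (desc_iterate k _)) ⟨j, hj, hji⟩
    obtain ⟨j', rfl, hdesc'⟩ := mem_cluster.1 hj'
    obtain ⟨l, hl⟩ := labelDesc_clusters_iff.1 hdesc
    obtain ⟨l, hlk, hl⟩ : ∃ l ≤ k, p^[l] (Sum.inl i) = Sum.inl j' := by
      rcases le_total l k with hlk | hkl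
      · exact ⟨l, hlk, hl⟩
      · exact ⟨k, le_rfl, hp.desc_antisymm (hl ▸ desc_iterate_of_le hkl _) hdesc'⟩
    exact hji'.not_ge (hk l hlk j' hl)
  · rintro h S hS hi ⟨j, hj, hji⟩
    obtain ⟨v, rfl⟩ := mem_clusters.1 hS
    obtain ⟨k, rfl⟩ := val_mem_cluster.1 hi
    have hk : ¬StaysAbove p i k := fun hk => hji.not_ge (h k hk j hj)
    rw [StaysAbove] at hk
    push Not at hk
    obtain ⟨l, hlk, j', hj', hji'⟩ := hk
    refine ⟨j', val_mem_cluster.2 (hj' ▸ desc_iterate_of_le hlk _), hji', ?_⟩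
    exact labelDesc_clusters_iff.2 ⟨l, hj'⟩

/-! ### Recovering a tree from its clusters -/

theorem IsFaithful.filter_cluster_ssubset (hp : IsFaithful p) (hv : ¬gregRoot v) :
    {T ∈ clusters p | cluster p v ⊂ T} =
      insert (cluster p (p v)) {T ∈ clusters p | cluster p (p v) ⊂ T} := by
  have hlt : cluster p v ⊂ cluster p (p v) :=
    (cluster_subset_of_desc (desc_parent v)).ssubset_of_ne fun h =>
      hv (hp.gregRoot_of_iterate_eq one_pos (hp.cluster_injective h).symm)
  ext T
  simp only [mem_filter, mem_insert]
  constructor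
  · rintro ⟨hT, hvT⟩
    obtain ⟨a, rfl⟩ := mem_clusters.1 hT
    rcases (hp.desc_of_cluster_subset hvT.subset).eq_or_parent with rfl | hpa
    · exact absurd hvT (ssubset_irrefl _)
    · exact (cluster_subset_of_desc hpa).eq_or_ssubset.imp Eq.symm fun h => ⟨hT, h⟩
  · rintro (rfl | ⟨hT, hpT⟩)
    exacts [⟨cluster_mem_clusters _, hlt⟩, ⟨hT, hlt.trans hpT⟩]

theorem IsFaithful.depth_eq_card (hp : IsFaithful p) (v : Fin n ⊕ Fin m) :
    depth p v = #{T ∈ clusters p | cluster p v ⊂ T} := by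
  obtain ⟨k, hk⟩ := hp.reach v
  have of_root {v : Fin n ⊕ Fin m} (hv : gregRoot v) :
      depth p v = #{T ∈ clusters p | cluster p v ⊂ T} := by
    rw [depth_eq_zero hv, eq_comm, card_eq_zero, filter_eq_empty_iff, hp.cluster_of_gregRoot hv]
    exact forall_mem_image.2 fun a _ h => h.not_subset (cluster_subset_range a)
  induction k generalizing v with
  | zero => exact of_root hk
  | succ k ih =>
    by_cases hv : gregRoot v
    · exact of_root hv
    · rw [hp.depth_eq_succ hv, ih (p v) hk, hp.filter_cluster_ssubset hv,
        card_insert_of_notMem fun h => (mem_filter.1 h).2.ne rfl]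

/-- The sorting key of an unlabelled vertex, in terms of its cluster. -/
def clusterKey (F : Finset (Finset ℕ)) (S : Finset ℕ) : ℕ :=
  sInf (S : Set ℕ) * (#F + 1) + #{T ∈ F | S ⊂ T}

theorem IsFaithful.key_eq (hp : IsFaithful p) :
    key p = clusterKey (clusters p) ∘ fun u => cluster p (Sum.inr u) := by
  funext u
  rw [comp_apply, key, clusterKey, hp.depth_eq_card, hp.card_clusters, beta_eq_sInf_cluster]

theorem clusterKey_injOn {F : Finset (Finset ℕ)} (hF : IsGreg n F) :
    Set.InjOn (clusterKey F) F := by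
  intro S hS T hT h
  have card_lt (S : Finset ℕ) : #{T ∈ F | S ⊂ T} < #F + 1 :=
    Nat.lt_succ_of_le (card_filter_le _ _)
  have card_anti {S T : Finset ℕ} (hT : T ∈ F) (hST : S ⊂ T) :
      #{U ∈ F | T ⊂ U} < #{U ∈ F | S ⊂ U} := by
    refine card_lt_card (ssubset_iff_of_subset ?_ |>.2 ⟨T, mem_filter.2 ⟨hT, hST⟩, by simp⟩)
    exact monotone_filter_right _ fun U _ hTU => hST.trans hTU
  have hdiv (S : Finset ℕ) : clusterKey F S / (#F + 1) = sInf (S : Set ℕ) := by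
    rw [clusterKey, Nat.mul_comm, Nat.mul_add_div (by omega), Nat.div_eq_of_lt (card_lt S),
      add_zero]
  have hinf : sInf (S : Set ℕ) = sInf (T : Set ℕ) := by rw [← hdiv, h, hdiv]
  have hcard : #{U ∈ F | S ⊂ U} = #{U ∈ F | T ⊂ U} := by
    rwa [clusterKey, clusterKey, hinf, Nat.add_left_cancel_iff] at h
  have hminS : sInf (S : Set ℕ) ∈ S := Nat.sInf_mem (s := (S : Set ℕ)) (hF.nonempty S hS)
  have hminT : sInf (T : Set ℕ) ∈ T := Nat.sInf_mem (s := (T : Set ℕ)) (hF.nonempty T hT)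
  rcases hF.subset_or_subset S hS T hT _ hminS (hinf ▸ hminT) with hST | hTS
  · exact hST.eq_or_ssubset.resolve_right fun hST => (card_anti hT hST).ne' hcard
  · exact (hTS.eq_or_ssubset.resolve_right fun hTS => (card_anti hS hTS).ne hcard).symm

theorem _root_.GregCond.strictMono_key (hp : GregCond n m p) : StrictMono (key p) :=
  fun u w => (hp.2.2.2 u w).1

theorem IsFaithful.two_le_ncard_children (hp : IsFaithful p) (u : Fin m) :
    2 ≤ (children p (Sum.inr u)).ncard := by
  have exists_child {j : ℕ} (hj : j ∈ cluster p (Sum.inr u)) :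
      ∃ c ∈ children p (Sum.inr u), j ∈ cluster p c := by
    obtain ⟨i, rfl, hi⟩ := mem_cluster.1 hj
    obtain ⟨c, hc, hic⟩ := hi.exists_mem_children Sum.inl_ne_inr
    exact ⟨c, hc, val_mem_cluster.2 hic⟩
  obtain ⟨i, hi⟩ := hp.cluster_nonempty (Sum.inr u)
  obtain ⟨c, hc, -⟩ := exists_child hi
  obtain ⟨j, hj, hjc⟩ := not_subset.1
    (mt hp.desc_of_cluster_subset (hp.not_desc_of_mem_children hc))
  obtain ⟨d, hd, hjd⟩ := exists_child hj
  exact (Set.one_lt_ncard (Set.toFinite _)).2 ⟨c, hc, d, hd, fun h => hjc (h ▸ hjd)⟩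

theorem IsFaithful.gregCond (hp : IsFaithful p) (hkey : StrictMono (key p)) : GregCond n m p := by
  refine ⟨hp.fix, fun v => ⟨depth p v, ?_, hp.gregRoot_iterate_depth v⟩,
    hp.two_le_ncard_children, fun u w => hkey.lt_iff_lt.symm⟩
  rw [hp.depth_eq_card, ← hp.card_clusters]
  exact card_lt_card (filter_ssubset.2 ⟨cluster p v, cluster_mem_clusters v, ssubset_irrefl _⟩)

theorem IsFaithful.range_cluster_inr (hp : IsFaithful p) :
    Set.range (fun u => cluster p (Sum.inr u)) =
      ↑(clusters p \ labelledClusters n (clusters p)) := by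
  ext S
  simp only [Set.mem_range, mem_coe, mem_sdiff, mem_clusters, labelledClusters, mem_image]
  constructor
  · rintro ⟨u, rfl⟩
    refine ⟨⟨_, rfl⟩, fun ⟨i, hi, h⟩ => ?_⟩
    rw [← cluster_inl ⟨i, mem_range.1 hi⟩] at h
    exact Sum.inl_ne_inr (hp.cluster_injective h)
  · rintro ⟨⟨i | u, rfl⟩, hlab⟩
    · exact absurd ⟨i, mem_range.2 i.isLt, (cluster_inl i).symm⟩ hlab
    · exact ⟨u, rfl⟩

theorem eq_of_strictMono_comp {ι α β : Type*} [LinearOrder ι] [WellFoundedLT ι] [PartialOrder β]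
    {e e' : ι → α} {f : α → β} (hf : Set.InjOn f (Set.range e)) (he : StrictMono (f ∘ e))
    (he' : StrictMono (f ∘ e')) (h : Set.range e = Set.range e') : e = e' := by
  have hfe : f ∘ e = f ∘ e' := by
    rw [← he.range_inj he', Set.range_comp, Set.range_comp, h]
  exact funext fun i => hf ⟨i, rfl⟩ (h ▸ Set.mem_range_self i) (congrFun hfe i)

theorem _root_.GregCond.eq_of_clusters_eq (hp : GregCond n m p) (hq : GregCond n m q)
    (h : clusters p = clusters q) : p = q := by
  have hpF := hp.isFaithful
  have hqF := hq.isFaithful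
  suffices hpq : cluster p = cluster q from
    hpF.ext hqF.toIsRooted fun v a => by rw [hpF.desc_iff, hqF.desc_iff, hpq]
  have hinr : (fun u => cluster p (Sum.inr u)) = fun u => cluster q (Sum.inr u) := by
    rcases isEmpty_or_nonempty (Fin m) with _ | ⟨⟨u⟩⟩
    · exact Subsingleton.elim _ _
    have hn : 0 < n := hpF.pos (Sum.inr u)
    refine eq_of_strictMono_comp (f := clusterKey (clusters p)) ?_ ?_ ?_ ?_
    · refine (clusterKey_injOn (hpF.isGreg hn)).mono (Set.range_subset_iff.2 fun u => ?_)
      exact cluster_mem_clusters _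
    · exact hpF.key_eq ▸ hp.strictMono_key
    · rw [h, ← hqF.key_eq]
      exact hq.strictMono_key
    · rw [hpF.range_cluster_inr, hqF.range_cluster_inr, h]
  funext v
  rcases v with i | u
  · rw [cluster_inl, cluster_inl, h]
  · exact congrFun hinr u

/-! ### The tree with a given family of clusters -/

theorem exists_strictMono_enum {α β : Type*} [LinearOrder β] (s : Finset α) {f : α → β}
    (hf : Set.InjOn f s) (hs : #s = m) : ∃ e : Fin m → α, Set.range e = s ∧ StrictMono (f ∘ e) := by
  classical
  have hcard : #(s.image f) = m := (card_image_of_injOn hf).trans hs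
  let o := (s.image f).orderEmbOfFin hcard
  have hrange : Set.range o = f '' s := by rw [range_orderEmbOfFin, coe_image]
  have hmem (u : Fin m) : ∃ x ∈ s, f x = o u := hrange.subset (Set.mem_range_self u)
  choose e he hfe using hmem
  refine ⟨e, (Set.range_subset_iff.2 he).antisymm fun x hx => ?_, ?_⟩
  · obtain ⟨u, hu⟩ := hrange.superset (Set.mem_image_of_mem f hx)
    exact ⟨u, hf (he u) hx ((hfe u).trans hu)⟩
  · rw [show f ∘ e = o from funext hfe]
    exact o.strictMono

/-- `D` attaches to each vertex a set in `F`, in such a way that it could be the family of the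
clusters of a tree. -/
structure IsIndexing (F : Finset (Finset ℕ)) (D : Fin n ⊕ Fin m → Finset ℕ) : Prop where
  injective : Injective D
  range_eq : Set.range D = F
  inl_eq : ∀ i : Fin n, D (Sum.inl i) = labelCluster n F i

variable {F : Finset (Finset ℕ)} {D : Fin n ⊕ Fin m → Finset ℕ}

theorem IsIndexing.mem (hD : IsIndexing F D) (v : Fin n ⊕ Fin m) : D v ∈ F :=
  hD.range_eq.subset (Set.mem_range_self v)

theorem exists_isIndexing (hF : IsGreg n F) (hm : #F = n + m) :
    ∃ D : Fin n ⊕ Fin m → Finset ℕ, IsIndexing F D ∧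
      StrictMono (clusterKey F ∘ fun u => D (Sum.inr u)) := by
  have hcard : #(F \ labelledClusters n F) = m := by
    rw [card_sdiff_of_subset hF.labelledClusters_subset, hF.card_labelledClusters, hm,
      Nat.add_sub_cancel_left]
  obtain ⟨e, he, hmono⟩ := exists_strictMono_enum _
    ((clusterKey_injOn hF).mono (coe_subset.2 sdiff_subset)) hcard
  have hlab : Set.range (fun i : Fin n => labelCluster n F i) = labelledClusters n F := by
    ext S
    simp only [labelledClusters, coe_image, Set.mem_range, Set.mem_image, mem_coe, mem_range,
      Fin.exists_iff, exists_prop]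
  refine ⟨Sum.elim (fun i => labelCluster n F i) e, ⟨?_, ?_, fun i => rfl⟩, hmono⟩
  · refine Injective.sumElim (fun i j hij => ?_) hmono.injective.of_comp fun i u hiu => ?_
    · exact Fin.ext (hF.labelCluster_injOn (mem_coe.2 (mem_range.2 i.isLt))
        (mem_coe.2 (mem_range.2 j.isLt)) hij)
    · have hu : e u ∈ F \ labelledClusters n F := mem_coe.1 (he ▸ Set.mem_range_self u)
      exact (mem_sdiff.1 hu).2 (hiu ▸ mem_coe.1 (hlab ▸ Set.mem_range_self i))
  · rw [Set.Sum.elim_range, hlab, he, ← coe_union, union_comm,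
      sdiff_union_of_subset hF.labelledClusters_subset]

theorem IsIndexing.exists_parent (hD : IsIndexing F D) (hF : IsGreg n F) (v : Fin n ⊕ Fin m) :
    ∃ w, D v ⊆ D w ∧ (D w = D v → D v = range n) ∧ ∀ T ∈ F, D v ⊂ T → D w ⊆ T := by
  have hvF := hD.mem v
  rcases eq_or_ne (D v) (range n) with hv | hv
  · exact ⟨v, Subset.rfl, fun _ => hv, fun T _ hT => hT.subset⟩
  obtain ⟨j, hj⟩ := hF.nonempty _ hvF
  obtain ⟨S, hS, hmin⟩ := exists_least_of_total (s := {T ∈ F | D v ⊂ T})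
    ⟨range n, mem_filter.2 ⟨hF.range_mem, (hF.subset_range _ hvF).ssubset_of_ne hv⟩⟩
    fun S hS T hT => by
      rw [mem_filter] at hS hT
      exact hF.subset_or_subset S hS.1 T hT.1 j (hS.2.subset hj) (hT.2.subset hj)
  obtain ⟨hSF, hvS⟩ := mem_filter.1 hS
  obtain ⟨w, rfl⟩ := hD.range_eq.superset hSF
  exact ⟨w, hvS.subset, fun h => absurd h hvS.ne', fun T hT hvT => hmin T (mem_filter.2 ⟨hT, hvT⟩)⟩

theorem IsIndexing.exists_desc_iff (hD : IsIndexing F D) (hF : IsGreg n F) :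
    ∃ p : Fin n ⊕ Fin m → Fin n ⊕ Fin m, ∀ v a, Desc p v a ↔ D v ⊆ D a := by
  choose p hsub hne hmin using hD.exists_parent hF
  refine ⟨p, fun v a => ⟨?_, fun hva => ?_⟩⟩
  · rintro ⟨k, rfl⟩
    induction k with
    | zero => exact Subset.rfl
    | succ k ih =>
      rw [iterate_succ_apply']
      exact ih.trans (hsub _)
  · induction hd : #(D a) - #(D v) using Nat.strong_induction_on generalizing v with
    | _ d ih =>
      rcases hva.eq_or_ssubset with heq | hlt
      · exact hD.injective heq ▸ Desc.refl v
      have hpa : D (p v) ⊆ D a := hmin v _ (hD.mem a) hlt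
      have hpv : D v ⊂ D (p v) := (hsub v).ssubset_of_ne fun h =>
        hlt.not_subset (hne v h.symm ▸ hF.subset_range _ (hD.mem a))
      have hcard := card_lt_card hpv
      have hcard' := card_le_card hpa
      exact (desc_parent v).trans (ih _ (by omega) (p v) hpa rfl)

theorem IsIndexing.cluster_eq (hD : IsIndexing F D) (hF : IsGreg n F)
    (h : ∀ v a, Desc p v a ↔ D v ⊆ D a) : cluster p = D := by
  funext v
  ext j
  rw [mem_cluster]
  constructor
  · rintro ⟨i, rfl, hi⟩
    exact (h _ _).1 hi (hD.inl_eq i ▸ mem_labelCluster_self i.isLt)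
  · intro hj
    refine ⟨⟨j, mem_range.1 (hF.subset_range _ (hD.mem v) hj)⟩, rfl, (h _ _).2 ?_⟩
    exact hD.inl_eq _ ▸ labelCluster_subset (hD.mem v) hj

theorem IsIndexing.isFaithful (hD : IsIndexing F D) (hF : IsGreg n F)
    (h : ∀ v a, Desc p v a ↔ D v ⊆ D a) : IsFaithful p := by
  have hcl : cluster p = D := hD.cluster_eq hF h
  have hroot {v : Fin n ⊕ Fin m} (hv : gregRoot v) : D v = range n := by
    obtain ⟨i, hi, rfl⟩ := hv
    refine hF.eq_range_of_zero_mem _ (hD.mem _) ?_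
    rw [← hi, hD.inl_eq]
    exact mem_labelCluster_self i.isLt
  have desc_root {v : Fin n ⊕ Fin m} (hv : gregRoot v) (w : Fin n ⊕ Fin m) : Desc p w v :=
    (h w v).2 (hroot hv ▸ hF.subset_range _ (hD.mem w))
  refine ⟨⟨fun v hv => ?_, fun v => ?_⟩, fun v => ?_, fun {v a} hva => ?_⟩
  · exact hD.injective (((h _ _).1 (desc_root hv _)).antisymm ((h _ _).1 (desc_parent v)))
  · have h0 : gregRoot (Sum.inl ⟨0, hF.pos⟩ : Fin n ⊕ Fin m) := ⟨_, rfl, rfl⟩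
    exact (desc_root h0 v).imp fun k (hk : p^[k] v = _) => hk.symm ▸ h0
  · exact hcl ▸ hF.nonempty _ (hD.mem v)
  · exact (h v a).2 (hcl ▸ hva)

theorem exists_gregCond_clusters_eq (hF : IsGreg n F) (hm : #F = n + m) :
    ∃ p : Fin n ⊕ Fin m → Fin n ⊕ Fin m, GregCond n m p ∧ clusters p = F := by
  obtain ⟨D, hD, hmono⟩ := exists_isIndexing hF hm
  obtain ⟨p, hp⟩ := hD.exists_desc_iff hF
  have hpF : IsFaithful p := hD.isFaithful hF hp
  have hcluster : cluster p = D := hD.cluster_eq hF hp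
  have hclusters : clusters p = F := by
    rw [← coe_inj, clusters, coe_image, coe_univ, Set.image_univ, hcluster, hD.range_eq]
  refine ⟨p, hpF.gregCond ?_, hclusters⟩
  rwa [hpF.key_eq, hclusters, hcluster]

end GregRaw

/-! ### Greg trees and families of clusters -/

namespace GregTree

open Finset GregFamily GregRaw

variable {n : ℕ}

theorem isFaithful (T : GregTree n) : IsFaithful T.2.1 := T.2.2.isFaithful

theorem unl_eq (T : GregTree n) : T.unl = #(clusters T.2.1) - n := by
  rw [T.isFaithful.card_clusters, Nat.add_sub_cancel_left, unl]

theorem impp_eq (T : GregTree n) : T.impp = #(improperParents n (clusters T.2.1)) := by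
  rw [← ncard_setOf_val_mem improperParents_subset]
  exact congrArg Set.ncard (Set.ext beta_ne_iff)

theorem degRoot_eq (T : GregTree n) : T.degRoot = #(rootChildren n (clusters T.2.1)) :=
  T.isFaithful.ncard_children_root

theorem staysAbove_bapLen (T : GregTree n) (i : Fin n) : StaysAbove T.2.1 i (T.bapLen i) :=
  Nat.findGreatest_spec (P := StaysAbove T.2.1 i) (Nat.zero_le _) (StaysAbove.zero i)

theorem le_bapLen {T : GregTree n} {i : Fin n} {k : ℕ} (hk : StaysAbove T.2.1 i k)
    (hi : i.val ≠ 0) : k ≤ T.bapLen i := by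
  refine Nat.le_findGreatest ?_ hk
  obtain ⟨K, hK, hroot⟩ := T.2.2.2.1 (Sum.inl i)
  by_contra! hlt
  obtain ⟨j, hj, hji⟩ := T.2.2.isRooted.gregRoot_iterate_of_le (hK.trans hlt).le hroot
  have hij : i.val ≤ j.val := hk k le_rfl j hji
  omega

theorem leading_iff (T : GregTree n) (i : Fin n) :
    T.Leading i ↔ i.val ∈ leadingLabels n (clusters T.2.1) := by
  have hmem (k : ℕ) : i.val ∈ cluster T.2.1 (T.2.1^[k] (Sum.inl i)) :=
    val_mem_cluster.2 (desc_iterate k _)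
  rw [mem_leadingLabels, and_iff_right i.isLt, T.isFaithful.isLeading_clusters_iff]
  refine (beta_eq_iff (hmem _)).trans ⟨fun h k hk j hj => ?_, fun h => h _ (T.staysAbove_bapLen i)⟩
  rcases eq_or_ne i.val 0 with hi | hi
  · exact hi ▸ Nat.zero_le j
  · exact h j (cluster_subset_of_desc (desc_iterate_of_le (le_bapLen hk hi) _) hj)

theorem lead_eq (T : GregTree n) : T.lead = #(leadingLabels n (clusters T.2.1)) := by
  rw [← ncard_setOf_val_mem leadingLabels_subset]
  exact congrArg Set.ncard (Set.ext T.leading_iff)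

theorem clusters_injective : Injective fun T : GregTree n => clusters T.2.1 := by
  rintro ⟨k, p, hp⟩ ⟨l, q, hq⟩ h
  obtain rfl : k = l := by
    have hcard := congrArg card h
    simp only [hp.isFaithful.card_clusters, hq.isFaithful.card_clusters] at hcard
    exact Fin.ext (Nat.add_left_cancel hcard)
  obtain rfl : p = q := hp.eq_of_clusters_eq hq h
  rfl

theorem exists_clusters_eq {F : Finset (Finset ℕ)} (hF : IsGreg n F) :
    ∃ T : GregTree n, clusters T.2.1 = F := by
  obtain ⟨m, hm⟩ := Nat.exists_eq_add_of_le hF.le_card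
  obtain ⟨p, hp, hpF⟩ := exists_gregCond_clusters_eq hF hm
  have hmn : m < n + 1 := by
    have := hF.card_lt_two_mul
    omega
  exact ⟨⟨⟨m, hmn⟩, p, hp⟩, hpF⟩

theorem sum_statMonomial_eq_sum_families (hn : 0 < n) :
    ∑ T : GregTree n, statMonomial T.unl T.impp T.degRoot T.lead =
      ∑ F ∈ families n, weight n F := by
  refine sum_bij (fun T _ => clusters T.2.1) (fun T _ => mem_families.2 (T.isFaithful.isGreg hn))
    (fun T _ T' _ h => clusters_injective h) (fun F hF => ?_) fun T _ => ?_
  · obtain ⟨T, hT⟩ := exists_clusters_eq (mem_families.1 hF)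
    exact ⟨T, mem_univ T, hT⟩
  · rw [weight, unl_eq, impp_eq, degRoot_eq, lead_eq]

end GregTree

/-- For every `n ≥ 1`,
`R_n(x,y,z,t) = Σ_{T ∈ G_{n+1}} y^{unl T} t^{impp T} x^{deg_T(1)-1} z^{lead T - deg_T(1) - 1}`. -/
theorem Rpoly_eq_sum_gregTree (n : ℕ) (hn : 1 ≤ n) :
    Rpoly n = ∑ T : GregTree (n + 1),
      (X 1 : MvPolynomial (Fin 4) ℚ) ^ T.unl * X 3 ^ T.impp * X 0 ^ (T.degRoot - 1)
        * X 2 ^ (T.lead - T.degRoot - 1) := by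
  rw [GregFamily.Rpoly_eq_sum_families hn,
    ← GregTree.sum_statMonomial_eq_sum_families n.succ_pos]
  rfl

end
end

section
/- For every n ≥ 1, R_n(x,y,z,t) = Σ_{T ∈ C_{n+1}} (y+1)^{impe(T)-impp(T)} (y+t)^{impp(T)} x^{deg_T(1)-1} z^{lead(T)-deg_T(1)-1}, where the sum is over all Cayley trees of size n+1 rooted at 1. -/
noncomputable section

open MvPolynomial Function

/-!
The trees on `n + 2` vertices arise from those on `n + 1 ≥ 2` vertices by inserting a new largest
vertex.  If it is a leaf, it hangs below any old vertex, which multiplies the weight by `x` at the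
root and by `z` elsewhere.  Otherwise it subdivides the edge above a non-root vertex `v` and may
take over children of `v`.  We let `v` be the child of the new vertex with the largest `β`; the
children taken over are then the improper children of `v` with the smallest values of `β`.
Taking over none multiplies the weight by `y + t`; taking over those up to `c` multiplies it by
`y + 1` if `c` is the last improper child of `v`, and by `y + t` if not.  The insertions of the last
kind correspond to the improper edges `c`, so that they contribute `(y + t) (y + 1) ∂_y` of the
weight, and summing up gives the recursion of `R_n`.
-/

lemma ncard_eq_ncard_preimage_add_ite {α β : Type*} [Finite β] {f : α → β} (hf : Injective f)
    {b : β} (hb : ∀ y, y ∈ Set.range f ↔ y ≠ b) (P : β → Prop) [Decidable (P b)] :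
    {y | P y}.ncard = {x | P (f x)}.ncard + if P b then 1 else 0 := by
  have himage : f '' {x | P (f x)} = {y | P y} \ {b} := by
    ext y
    simp only [Set.mem_image, Set.mem_ofPred_eq, Set.mem_sdiff, Set.mem_singleton_iff, ← hb]
    constructor
    · rintro ⟨x, hx, rfl⟩
      exact ⟨hx, x, rfl⟩
    · rintro ⟨hy, x, rfl⟩
      exact ⟨x, hy, rfl⟩
  rw [← Set.ncard_image_of_injective _ hf, himage]
  split_ifs with h
  · exact (Set.ncard_sdiff_singleton_add_one (s := {y | P y}) h).symm
  · rw [Set.sdiff_singleton_eq_self (s := {y | P y}) h, add_zero]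

/-! ### Paths of a parent map -/

section Paths

variable {α : Type*} {p : α → α}

/-- `PathAbove p i x y`: iterating the parent map `p` leads from `x` to `y` through labels `≥ i`,
the label of `x` being unconstrained.  With `i` the least label this is ancestry; with `x = i` it
says that `y` lies on the greater ancestors path of `i`. -/
abbrev PathAbove [LE α] (p : α → α) (i : α) : α → α → Prop :=
  Relation.ReflTransGen fun x y => p x = y ∧ i ≤ y

lemma pathAbove_iff_exists_iterate [LE α] {i x y : α} :
    PathAbove p i x y ↔ ∃ k, p^[k] x = y ∧ ∀ l < k, i ≤ p^[l + 1] x := by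
  constructor
  · intro h
    induction h using Relation.ReflTransGen.head_induction_on with
    | refl => exact ⟨0, rfl, by simp⟩
    | head hstep _ ih =>
      obtain ⟨rfl, hi⟩ := hstep
      obtain ⟨k, hk, hle⟩ := ih
      refine ⟨k + 1, hk, fun l hl => ?_⟩
      cases l with
      | zero => exact hi
      | succ l => exact hle l (by lia)
  · rintro ⟨k, rfl, hle⟩
    induction k with
    | zero => exact .refl
    | succ k ih =>
      exact (ih fun l hl => hle l (by lia)).tail
        ⟨(iterate_succ_apply' p k x).symm, hle k (by lia)⟩

lemma exists_lt_card_iterate_eq [Fintype α] {x y : α} (h : ∃ k, p^[k] x = y) :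
    ∃ k < Fintype.card α, p^[k] x = y := by
  classical
  refine ⟨Nat.find h, ?_, Nat.find_spec h⟩
  by_contra! hcard
  obtain ⟨i, j, hij, heq⟩ := Fintype.exists_ne_map_eq_of_card_lt
    (fun i : Fin (Nat.find h + 1) => p^[i] x) (by simpa using Nat.lt_succ_of_le hcard)
  wlog hlt : i < j generalizing i j
  · exact this j i hij.symm heq.symm (lt_of_le_of_ne (not_lt.mp hlt) hij.symm)
  have hearlier : p^[Nat.find h - j + i] x = y := by
    rw [iterate_add_apply, heq, ← iterate_add_apply, Nat.sub_add_cancel (by lia),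
      Nat.find_spec h]
  exact Nat.find_min h (by lia) hearlier

end Paths

/-! ### Recursion for the polynomials -/

lemma mul_derivation_pow {R A : Type*} [CommSemiring R] [CommSemiring A] [Algebra R A]
    (D : Derivation R A A) (a : A) (k : ℕ) : a * D (a ^ k) = k * a ^ k * D a := by
  rcases k with _ | k
  · simp
  · rw [Derivation.leibniz_pow, Nat.add_sub_cancel, nsmul_eq_mul, smul_eq_mul]
    ring

/-- The substitution `y ↦ y + 1`, `t ↦ t - 1` which turns `Qpoly` into `Rpoly`. -/
def shiftYT : MvPolynomial (Fin 4) ℚ →ₐ[ℚ] MvPolynomial (Fin 4) ℚ :=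
  bind₁ fun i => if i = 1 then X 1 + 1 else if i = 3 then X 3 - 1 else X i

lemma pderiv_shiftYT (P : MvPolynomial (Fin 4) ℚ) :
    pderiv 1 (shiftYT P) = shiftYT (pderiv 1 P) := by
  induction P using MvPolynomial.induction_on with
  | C a => simp [shiftYT]
  | add p q hp hq => simp only [map_add, hp, hq]
  | mul_X p i hp =>
    have hX : pderiv 1 (shiftYT (X i)) = shiftYT (pderiv 1 (X i)) := by
      fin_cases i <;> simp [shiftYT, pderiv_X]
    simp only [map_mul, pderiv_mul, map_add, hp, hX]

lemma Rpoly_one : Rpoly 1 = 1 := map_one shiftYT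

lemma Rpoly_succ {n : ℕ} (hn : 1 ≤ n) :
    Rpoly (n + 1)
      = (X 0 + (n : MvPolynomial (Fin 4) ℚ) * X 2 + (n : MvPolynomial (Fin 4) ℚ) * (X 1 + X 3))
          * Rpoly n
        + (X 1 + X 3) * ((X 1 + 1) * pderiv 1 (Rpoly n)) := by
  obtain ⟨n, rfl⟩ := Nat.exists_eq_add_of_le' hn
  change shiftYT (Qpoly (n + 2)) = _ * shiftYT (Qpoly (n + 1))
    + _ * (_ * pderiv 1 (shiftYT (Qpoly (n + 1))))
  rw [pderiv_shiftYT, Qpoly]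
  simp only [shiftYT, map_add, map_mul, bind₁_X_right, map_one, map_natCast, Nat.cast_add,
    Nat.cast_one, Fin.reduceEq, if_true, if_false]
  ring

/-! ### Descendants and statistics of Cayley trees -/

namespace CayleyTree

section Structure

variable {n : ℕ} (T : CayleyTree (n + 1))

lemma map_zero : T.1 0 = 0 := T.2.1 0 rfl

lemma desc_iff {v a : Fin (n + 1)} : T.Desc v a ↔ PathAbove T.1 0 v a := by
  simp [pathAbove_iff_exists_iterate, Desc]

lemma desc_refl (a : Fin (n + 1)) : T.Desc a a := ⟨0, rfl⟩

lemma desc_parent (a : Fin (n + 1)) : T.Desc a (T.1 a) := ⟨1, rfl⟩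

variable {T} in
lemma Desc.trans {a b c : Fin (n + 1)} (hab : T.Desc a b) (hbc : T.Desc b c) : T.Desc a c :=
  T.desc_iff.mpr ((T.desc_iff.mp hab).trans (T.desc_iff.mp hbc))

lemma desc_zero (v : Fin (n + 1)) : T.Desc v 0 :=
  let ⟨k, _, hk⟩ := T.2.2 v
  ⟨k, Fin.ext hk⟩

/-- The Cayley tree with parent map `p`; the bound on the depth of the vertices is automatic. -/
def ofParent (p : Fin (n + 1) → Fin (n + 1)) (h0 : p 0 = 0) (h : ∀ v, PathAbove p 0 v 0) :
    CayleyTree (n + 1) :=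
  ⟨p, fun v hv => (Fin.ext hv : v = 0) ▸ h0, fun v => by
    obtain ⟨k, hk, _⟩ := pathAbove_iff_exists_iterate.mp (h v)
    obtain ⟨l, hl, hl0⟩ := exists_lt_card_iterate_eq ⟨k, hk⟩
    exact ⟨l, by simpa using hl, congrArg Fin.val hl0⟩⟩

variable {T} in
lemma eq_zero_of_desc_parent {x : Fin (n + 1)} (h : T.Desc (T.1 x) x) : x = 0 := by
  obtain ⟨k, hk⟩ := h
  have hper : IsPeriodicPt T.1 (k + 1) x := hk
  obtain ⟨m, hm⟩ := T.desc_zero x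
  calc x = T.1^[(k + 1) * m] x := ((hper.mul_const m).eq).symm
    _ = T.1^[k * m] (T.1^[m] x) := by rw [← iterate_add_apply]; congr 2; ring
    _ = 0 := by rw [hm, iterate_fixed T.map_zero]

variable {T} in
lemma parent_ne_self {x : Fin (n + 1)} (hx : x ≠ 0) : T.1 x ≠ x := fun h =>
  hx (eq_zero_of_desc_parent (T := T) (by rw [h]; exact T.desc_refl x))

variable {T} in
lemma sibling_unique {c c' w : Fin (n + 1)} (hc : c ≠ 0) (hc' : c' ≠ 0) (hp : T.1 c = T.1 c')
    (hw : T.Desc w c) (hw' : T.Desc w c') : c = c' := by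
  wlog hcc' : T.Desc c c' generalizing c c'
  · refine (this hc' hc hp.symm hw' hw ?_).symm
    exact T.desc_iff.mpr <| ((T.desc_iff.mp hw).total_of_right_unique
      (fun _ _ _ h h' => h.1.symm.trans h'.1) (T.desc_iff.mp hw')).resolve_left
        fun h => hcc' (T.desc_iff.mpr h)
  rcases (T.desc_iff.mp hcc').cases_head with h | ⟨d, ⟨rfl, -⟩, hd⟩
  · exact h
  · exact absurd (eq_zero_of_desc_parent (T := T) (by rw [← hp]; exact T.desc_iff.mpr hd)) hc'

end Structure

section Beta

variable {n : ℕ} {T : CayleyTree (n + 1)}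

lemma beta_le {w a : Fin (n + 1)} (h : T.Desc w a) : T.beta a ≤ w := Nat.sInf_le ⟨w, rfl, h⟩

variable (T) in
lemma exists_desc_eq_beta (a : Fin (n + 1)) : ∃ w : Fin (n + 1), w = T.beta a ∧ T.Desc w a :=
  Nat.sInf_mem (s := {j : ℕ | ∃ v : Fin (n + 1), v.val = j ∧ T.Desc v a}) ⟨a, a, rfl, T.desc_refl a⟩

lemma beta_le_self (a : Fin (n + 1)) : T.beta a ≤ a := beta_le (T.desc_refl a)

lemma beta_le_of_desc {a b : Fin (n + 1)} (h : T.Desc a b) : T.beta b ≤ T.beta a := by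
  obtain ⟨w, hw, hwa⟩ := T.exists_desc_eq_beta a
  exact hw ▸ beta_le (hwa.trans h)

lemma eq_of_parent_eq_of_beta_eq {c c' : Fin (n + 1)} (hc : c ≠ 0) (hc' : c' ≠ 0)
    (hp : T.1 c = T.1 c') (hb : T.beta c = T.beta c') : c = c' := by
  obtain ⟨w, hw, hwc⟩ := T.exists_desc_eq_beta c
  obtain ⟨w', hw', hwc'⟩ := T.exists_desc_eq_beta c'
  obtain rfl : w = w' := Fin.ext (by rw [hw, hw', hb])
  exact sibling_unique hc hc' hp hwc hwc'

lemma beta_eq_self_or_exists_child (a : Fin (n + 1)) :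
    T.beta a = a ∨ ∃ c, T.1 c = a ∧ T.beta c = T.beta a := by
  obtain ⟨w, hw, hwa⟩ := T.exists_desc_eq_beta a
  rcases (T.desc_iff.mp hwa).cases_tail with rfl | ⟨c, hwc, rfl, -⟩
  · exact .inl hw.symm
  · refine .inr ⟨c, rfl, le_antisymm ?_ (beta_le_of_desc (T.desc_parent c))⟩
    exact hw ▸ beta_le (T.desc_iff.mpr hwc)

lemma beta_eq_of_desc_iff {T' : CayleyTree (n + 2)} {a : Fin (n + 1)} {u : Fin (n + 2)}
    (h : ∀ x : Fin (n + 1), T'.Desc x.castSucc u ↔ T.Desc x a) : T'.beta u = T.beta a := by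
  obtain ⟨w, hw, hwa⟩ := T.exists_desc_eq_beta a
  obtain ⟨w', hw', hwu⟩ := T'.exists_desc_eq_beta u
  have hle : T'.beta u ≤ T.beta a := hw ▸ beta_le ((h w).mpr hwa)
  refine le_antisymm hle ?_
  obtain ⟨x, rfl⟩ : ∃ x : Fin (n + 1), w' = x.castSucc :=
    ⟨⟨w', by lia⟩, rfl⟩
  exact hw' ▸ beta_le ((h x).mp hwu)

end Beta

section Statistics

variable {n : ℕ} {T : CayleyTree (n + 1)}

lemma improperEdge_iff {c : Fin (n + 1)} : T.ImproperEdge c ↔ T.beta c < T.1 c := by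
  refine ⟨And.right, fun h => ⟨fun hc => ?_, h⟩⟩
  obtain rfl : c = 0 := Fin.ext hc
  simp [T.map_zero] at h

lemma ImproperEdge.ne_zero {c : Fin (n + 1)} (h : T.ImproperEdge c) : c ≠ 0 :=
  fun hc => h.1 (congrArg Fin.val hc)

lemma ImproperEdge.parent_ne_zero {c : Fin (n + 1)} (h : T.ImproperEdge c) : T.1 c ≠ 0 :=
  fun hc => by simpa [hc] using h.2

lemma improperParent_iff_beta_lt {a : Fin (n + 1)} : T.ImproperParent a ↔ T.beta a < a :=
  (beta_le_self a).lt_iff_ne.symm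

lemma improperParent_iff_exists {a : Fin (n + 1)} :
    T.ImproperParent a ↔ ∃ c, T.1 c = a ∧ T.ImproperEdge c := by
  constructor
  · intro h
    obtain ⟨c, rfl, hc⟩ := (beta_eq_self_or_exists_child a).resolve_left h
    exact ⟨c, rfl, improperEdge_iff.mpr (hc ▸ improperParent_iff_beta_lt.mp h)⟩
  · rintro ⟨c, rfl, hc⟩
    exact improperParent_iff_beta_lt.mpr ((beta_le_of_desc (T.desc_parent c)).trans_lt hc.2)

lemma leading_iff {i : Fin (n + 1)} :
    T.Leading i ↔ ∀ a, PathAbove T.1 i i a → i ≤ T.beta a := by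
  have hbap : ∀ l ≤ T.bapLen i, i ≤ T.1^[l] i :=
    Nat.findGreatest_spec (P := fun k => ∀ l ≤ k, i ≤ T.1^[l] i) (Nat.zero_le _)
      fun l hl => by rw [Nat.le_zero.mp hl]; rfl
  constructor
  · intro hi a ha
    rcases eq_or_ne i 0 with rfl | hi0
    · simp
    obtain ⟨k, rfl, hk⟩ := pathAbove_iff_exists_iterate.mp ha
    have hk' : ∀ l ≤ k, i ≤ T.1^[l] i := by
      rintro (_ | l) hl
      exacts [le_rfl, hk l hl]
    obtain ⟨m, hm, hm0⟩ := T.2.2 i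
    have hkm : k < m := by
      by_contra! hmk
      exact hi0 (Fin.le_zero_iff.mp ((hk' m hmk).trans_eq (Fin.ext hm0)))
    have hkb : k ≤ T.bapLen i := Nat.le_findGreatest (by lia) hk'
    rw [← hi]
    refine beta_le_of_desc ⟨T.bapLen i - k, ?_⟩
    rw [← iterate_add_apply, Nat.sub_add_cancel hkb]
  · intro h
    refine le_antisymm (beta_le ⟨_, rfl⟩) (h _ (pathAbove_iff_exists_iterate.mpr ⟨_, rfl, ?_⟩))
    exact fun l hl => hbap (l + 1) hl

variable (T) in
lemma degRoot_eq_ncard : T.degRoot = {c | c ≠ 0 ∧ T.1 c = 0}.ncard := by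
  simp only [degRoot, ne_eq, Fin.ext_iff, Fin.val_zero]

variable (T) in
lemma impp_le_impe : T.impp ≤ T.impe := by
  have himage : {a | T.ImproperParent a} = T.1 '' {c | T.ImproperEdge c} := by
    ext a
    simp only [Set.mem_ofPred_eq, improperParent_iff_exists, Set.mem_image, and_comm]
  rw [impp, himage]
  exact Set.ncard_image_le

variable (T) in
lemma exists_desc_child_of_zero {v : Fin (n + 1)} (hv : v ≠ 0) :
    ∃ c, c ≠ 0 ∧ T.1 c = 0 ∧ T.Desc v c := by
  have h := T.desc_iff.mp (T.desc_zero v)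
  induction h using Relation.ReflTransGen.head_induction_on with
  | refl => exact absurd rfl hv
  | @head x y hstep _ ih =>
    obtain ⟨rfl, -⟩ := hstep
    rcases eq_or_ne (T.1 x) 0 with h0 | h0
    · exact ⟨x, hv, h0, T.desc_refl x⟩
    · obtain ⟨c, hc, hc0, hd⟩ := ih h0
      exact ⟨c, hc, hc0, (T.desc_parent x).trans hd⟩

variable (T) in
lemma one_le_degRoot (hn : 1 ≤ n) : 1 ≤ T.degRoot := by
  have hlast : Fin.last n ≠ 0 := Fin.ne_of_gt (Fin.lt_def.mpr hn)
  obtain ⟨c, hc, hc0, -⟩ := T.exists_desc_child_of_zero hlast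
  rw [degRoot_eq_ncard]
  exact (Set.ncard_pos).mpr ⟨c, hc, hc0⟩

variable (T) in
lemma leading_zero : T.Leading 0 := leading_iff.mpr fun _ _ => Nat.zero_le _

lemma leading_of_eq_beta_child_of_zero {c i : Fin (n + 1)} (hc : c ≠ 0) (hc0 : T.1 c = 0)
    (hi : i = T.beta c) (hic : T.Desc i c) (hi0 : i ≠ 0) : T.Leading i := by
  rw [leading_iff]
  intro a ha
  suffices T.Desc a c from hi.trans_le (beta_le_of_desc this)
  induction ha with
  | refl => exact hic
  | @tail x y _ hstep ih =>
    obtain ⟨rfl, hle⟩ := hstep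
    rcases (T.desc_iff.mp ih).cases_head with rfl | ⟨d, ⟨rfl, -⟩, hd⟩
    · exact absurd (Fin.le_zero_iff.mp (hle.trans_eq hc0)) hi0
    · exact T.desc_iff.mpr hd

variable (T) in
lemma degRoot_lt_lead : T.degRoot < T.lead := by
  choose w hw hdesc using T.exists_desc_eq_beta
  have hw0 : ∀ c ≠ 0, w c ≠ 0 := fun c hc h0 => hc <| by
    obtain ⟨k, hk⟩ := hdesc c
    rw [← hk, h0, iterate_fixed T.map_zero]
  have hinj : Set.InjOn w {c | c ≠ 0 ∧ T.1 c = 0} := fun c hc c' hc' h =>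
    eq_of_parent_eq_of_beta_eq hc.1 hc'.1 (hc.2.trans hc'.2.symm) (by rw [← hw, ← hw, h])
  have hnotMem : 0 ∉ w '' {c | c ≠ 0 ∧ T.1 c = 0} := by
    rintro ⟨c, hc, h⟩
    exact hw0 c hc.1 h
  rw [Nat.lt_iff_add_one_le, degRoot_eq_ncard, ← hinj.ncard_image,
    ← Set.ncard_insert_of_notMem hnotMem]
  refine Set.ncard_le_ncard (Set.insert_subset T.leading_zero ?_)
  rintro _ ⟨c, hc, rfl⟩
  exact leading_of_eq_beta_child_of_zero hc.1 hc.2 (hw c) (hdesc c) (hw0 c hc.1)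

end Statistics

/-! ### Inserting a new largest vertex -/

section InsertionMaps

variable {n : ℕ}

/-- The parent map obtained from `p` by adding the new vertex `Fin.last (n + 1)` as a leaf, with
parent `q`. -/
def attachLeaf (p : Fin (n + 1) → Fin (n + 1)) (q : Fin (n + 1)) : Fin (n + 2) → Fin (n + 2) :=
  Fin.lastCases q.castSucc fun c => (p c).castSucc

open Classical in
/-- The parent map obtained from `p` by subdividing the edge above `v` with the new vertex
`Fin.last (n + 1)` and making the new vertex the parent of the vertices in `S` as well.  It is
applied to sets `S` of children of `v`. -/
def subdivide (p : Fin (n + 1) → Fin (n + 1)) (v : Fin (n + 1)) (S : Set (Fin (n + 1))) :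
    Fin (n + 2) → Fin (n + 2) :=
  Fin.lastCases (p v).castSucc fun c =>
    if c ∈ insert v S then Fin.last (n + 1) else (p c).castSucc

/-- Forgets the largest vertex of `Fin (n + 2)` by identifying it with `v`. -/
def collapse (v : Fin (n + 1)) : Fin (n + 2) → Fin (n + 1) := Fin.lastCases v id

/-- The topological embedding of a tree into its subdivision above `v`: the role of `v` is taken
over by the new vertex. -/
def liftAbove (v : Fin (n + 1)) : Fin (n + 1) → Fin (n + 2) :=
  update Fin.castSucc v (Fin.last (n + 1))

variable {p : Fin (n + 1) → Fin (n + 1)} {q v : Fin (n + 1)} {S : Set (Fin (n + 1))}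

@[simp] lemma attachLeaf_last : attachLeaf p q (Fin.last (n + 1)) = q.castSucc := by
  simp [attachLeaf]

@[simp] lemma attachLeaf_castSucc (c : Fin (n + 1)) :
    attachLeaf p q c.castSucc = (p c).castSucc := by
  simp [attachLeaf]

@[simp] lemma subdivide_last : subdivide p v S (Fin.last (n + 1)) = (p v).castSucc := by
  simp [subdivide]

lemma subdivide_castSucc_of_mem {c : Fin (n + 1)} (hc : c ∈ insert v S) :
    subdivide p v S c.castSucc = Fin.last (n + 1) := by
  simp only [subdivide, Fin.lastCases_castSucc, if_pos hc]

lemma subdivide_castSucc_of_notMem {c : Fin (n + 1)} (hc : c ∉ insert v S) :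
    subdivide p v S c.castSucc = (p c).castSucc := by
  simp only [subdivide, Fin.lastCases_castSucc, if_neg hc]

@[simp] lemma collapse_last : collapse v (Fin.last (n + 1)) = v := by simp [collapse]

@[simp] lemma collapse_castSucc (c : Fin (n + 1)) : collapse v c.castSucc = c := by
  simp [collapse]

lemma castSucc_collapse {u : Fin (n + 2)} (hu : u ≠ Fin.last (n + 1)) :
    (collapse v u).castSucc = u := by
  obtain ⟨c, rfl⟩ := Fin.exists_castSucc_eq.mpr hu
  rw [collapse_castSucc]

@[simp] lemma liftAbove_self : liftAbove v v = Fin.last (n + 1) := by simp [liftAbove]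

lemma liftAbove_of_ne {c : Fin (n + 1)} (hc : c ≠ v) : liftAbove v c = c.castSucc := by
  simp [liftAbove, hc]

lemma collapse_liftAbove (a : Fin (n + 1)) : collapse v (liftAbove v a) = a := by
  rcases eq_or_ne a v with rfl | ha
  · simp
  · simp [liftAbove_of_ne ha]

lemma liftAbove_injective : Injective (liftAbove v) :=
  LeftInverse.injective collapse_liftAbove

lemma mem_range_liftAbove {u : Fin (n + 2)} : u ∈ Set.range (liftAbove v) ↔ u ≠ v.castSucc := by
  constructor
  · rintro ⟨a, rfl⟩ h
    rcases eq_or_ne a v with rfl | ha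
    · simp [Fin.ext_iff] at h
      lia
    · exact ha (by simpa [liftAbove_of_ne ha] using h)
  · intro hu
    induction u using Fin.lastCases with
    | last => exact ⟨v, liftAbove_self⟩
    | cast c => exact ⟨c, liftAbove_of_ne fun h => hu (by rw [h])⟩

lemma pathAbove_attachLeaf_iff {i x y : Fin (n + 1)} :
    PathAbove (attachLeaf p q) i.castSucc x.castSucc y.castSucc ↔ PathAbove p i x y := by
  constructor
  · intro h
    have hcollapse : PathAbove p i (collapse q x.castSucc) (collapse q y.castSucc) := by
      refine h.lift' (collapse q) ?_
      rintro u _ ⟨rfl, hi⟩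
      induction u using Fin.lastCases with
      | last => simp [onFun, Relation.ReflTransGen.refl]
      | cast c =>
        rw [attachLeaf_castSucc] at hi ⊢
        simpa [onFun] using Relation.ReflTransGen.single ⟨rfl, hi⟩
    simpa using hcollapse
  · intro h
    refine h.lift Fin.castSucc ?_
    rintro c _ ⟨rfl, hi⟩
    exact ⟨attachLeaf_castSucc c, hi⟩

lemma pathAbove_liftAbove (hS : ∀ c ∈ S, p c = v) {i x y : Fin (n + 1)} (h : PathAbove p i x y) :
    PathAbove (subdivide p v S) i.castSucc x.castSucc (liftAbove v y) := by
  have hlift : ∀ z, PathAbove (subdivide p v S) i.castSucc z.castSucc (liftAbove v z) := by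
    intro z
    rcases eq_or_ne z v with rfl | hz
    · rw [liftAbove_self]
      exact .single ⟨subdivide_castSucc_of_mem (Set.mem_insert z S), Fin.le_last _⟩
    · rw [liftAbove_of_ne hz]
  refine (hlift x).trans (h.lift' (liftAbove v) ?_)
  rintro z _ ⟨rfl, hi⟩
  rcases eq_or_ne z v with rfl | hz
  · simp only [onFun, liftAbove_self]
    exact .head ⟨subdivide_last, hi⟩ (hlift _)
  simp only [onFun, liftAbove_of_ne hz]
  by_cases hzS : z ∈ S
  · rw [hS z hzS, liftAbove_self]
    exact .single ⟨subdivide_castSucc_of_mem (.inr hzS), Fin.le_last _⟩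
  · have hz' : z ∉ insert v S := by simp [hz, hzS]
    exact .head ⟨subdivide_castSucc_of_notMem hz', hi⟩ (hlift _)

/-- A path of the subdivision projects to a path through labels `≥ i` unless it runs through a
vertex `c ∈ S` whose former parent `v` is smaller than `i`. -/
lemma pathAbove_collapse (hS : ∀ c ∈ S, p c = v) {i : Fin (n + 1)} {u w : Fin (n + 2)}
    (h : PathAbove (subdivide p v S) i.castSucc u w) :
    PathAbove p i (collapse v u) (collapse v w) ∨
      v < i ∧ ∃ c ∈ S, PathAbove p i (collapse v u) c := by
  induction h with
  | refl => exact .inl .refl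
  | @tail w _ _ hstep ih =>
    obtain ⟨rfl, hi⟩ := hstep
    refine ih.elim (fun hw => ?_) .inr
    induction w using Fin.lastCases with
    | last =>
      simp only [subdivide_last, collapse_last, collapse_castSucc] at hw hi ⊢
      exact .inl (hw.tail ⟨rfl, hi⟩)
    | cast c =>
      rw [collapse_castSucc] at hw
      by_cases hcA : c ∈ insert v S
      · rw [subdivide_castSucc_of_mem hcA, collapse_last]
        rcases hcA with rfl | hcS
        · exact .inl hw
        · exact (le_or_gt i v).imp (fun hiv => hw.tail ⟨hS c hcS, hiv⟩) fun hvi => ⟨hvi, c, hcS, hw⟩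
      · rw [subdivide_castSucc_of_notMem hcA] at hi ⊢
        rw [collapse_castSucc]
        exact .inl (hw.tail ⟨rfl, hi⟩)

end InsertionMaps

section CountingVertices

variable {n : ℕ} (P : Fin (n + 2) → Prop)

open Classical in
lemma ncard_castSucc :
    {u | P u}.ncard = {x : Fin (n + 1) | P x.castSucc}.ncard + if P (Fin.last _) then 1 else 0 :=
  ncard_eq_ncard_preimage_add_ite (Fin.castSucc_injective _)
    (fun _ => Set.mem_range.trans Fin.exists_castSucc_eq) P

open Classical in
lemma ncard_liftAbove (v : Fin (n + 1)) :
    {u | P u}.ncard = {x | P (liftAbove v x)}.ncard + if P v.castSucc then 1 else 0 :=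
  ncard_eq_ncard_preimage_add_ite liftAbove_injective (fun _ => mem_range_liftAbove) P

end CountingVertices

section AttachLeaf

variable {n : ℕ} {T : CayleyTree (n + 1)} {T' : CayleyTree (n + 2)} {q : Fin (n + 1)}

lemma desc_castSucc_attachLeaf_iff (h : T'.1 = attachLeaf T.1 q) {x a : Fin (n + 1)} :
    T'.Desc x.castSucc a.castSucc ↔ T.Desc x a := by
  rw [desc_iff, desc_iff, h]
  exact pathAbove_attachLeaf_iff (i := 0)

lemma parent_ne_last_of_attachLeaf (h : T'.1 = attachLeaf T.1 q) (u : Fin (n + 2)) :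
    T'.1 u ≠ Fin.last (n + 1) := by
  rw [h]
  induction u using Fin.lastCases with
  | last => simp [Fin.castSucc_ne_last]
  | cast c => simp [Fin.castSucc_ne_last]

lemma beta_castSucc_attachLeaf (h : T'.1 = attachLeaf T.1 q) (a : Fin (n + 1)) :
    T'.beta a.castSucc = T.beta a :=
  beta_eq_of_desc_iff fun _ => desc_castSucc_attachLeaf_iff h

lemma beta_last_attachLeaf (h : T'.1 = attachLeaf T.1 q) : T'.beta (Fin.last (n + 1)) = n + 1 :=
  (beta_eq_self_or_exists_child _).resolve_right fun ⟨c, hc, _⟩ =>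
    parent_ne_last_of_attachLeaf h c hc

lemma impe_attachLeaf (h : T'.1 = attachLeaf T.1 q) : T'.impe = T.impe := by
  have hlast : ¬T'.ImproperEdge (Fin.last (n + 1)) := by
    rw [improperEdge_iff, beta_last_attachLeaf h, h, attachLeaf_last, Fin.val_castSucc]
    lia
  rw [impe, ncard_castSucc, if_neg hlast, impe]
  simp [improperEdge_iff, beta_castSucc_attachLeaf h, h]

lemma impp_attachLeaf (h : T'.1 = attachLeaf T.1 q) : T'.impp = T.impp := by
  have hlast : ¬T'.ImproperParent (Fin.last (n + 1)) := not_not.mpr (beta_last_attachLeaf h)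
  rw [impp, ncard_castSucc, if_neg hlast, impp]
  simp [ImproperParent, beta_castSucc_attachLeaf h]

lemma degRoot_attachLeaf (h : T'.1 = attachLeaf T.1 q) :
    T'.degRoot = T.degRoot + if q = 0 then 1 else 0 := by
  rw [degRoot_eq_ncard, ncard_castSucc, degRoot_eq_ncard]
  simp [h]

lemma leading_castSucc_attachLeaf_iff (h : T'.1 = attachLeaf T.1 q) {i : Fin (n + 1)} :
    T'.Leading i.castSucc ↔ T.Leading i := by
  rw [leading_iff, leading_iff]
  refine ⟨fun hi a ha => ?_, fun hi u hu => ?_⟩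
  · rw [← beta_castSucc_attachLeaf h]
    exact hi _ (h ▸ pathAbove_attachLeaf_iff.mpr ha)
  · obtain ⟨a, rfl⟩ : ∃ a : Fin (n + 1), a.castSucc = u := by
      rcases hu.cases_tail with rfl | ⟨d, _, rfl, _⟩
      · exact ⟨i, rfl⟩
      · exact Fin.exists_castSucc_eq.mpr (parent_ne_last_of_attachLeaf h d)
    rw [beta_castSucc_attachLeaf h]
    exact hi a (pathAbove_attachLeaf_iff.mp (h ▸ hu))

lemma lead_attachLeaf (h : T'.1 = attachLeaf T.1 q) : T'.lead = T.lead + 1 := by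
  have hlast : T'.Leading (Fin.last (n + 1)) := leading_iff.mpr fun a ha => by
    obtain rfl : a = Fin.last (n + 1) := by
      rcases ha.cases_tail with rfl | ⟨d, _, rfl, hle⟩
      exacts [rfl, Fin.last_le_iff.mp hle]
    rw [beta_last_attachLeaf h]
    rfl
  rw [lead, ncard_castSucc, if_pos hlast, lead]
  simp only [leading_castSucc_attachLeaf_iff h]

end AttachLeaf

/-- `T'` arises from `T` by subdividing the edge above `v` with the new largest vertex, which
also becomes the parent of the children `S` of `v`. -/
structure IsSubdivision {n : ℕ} (T' : CayleyTree (n + 2)) (T : CayleyTree (n + 1))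
    (v : Fin (n + 1)) (S : Set (Fin (n + 1))) : Prop where
  map_eq : T'.1 = subdivide T.1 v S
  parent_eq : ∀ c ∈ S, T.1 c = v

namespace IsSubdivision

variable {n : ℕ} {T : CayleyTree (n + 1)} {T' : CayleyTree (n + 2)} {v : Fin (n + 1)}
  {S : Set (Fin (n + 1))} (h : IsSubdivision T' T v S)

include h

lemma map_last : T'.1 (Fin.last (n + 1)) = (T.1 v).castSucc := by rw [h.map_eq, subdivide_last]

lemma map_castSucc_of_mem {c : Fin (n + 1)} (hc : c ∈ insert v S) :
    T'.1 c.castSucc = Fin.last (n + 1) := by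
  rw [h.map_eq, subdivide_castSucc_of_mem hc]

lemma map_castSucc_of_notMem {c : Fin (n + 1)} (hc : c ∉ insert v S) :
    T'.1 c.castSucc = (T.1 c).castSucc := by
  rw [h.map_eq, subdivide_castSucc_of_notMem hc]

lemma ne_zero : v ≠ 0 := by
  rintro rfl
  have h0 := h.map_castSucc_of_mem (Set.mem_insert 0 S)
  rw [Fin.castSucc_zero, map_zero] at h0
  exact Fin.last_pos.ne h0

lemma notMem : v ∉ S := fun hv => parent_ne_self h.ne_zero (h.parent_eq v hv)

lemma map_eq_last_iff {u : Fin (n + 2)} :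
    T'.1 u = Fin.last (n + 1) ↔ ∃ c ∈ insert v S, u = c.castSucc := by
  constructor
  · intro hu
    induction u using Fin.lastCases with
    | last => exact absurd hu (by rw [h.map_last]; exact Fin.castSucc_ne_last _)
    | cast c =>
      refine ⟨c, ?_, rfl⟩
      by_contra hc
      exact Fin.castSucc_ne_last _ ((h.map_castSucc_of_notMem hc).symm.trans hu)
  · rintro ⟨c, hc, rfl⟩
    exact h.map_castSucc_of_mem hc

lemma map_eq_castSucc_iff {u : Fin (n + 2)} :
    T'.1 u = v.castSucc ↔ ∃ d ∉ S, T.1 d = v ∧ u = d.castSucc := by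
  constructor
  · intro hu
    induction u using Fin.lastCases with
    | last =>
      rw [h.map_last] at hu
      exact absurd (Fin.castSucc_injective _ hu) (parent_ne_self h.ne_zero)
    | cast d =>
      have hd : d ∉ insert v S := fun hd =>
        Fin.castSucc_ne_last v (hu.symm.trans (h.map_castSucc_of_mem hd))
      rw [h.map_castSucc_of_notMem hd] at hu
      exact ⟨d, fun hdS => hd (.inr hdS), Fin.castSucc_injective _ hu, rfl⟩
  · rintro ⟨d, hd, rfl, rfl⟩
    refine h.map_castSucc_of_notMem ?_
    rintro (hdv | hdS)
    exacts [parent_ne_self (hdv ▸ h.ne_zero) hdv.symm, hd hdS]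

lemma desc_liftAbove_iff {x a : Fin (n + 1)} :
    T'.Desc x.castSucc (liftAbove v a) ↔ T.Desc x a := by
  rw [desc_iff, desc_iff, h.map_eq]
  refine ⟨fun hd => ?_, pathAbove_liftAbove (i := 0) h.parent_eq⟩
  have hcollapse := (pathAbove_collapse (i := 0) h.parent_eq hd).resolve_right
    fun hlt => absurd hlt.1 (Fin.not_lt_zero v)
  rwa [collapse_castSucc, collapse_liftAbove] at hcollapse

lemma beta_liftAbove (a : Fin (n + 1)) : T'.beta (liftAbove v a) = T.beta a :=
  beta_eq_of_desc_iff fun _ => h.desc_liftAbove_iff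

lemma beta_last : T'.beta (Fin.last (n + 1)) = T.beta v := by
  rw [← h.beta_liftAbove, liftAbove_self]

lemma beta_castSucc {c : Fin (n + 1)} (hc : c ≠ v) : T'.beta c.castSucc = T.beta c := by
  rw [← h.beta_liftAbove, liftAbove_of_ne hc]

lemma beta_collapse_le (u : Fin (n + 2)) : T.beta (collapse v u) ≤ T'.beta u := by
  induction u using Fin.lastCases with
  | last => rw [collapse_last, h.beta_last]
  | cast c =>
    rw [collapse_castSucc, ← h.beta_liftAbove]
    exact beta_le_of_desc (h.desc_liftAbove_iff.mpr (T.desc_refl c))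

lemma improperEdge_liftAbove_iff (hS : ∀ c ∈ S, T.ImproperEdge c) {c : Fin (n + 1)} :
    T'.ImproperEdge (liftAbove v c) ↔ T.ImproperEdge c := by
  rw [improperEdge_iff, improperEdge_iff, h.beta_liftAbove]
  rcases eq_or_ne c v with rfl | hcv
  · rw [liftAbove_self, h.map_last, Fin.val_castSucc]
  rw [liftAbove_of_ne hcv]
  by_cases hcS : c ∈ S
  · refine iff_of_true ?_ (hS c hcS).2
    rw [h.map_castSucc_of_mem (.inr hcS)]
    exact (beta_le_self c).trans_lt c.castSucc_lt_last
  · rw [h.map_castSucc_of_notMem (by simp [hcv, hcS]), Fin.val_castSucc]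

lemma impe_eq (hS : ∀ c ∈ S, T.ImproperEdge c) : T'.impe = T.impe + 1 := by
  have hv : T'.ImproperEdge v.castSucc := by
    rw [improperEdge_iff, h.map_castSucc_of_mem (Set.mem_insert v S)]
    exact (beta_le_self _).trans_lt v.castSucc_lt_last
  rw [impe, ncard_liftAbove _ v, if_pos hv, impe]
  simp only [h.improperEdge_liftAbove_iff hS]

lemma degRoot_eq : T'.degRoot = T.degRoot := by
  have hv : ¬(v.castSucc ≠ 0 ∧ T'.1 v.castSucc = 0) := by
    rw [h.map_castSucc_of_mem (Set.mem_insert v S)]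
    exact fun h0 => Fin.last_pos.ne' h0.2
  rw [degRoot_eq_ncard, ncard_liftAbove _ v, if_neg hv, degRoot_eq_ncard, add_zero]
  congr 1
  ext c
  simp only [Set.mem_ofPred_eq]
  rcases eq_or_ne c v with rfl | hcv
  · simp [h.map_last, h.ne_zero, Fin.last_pos.ne']
  rw [liftAbove_of_ne hcv]
  by_cases hcS : c ∈ S
  · simp [h.map_castSucc_of_mem (.inr hcS), h.parent_eq c hcS, h.ne_zero, Fin.last_pos.ne']
  · simp [h.map_castSucc_of_notMem (c := c) (by simp [hcv, hcS])]

lemma leading_castSucc_iff (hS : ∀ c ∈ S, T.ImproperEdge c) {i : Fin (n + 1)} :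
    T'.Leading i.castSucc ↔ T.Leading i := by
  rw [leading_iff, leading_iff]
  refine ⟨fun hi a ha => ?_, fun hi u hu => ?_⟩
  · rw [← h.beta_liftAbove]
    exact hi _ (h.map_eq ▸ pathAbove_liftAbove h.parent_eq ha)
  · have hpath := pathAbove_collapse h.parent_eq (h.map_eq ▸ hu)
    rw [collapse_castSucc] at hpath
    rcases hpath with hu' | ⟨hvi, c, hcS, hc⟩
    · exact (hi _ hu').trans (h.beta_collapse_le u)
    · have hbc : T.beta c < v := h.parent_eq c hcS ▸ (hS c hcS).2
      exact absurd ((hi c hc).trans_lt hbc) hvi.not_gt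

lemma lead_eq (hS : ∀ c ∈ S, T.ImproperEdge c) : T'.lead = T.lead := by
  have hlast : ¬T'.Leading (Fin.last (n + 1)) := fun hlead => by
    have hle : n + 1 ≤ T'.beta (Fin.last (n + 1)) := leading_iff.mp hlead _ .refl
    have := beta_le_self (T := T) v
    rw [h.beta_last] at hle
    lia
  rw [lead, ncard_castSucc, if_neg hlast, lead]
  simp only [h.leading_castSucc_iff hS, add_zero]

lemma improperParent_last : T'.ImproperParent (Fin.last (n + 1)) := by
  rw [improperParent_iff_beta_lt, h.beta_last]
  exact (beta_le_self v).trans_lt v.castSucc_lt_last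

lemma improperParent_castSucc_iff_of_ne {a : Fin (n + 1)} (ha : a ≠ v) :
    T'.ImproperParent a.castSucc ↔ T.ImproperParent a := by
  rw [ImproperParent, ImproperParent, h.beta_castSucc ha, Fin.val_castSucc]

lemma improperParent_castSucc_iff (hS : ∀ c ∈ S, T.ImproperEdge c) :
    T'.ImproperParent v.castSucc ↔ ∃ d ∉ S, T.1 d = v ∧ T.ImproperEdge d := by
  have hedge : ∀ d, T.1 d = v → (T'.ImproperEdge d.castSucc ↔ T.ImproperEdge d) := by
    rintro d rfl
    rw [← h.improperEdge_liftAbove_iff hS, liftAbove_of_ne]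
    intro hd
    exact parent_ne_self h.ne_zero (congrArg T.1 hd).symm
  simp only [improperParent_iff_exists, h.map_eq_castSucc_iff]
  constructor
  · rintro ⟨_, ⟨d, hdS, hd, rfl⟩, himp⟩
    exact ⟨d, hdS, hd, (hedge d hd).mp himp⟩
  · rintro ⟨d, hdS, hd, himp⟩
    exact ⟨_, ⟨d, hdS, hd, rfl⟩, (hedge d hd).mpr himp⟩

lemma impp_eq_add_one (hS : ∀ c ∈ S, T.ImproperEdge c)
    (hrest : T.ImproperParent v → ∃ d ∉ S, T.1 d = v ∧ T.ImproperEdge d) :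
    T'.impp = T.impp + 1 := by
  rw [impp, ncard_castSucc, if_pos h.improperParent_last, impp]
  congr 2
  ext a
  rcases eq_or_ne a v with rfl | ha
  · refine (h.improperParent_castSucc_iff hS).trans ⟨?_, hrest⟩
    rintro ⟨d, -, hd⟩
    exact improperParent_iff_exists.mpr ⟨d, hd⟩
  · exact h.improperParent_castSucc_iff_of_ne ha

lemma impp_eq (hS : ∀ c ∈ S, T.ImproperEdge c) (hv : T.ImproperParent v)
    (hall : ∀ d, T.1 d = v → T.ImproperEdge d → d ∈ S) : T'.impp = T.impp := by
  rw [impp, ncard_castSucc, if_pos h.improperParent_last, impp,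
    ← Set.ncard_sdiff_singleton_add_one (s := {a | T.ImproperParent a}) hv]
  congr 2
  ext a
  rw [Set.mem_ofPred_eq, Set.mem_sdiff, Set.mem_ofPred_eq, Set.mem_singleton_iff]
  rcases eq_or_ne a v with rfl | ha
  · rw [h.improperParent_castSucc_iff hS]
    exact iff_of_false (fun ⟨d, hdS, hd, himp⟩ => hdS (hall d hd himp)) fun hne => hne.2 rfl
  · simp [h.improperParent_castSucc_iff_of_ne ha, ha]

end IsSubdivision

/-! ### Every tree arises from exactly one insertion -/

section AdmissibleInsertion

variable {n : ℕ}

/-- The sets `S` of children of `v` which the new largest vertex may take over when it subdivides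
the edge above `v`.  They are such that `v` can be recovered as the child of the new vertex with
the largest `β`. -/
structure Admissible (T : CayleyTree (n + 1)) (v : Fin (n + 1)) (S : Set (Fin (n + 1))) : Prop where
  ne_zero : v ≠ 0
  parent_eq : ∀ c ∈ S, T.1 c = v
  improperEdge : ∀ c ∈ S, T.ImproperEdge c
  beta_lt : ∀ s ∈ S, ∀ d ∉ S, T.1 d = v → T.beta s < T.beta d

/-- The siblings of `c`, including `c`, whose `β` is at most that of `c`. -/
def siblingsUpTo (T : CayleyTree (n + 1)) (c : Fin (n + 1)) : Set (Fin (n + 1)) :=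
  {d | T.1 d = T.1 c ∧ T.beta d ≤ T.beta c}

section Admissible

variable {T : CayleyTree (n + 1)} {v c : Fin (n + 1)} {S : Set (Fin (n + 1))}

variable (T) in
lemma admissible_empty (hv : v ≠ 0) : T.Admissible v ∅ where
  ne_zero := hv
  parent_eq := by simp
  improperEdge := by simp
  beta_lt := by simp

lemma admissible_siblingsUpTo (hc : T.ImproperEdge c) :
    T.Admissible (T.1 c) (T.siblingsUpTo c) where
  ne_zero := hc.parent_ne_zero
  parent_eq _ hd := hd.1
  improperEdge d hd := improperEdge_iff.mpr (by rw [hd.1]; exact hd.2.trans_lt hc.2)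
  beta_lt s hs d hd hdc := hs.2.trans_lt (not_le.mp fun hle => hd ⟨hdc, hle⟩)

lemma siblingsUpTo_injOn : Set.InjOn T.siblingsUpTo {c | T.ImproperEdge c} := by
  intro c hc d hd h
  have hcd : c ∈ T.siblingsUpTo d := h ▸ ⟨rfl, le_rfl⟩
  have hdc : d ∈ T.siblingsUpTo c := h ▸ ⟨rfl, le_rfl⟩
  exact eq_of_parent_eq_of_beta_eq hc.ne_zero hd.ne_zero hcd.1 (hcd.2.antisymm hdc.2)

lemma Admissible.eq_empty_or_eq_siblingsUpTo (h : T.Admissible v S) :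
    S = ∅ ∨ ∃ c, T.ImproperEdge c ∧ T.1 c = v ∧ S = T.siblingsUpTo c := by
  refine S.eq_empty_or_nonempty.imp_right fun hne => ?_
  obtain ⟨c, hcS, hmax⟩ := S.toFinite.exists_maximalFor T.beta S hne
  refine ⟨c, h.improperEdge c hcS, h.parent_eq c hcS, ?_⟩
  ext d
  constructor
  · intro hd
    exact ⟨(h.parent_eq d hd).trans (h.parent_eq c hcS).symm,
      (le_total _ _).elim id (hmax hd)⟩
  · rintro ⟨hdc, hle⟩
    by_contra hdS
    exact (h.beta_lt c hcS d hdS (hdc.trans (h.parent_eq c hcS))).not_ge hle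

end Admissible

section Tree

variable (T : CayleyTree (n + 1))

/-- The tree obtained from `T` by adding a new largest vertex as a child of `q`. -/
def addLeaf (q : Fin (n + 1)) : CayleyTree (n + 2) :=
  ofParent (attachLeaf T.1 q) (by rw [← Fin.castSucc_zero, attachLeaf_castSucc, T.map_zero]) <| by
    have hreach (x : Fin (n + 1)) : PathAbove (attachLeaf T.1 q) 0 x.castSucc 0 :=
      pathAbove_attachLeaf_iff.mpr (T.desc_iff.mp (T.desc_zero x))
    intro u
    induction u using Fin.lastCases with
    | last => exact .head ⟨attachLeaf_last, Fin.zero_le _⟩ (hreach q)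
    | cast x => exact hreach x

variable {T} {v : Fin (n + 1)} {S : Set (Fin (n + 1))}

lemma Admissible.zero_notMem (h : T.Admissible v S) : 0 ∉ insert v S := by
  rintro (h0 | h0)
  · exact h.ne_zero h0.symm
  · exact (h.improperEdge 0 h0).ne_zero rfl

/-- The tree obtained from `T` by subdividing the edge above `v` with a new largest vertex that
takes over the children `S` of `v`. -/
def Admissible.tree (h : T.Admissible v S) : CayleyTree (n + 2) :=
  ofParent (subdivide T.1 v S)
    (by rw [← Fin.castSucc_zero, subdivide_castSucc_of_notMem h.zero_notMem, T.map_zero]) <| by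
    have hreach (x : Fin (n + 1)) : PathAbove (subdivide T.1 v S) 0 x.castSucc 0 := by
      have hpath := pathAbove_liftAbove h.parent_eq (T.desc_iff.mp (T.desc_zero x))
      rwa [liftAbove_of_ne h.ne_zero.symm] at hpath
    intro u
    induction u using Fin.lastCases with
    | last => exact .head ⟨subdivide_last, Fin.zero_le _⟩ (hreach _)
    | cast x => exact hreach x

lemma Admissible.isSubdivision_tree (h : T.Admissible v S) : IsSubdivision h.tree T v S :=
  ⟨rfl, h.parent_eq⟩

end Tree

section Uniqueness

variable {T₁ T₂ T : CayleyTree (n + 1)} {T' : CayleyTree (n + 2)} {v v₁ v₂ : Fin (n + 1)}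
  {S S₁ S₂ : Set (Fin (n + 1))}

lemma addLeaf_inj {q₁ q₂ : Fin (n + 1)} (h : T₁.addLeaf q₁ = T₂.addLeaf q₂) :
    T₁ = T₂ ∧ q₁ = q₂ := by
  have hmap : attachLeaf T₁.1 q₁ = attachLeaf T₂.1 q₂ := congrArg Subtype.val h
  constructor
  · refine Subtype.ext (funext fun c => Fin.castSucc_injective _ ?_)
    simpa using congrFun hmap c.castSucc
  · simpa using congrFun hmap (Fin.last (n + 1))

lemma IsSubdivision.parent_eq_collapse (h : IsSubdivision T' T v S) (a : Fin (n + 1)) :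
    T.1 a = collapse v (T'.1 (liftAbove v a)) := by
  rcases eq_or_ne a v with rfl | ha
  · rw [liftAbove_self, h.map_last, collapse_castSucc]
  rw [liftAbove_of_ne ha]
  by_cases haS : a ∈ S
  · rw [h.map_castSucc_of_mem (.inr haS), collapse_last, h.parent_eq a haS]
  · rw [h.map_castSucc_of_notMem (by simp [ha, haS]), collapse_castSucc]

lemma IsSubdivision.beta_castSucc_lt (h : IsSubdivision T' T v S) (hS : T.Admissible v S)
    {s : Fin (n + 1)} (hs : s ∈ S) : T'.beta s.castSucc < T'.beta v.castSucc := by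
  rw [h.beta_castSucc fun hsv => h.notMem (hsv ▸ hs)]
  rcases beta_eq_self_or_exists_child (T := T') v.castSucc with hv | ⟨u, hu, hbeta⟩
  · rw [hv, Fin.val_castSucc, ← h.parent_eq s hs]
    exact (hS.improperEdge s hs).2
  · obtain ⟨d, hdS, hd, rfl⟩ := h.map_eq_castSucc_iff.mp hu
    rw [← hbeta, h.beta_castSucc]
    · exact hS.beta_lt s hs d hdS hd
    · rintro rfl
      exact parent_ne_self h.ne_zero hd

lemma IsSubdivision.insert_eq (h : IsSubdivision T' T v S) :
    insert v S = {c | T'.1 c.castSucc = Fin.last (n + 1)} := by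
  ext c
  simp [h.map_eq_last_iff]

lemma IsSubdivision.unique (h₁ : IsSubdivision T' T₁ v₁ S₁) (hS₁ : T₁.Admissible v₁ S₁)
    (h₂ : IsSubdivision T' T₂ v₂ S₂) (hS₂ : T₂.Admissible v₂ S₂) :
    T₁ = T₂ ∧ v₁ = v₂ ∧ S₁ = S₂ := by
  have hins : insert v₁ S₁ = insert v₂ S₂ := h₁.insert_eq.trans h₂.insert_eq.symm
  obtain rfl : v₁ = v₂ := by
    by_contra hne
    have hv₁ : v₁ ∈ S₂ := (hins ▸ Set.mem_insert v₁ S₁ : v₁ ∈ insert v₂ S₂).resolve_left hne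
    have hv₂ : v₂ ∈ S₁ :=
      (hins ▸ Set.mem_insert v₂ S₂ : v₂ ∈ insert v₁ S₁).resolve_left (Ne.symm hne)
    exact (h₁.beta_castSucc_lt hS₁ hv₂).asymm (h₂.beta_castSucc_lt hS₂ hv₁)
  refine ⟨Subtype.ext (funext fun a => ?_), rfl, ?_⟩
  · rw [h₁.parent_eq_collapse, h₂.parent_eq_collapse]
  · rw [← Set.insert_sdiff_self_of_notMem h₁.notMem, hins,
      Set.insert_sdiff_self_of_notMem h₂.notMem]

end Uniqueness

section Existence

variable (T' : CayleyTree (n + 2))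

lemma exists_addLeaf_eq (h : ∀ u, T'.1 u ≠ Fin.last (n + 1)) :
    ∃ (T : CayleyTree (n + 1)) (q : Fin (n + 1)), T.addLeaf q = T' := by
  have hpred : ∀ u, ∃ a : Fin (n + 1), a.castSucc = T'.1 u := fun u =>
    Fin.exists_castSucc_eq.mpr (h u)
  choose parent hparent using hpred
  have hmap : T'.1 = attachLeaf (fun c => parent c.castSucc) (parent (Fin.last _)) := by
    funext u
    induction u using Fin.lastCases with
    | last => rw [attachLeaf_last, hparent]
    | cast c => rw [attachLeaf_castSucc, hparent]
  refine ⟨ofParent (fun c => parent c.castSucc) ?_ fun x => ?_, parent (Fin.last _),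
    Subtype.ext hmap.symm⟩
  · exact Fin.castSucc_injective _ ((hparent _).trans T'.map_zero)
  · refine (pathAbove_attachLeaf_iff (q := parent (Fin.last _))).mp ?_
    exact hmap ▸ T'.desc_iff.mp (T'.desc_zero x.castSucc)

variable {T'} {v : Fin (n + 1)}

lemma exists_isSubdivision (hv : T'.1 v.castSucc = Fin.last (n + 1)) :
    ∃ T, IsSubdivision T' T v {c | c ≠ v ∧ T'.1 c.castSucc = Fin.last (n + 1)} := by
  set S := {c | c ≠ v ∧ T'.1 c.castSucc = Fin.last (n + 1)}
  set p : Fin (n + 1) → Fin (n + 1) := fun a => collapse v (T'.1 (liftAbove v a)) with hp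
  have hv0 : v ≠ 0 := by
    rintro rfl
    exact Fin.last_pos.ne (T'.map_zero.symm.trans hv)
  have hp_self : p v = collapse v (T'.1 (Fin.last (n + 1))) := by simp only [hp, liftAbove_self]
  have hp_of_ne : ∀ {c}, c ≠ v → p c = collapse v (T'.1 c.castSucc) := fun hc => by
    simp only [hp, liftAbove_of_ne hc]
  have hS : ∀ c ∈ S, p c = v := fun c hc => by rw [hp_of_ne hc.1, hc.2, collapse_last]
  have hmap : T'.1 = subdivide p v S := by
    funext u
    induction u using Fin.lastCases with
    | last =>
      rw [subdivide_last, hp_self, castSucc_collapse]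
      exact parent_ne_self Fin.last_pos.ne'
    | cast c =>
      by_cases hc : c ∈ insert v S
      · rw [subdivide_castSucc_of_mem hc]
        exact hc.elim (fun hcv => hcv ▸ hv) And.right
      · obtain ⟨hcv, hcS⟩ := not_or.mp hc
        rw [subdivide_castSucc_of_notMem hc, hp_of_ne hcv,
          castSucc_collapse fun hlast => hcS ⟨hcv, hlast⟩]
  refine ⟨ofParent p ?_ fun x => ?_, hmap, hS⟩
  · rw [hp_of_ne hv0.symm, Fin.castSucc_zero, T'.map_zero, ← Fin.castSucc_zero, collapse_castSucc]
  · have hpath := (pathAbove_collapse (i := 0) hS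
      (hmap ▸ T'.desc_iff.mp (T'.desc_zero x.castSucc))).resolve_right
        fun hlt => absurd hlt.1 (Fin.not_lt_zero v)
    simpa only [← Fin.castSucc_zero, collapse_castSucc] using hpath

lemma IsSubdivision.admissible {T : CayleyTree (n + 1)} {S : Set (Fin (n + 1))}
    (h : IsSubdivision T' T v S)
    (hmax : ∀ s ∈ S, T'.beta s.castSucc < T'.beta v.castSucc) : T.Admissible v S where
  ne_zero := h.ne_zero
  parent_eq := h.parent_eq
  improperEdge s hs := by
    rw [improperEdge_iff, h.parent_eq s hs, ← h.beta_castSucc fun hsv => h.notMem (hsv ▸ hs)]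
    exact (hmax s hs).trans_le (beta_le_self _)
  beta_lt s hs d hdS hd := by
    have hdv : d ≠ v := by
      rintro rfl
      exact parent_ne_self h.ne_zero hd
    rw [← h.beta_castSucc hdv, ← h.beta_castSucc fun hsv => h.notMem (hsv ▸ hs)]
    refine (hmax s hs).trans_le (beta_le_of_desc ?_)
    rw [← h.map_eq_castSucc_iff.mpr ⟨d, hdS, hd, rfl⟩]
    exact T'.desc_parent _

lemma exists_admissible_tree_eq {u : Fin (n + 2)} (hu : T'.1 u = Fin.last (n + 1)) :
    ∃ (T : CayleyTree (n + 1)) (v : Fin (n + 1)) (S : Set (Fin (n + 1))) (h : T.Admissible v S),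
      h.tree = T' := by
  have hne : {c : Fin (n + 1) | T'.1 c.castSucc = Fin.last (n + 1)}.Nonempty := by
    obtain ⟨c, rfl⟩ : ∃ c : Fin (n + 1), c.castSucc = u := Fin.exists_castSucc_eq.mpr <| by
      rintro rfl
      exact parent_ne_self Fin.last_pos.ne' hu
    exact ⟨c, hu⟩
  obtain ⟨v, hv, hmax⟩ := (Set.toFinite _).exists_maximalFor (fun c => T'.beta c.castSucc) _ hne
  obtain ⟨T, hT⟩ := exists_isSubdivision hv
  have hadm := hT.admissible fun s hs => by
    have hle := (le_total _ _).elim id (hmax (j := s) hs.2)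
    refine hle.lt_of_ne fun heq => hs.1 (Fin.castSucc_injective _ ?_)
    have hne_zero : ∀ {c : Fin (n + 1)}, T'.1 c.castSucc = Fin.last (n + 1) → c.castSucc ≠ 0 := by
      intro c hc h0
      rw [h0, T'.map_zero] at hc
      exact Fin.last_pos.ne hc
    exact eq_of_parent_eq_of_beta_eq (hne_zero hs.2) (hne_zero hv) (hs.2.trans hv.symm) heq
  exact ⟨T, v, _, hadm, Subtype.ext hT.map_eq.symm⟩

end Existence

end AdmissibleInsertion

section Insertion

variable {n : ℕ}

/-- The places of `T` where a new largest vertex can be inserted: as a leaf below a vertex, on the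
edge above a non-root vertex `v` without taking over children of `v`, or on the edge above the
parent of an improper edge `c`, taking over `siblingsUpTo T c`. -/
abbrev Slot (T : CayleyTree (n + 1)) : Type :=
  Fin (n + 1) ⊕ {v : Fin (n + 1) // v ≠ 0} ⊕ {c : Fin (n + 1) // T.ImproperEdge c}

/-- Inserts a new largest vertex into a tree at a given place. -/
def insertion : (Σ T : CayleyTree (n + 1), T.Slot) → CayleyTree (n + 2)
  | ⟨T, .inl q⟩ => T.addLeaf q
  | ⟨T, .inr (.inl v)⟩ => (T.admissible_empty v.2).tree
  | ⟨_, .inr (.inr c)⟩ => (admissible_siblingsUpTo c.2).tree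

lemma addLeaf_ne_tree {T₁ T₂ : CayleyTree (n + 1)} {q v : Fin (n + 1)} {S : Set (Fin (n + 1))}
    (h : T₂.Admissible v S) : T₁.addLeaf q ≠ h.tree := fun heq =>
  parent_ne_last_of_attachLeaf (T := T₁) rfl v.castSucc
    (heq ▸ h.isSubdivision_tree.map_castSucc_of_mem (Set.mem_insert v S))

lemma Admissible.tree_inj {T₁ T₂ : CayleyTree (n + 1)} {v₁ v₂ : Fin (n + 1)}
    {S₁ S₂ : Set (Fin (n + 1))} {h₁ : T₁.Admissible v₁ S₁} {h₂ : T₂.Admissible v₂ S₂}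
    (h : h₁.tree = h₂.tree) : T₁ = T₂ ∧ v₁ = v₂ ∧ S₁ = S₂ :=
  h₁.isSubdivision_tree.unique h₁ (h ▸ h₂.isSubdivision_tree) h₂

lemma siblingsUpTo_ne_empty (T : CayleyTree (n + 1)) (c : Fin (n + 1)) :
    T.siblingsUpTo c ≠ ∅ :=
  Set.nonempty_iff_ne_empty.mp ⟨c, rfl, le_rfl⟩

lemma insertion_injective : Injective (insertion (n := n)) := by
  rintro ⟨T₁, q₁ | v₁ | c₁⟩ ⟨T₂, q₂ | v₂ | c₂⟩ h <;> dsimp only [insertion] at h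
  · obtain ⟨rfl, rfl⟩ := addLeaf_inj h
    rfl
  · exact absurd h (addLeaf_ne_tree _)
  · exact absurd h (addLeaf_ne_tree _)
  · exact absurd h.symm (addLeaf_ne_tree _)
  · obtain ⟨rfl, hv, -⟩ := Admissible.tree_inj h
    rw [Subtype.ext hv]
  · exact absurd (Admissible.tree_inj h).2.2.symm (siblingsUpTo_ne_empty T₂ c₂)
  · exact absurd h.symm (addLeaf_ne_tree _)
  · exact absurd (Admissible.tree_inj h).2.2 (siblingsUpTo_ne_empty T₁ c₁)
  · obtain ⟨rfl, -, hc⟩ := Admissible.tree_inj h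
    rw [Subtype.ext (siblingsUpTo_injOn c₁.2 c₂.2 hc)]

lemma insertion_surjective : Surjective (insertion (n := n)) := by
  intro T'
  by_cases hleaf : ∀ u, T'.1 u ≠ Fin.last (n + 1)
  · obtain ⟨T, q, rfl⟩ := T'.exists_addLeaf_eq hleaf
    exact ⟨⟨T, .inl q⟩, rfl⟩
  · push Not at hleaf
    obtain ⟨u, hu⟩ := hleaf
    obtain ⟨T, v, S, h, rfl⟩ := exists_admissible_tree_eq hu
    rcases h.eq_empty_or_eq_siblingsUpTo with rfl | ⟨c, hc, rfl, rfl⟩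
    · exact ⟨⟨T, .inr (.inl ⟨v, h.ne_zero⟩)⟩, rfl⟩
    · exact ⟨⟨T, .inr (.inr ⟨c, hc⟩)⟩, rfl⟩

open Classical in
lemma sum_cayleyTree_succ {M : Type*} [AddCommMonoid M] (f : CayleyTree (n + 2) → M) :
    ∑ T', f T' = ∑ T : CayleyTree (n + 1), (∑ q, f (T.addLeaf q)
      + (∑ v : {v : Fin (n + 1) // v ≠ 0}, f (T.admissible_empty v.2).tree
        + ∑ c : {c // T.ImproperEdge c}, f (admissible_siblingsUpTo c.2).tree)) := by
  rw [← Bijective.sum_comp ⟨insertion_injective, insertion_surjective⟩ f, Fintype.sum_sigma]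
  refine Finset.sum_congr rfl fun T _ => ?_
  rw [Fintype.sum_sum_type, Fintype.sum_sum_type]
  rfl

end Insertion

/-! ### Summation over the insertions -/

section Weight

variable {n : ℕ}

/-- The contribution of `T` to the sum for `R_{n-1}`, in the variables `x = X 0`, `y = X 1`,
`z = X 2`, `t = X 3`. -/
def weight (T : CayleyTree n) : MvPolynomial (Fin 4) ℚ :=
  (X 1 + 1) ^ (T.impe - T.impp) * (X 1 + X 3) ^ T.impp
    * X 0 ^ (T.degRoot - 1) * X 2 ^ (T.lead - T.degRoot - 1)

/-- `c` is last, in the order of `β`, among the improper children of its parent. -/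
def IsTopSibling (T : CayleyTree n) (c : Fin n) : Prop :=
  ∀ d, T.1 d = T.1 c → T.ImproperEdge d → T.beta d ≤ T.beta c

variable (T : CayleyTree (n + 1))

lemma weight_addLeaf (hn : 1 ≤ n) (q : Fin (n + 1)) :
    (T.addLeaf q).weight = (if q = 0 then X 0 else X 2) * T.weight := by
  have hdeg := T.one_le_degRoot hn
  have hlead := T.degRoot_lt_lead
  have h : (T.addLeaf q).1 = attachLeaf T.1 q := rfl
  rw [weight, impe_attachLeaf h, impp_attachLeaf h, lead_attachLeaf h, degRoot_attachLeaf h,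
    weight]
  split_ifs
  · rw [show T.degRoot + 1 - 1 = T.degRoot - 1 + 1 by lia,
      show T.lead + 1 - (T.degRoot + 1) - 1 = T.lead - T.degRoot - 1 by lia]
    ring
  · rw [add_zero, show T.lead + 1 - T.degRoot - 1 = T.lead - T.degRoot - 1 + 1 by lia]
    ring

variable {T} {T' : CayleyTree (n + 2)} {v : Fin (n + 1)} {S : Set (Fin (n + 1))}

lemma IsSubdivision.weight_eq_of_exists (h : IsSubdivision T' T v S)
    (hS : ∀ c ∈ S, T.ImproperEdge c)
    (hrest : T.ImproperParent v → ∃ d ∉ S, T.1 d = v ∧ T.ImproperEdge d) :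
    T'.weight = (X 1 + X 3) * T.weight := by
  rw [weight, h.impe_eq hS, h.impp_eq_add_one hS hrest, h.lead_eq hS, h.degRoot_eq,
    Nat.add_sub_add_right, weight]
  ring

lemma IsSubdivision.weight_eq_of_forall (h : IsSubdivision T' T v S)
    (hS : ∀ c ∈ S, T.ImproperEdge c) (hv : T.ImproperParent v)
    (hall : ∀ d, T.1 d = v → T.ImproperEdge d → d ∈ S) :
    T'.weight = (X 1 + 1) * T.weight := by
  rw [weight, h.impe_eq hS, h.impp_eq hS hv hall, h.lead_eq hS, h.degRoot_eq,
    Nat.sub_add_comm T.impp_le_impe, weight]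
  ring

lemma weight_tree_empty (hv : v ≠ 0) :
    (T.admissible_empty hv).tree.weight = (X 1 + X 3) * T.weight := by
  refine (T.admissible_empty hv).isSubdivision_tree.weight_eq_of_exists
    (T.admissible_empty hv).improperEdge fun hvi => ?_
  obtain ⟨d, hd⟩ := improperParent_iff_exists.mp hvi
  exact ⟨d, Set.notMem_empty d, hd⟩

open Classical in
lemma weight_tree_siblingsUpTo {c : Fin (n + 1)} (hc : T.ImproperEdge c) :
    (admissible_siblingsUpTo hc).tree.weight
      = (if T.IsTopSibling c then X 1 + 1 else X 1 + X 3) * T.weight := by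
  have hadm := admissible_siblingsUpTo hc
  split_ifs with htop
  · exact hadm.isSubdivision_tree.weight_eq_of_forall hadm.improperEdge
      (improperParent_iff_exists.mpr ⟨c, rfl, hc⟩) fun d hd himp => ⟨hd, htop d hd himp⟩
  · simp only [IsTopSibling, not_forall, not_le] at htop
    obtain ⟨d, hd, himp, hlt⟩ := htop
    exact hadm.isSubdivision_tree.weight_eq_of_exists hadm.improperEdge
      fun _ => ⟨d, fun hmem => hmem.2.not_gt hlt, hd, himp⟩

variable (T)

lemma ncard_isTopSibling : {c | T.ImproperEdge c ∧ T.IsTopSibling c}.ncard = T.impp := by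
  refine Set.ncard_congr (fun c _ => T.1 c) ?_ ?_ ?_
  · rintro c ⟨hc, -⟩
    exact improperParent_iff_exists.mpr ⟨c, rfl, hc⟩
  · rintro c d ⟨hc, hctop⟩ ⟨hd, hdtop⟩ hcd
    exact eq_of_parent_eq_of_beta_eq hc.ne_zero hd.ne_zero hcd
      ((hdtop c hcd hc).antisymm (hctop d hcd.symm hd))
  · intro a ha
    obtain ⟨c, ⟨rfl, hc⟩, hmax⟩ :=
      (Set.toFinite {c | T.1 c = a ∧ T.ImproperEdge c}).exists_maximalFor T.beta _
        (improperParent_iff_exists.mp ha)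
    exact ⟨c, ⟨hc, fun d hd himp => (le_total _ _).elim id (hmax (j := d) ⟨hd, himp⟩)⟩, rfl⟩

open Classical in
lemma sum_weight_tree_siblingsUpTo :
    ∑ c : {c // T.ImproperEdge c}, (admissible_siblingsUpTo c.2).tree.weight
      = ((T.impp : MvPolynomial (Fin 4) ℚ) * (X 1 + 1)
          + ((T.impe - T.impp : ℕ) : MvPolynomial (Fin 4) ℚ) * (X 1 + X 3)) * T.weight := by
  have htop : (Finset.univ.filter fun c : {c // T.ImproperEdge c} => T.IsTopSibling c).card
      = T.impp := by
    rw [← ncard_isTopSibling, ← Fintype.card_subtype, ← Nat.card_eq_fintype_card,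
      ← Nat.card_coe_set_eq]
    exact Nat.card_congr (Equiv.subtypeSubtypeEquivSubtypeInter _ _)
  have htotal : (Finset.univ : Finset {c // T.ImproperEdge c}).card = T.impe := by
    rw [Finset.card_univ, ← Nat.card_eq_fintype_card]
    exact Nat.card_coe_set_eq _
  have hcompl := Finset.card_filter_add_card_filter_not (s := Finset.univ)
    (fun c : {c // T.ImproperEdge c} => T.IsTopSibling c)
  rw [htop, htotal] at hcompl
  rw [Finset.sum_congr rfl fun c _ => weight_tree_siblingsUpTo c.2, ← Finset.sum_mul,
    Finset.sum_ite, Finset.sum_const, Finset.sum_const, htop,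
    Nat.eq_sub_of_add_eq' hcompl, nsmul_eq_mul, nsmul_eq_mul]

end Weight

section Recursion

variable {n : ℕ} (T : CayleyTree (n + 1))

lemma sum_weight_addLeaf (hn : 1 ≤ n) :
    ∑ q, (T.addLeaf q).weight = (X 0 + (n : MvPolynomial (Fin 4) ℚ) * X 2) * T.weight := by
  simp_rw [T.weight_addLeaf hn]
  rw [← Finset.sum_mul, Fin.sum_univ_succ]
  simp [Fin.succ_ne_zero]

lemma sum_weight_tree_empty :
    ∑ v : {v : Fin (n + 1) // v ≠ 0}, (T.admissible_empty v.2).tree.weight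
      = (n : MvPolynomial (Fin 4) ℚ) * (X 1 + X 3) * T.weight := by
  rw [Finset.sum_congr rfl fun v _ => weight_tree_empty v.2, Finset.sum_const,
    Finset.card_univ, Fintype.card_subtype_compl]
  simp [mul_assoc]

lemma pderiv_weight (T : CayleyTree n) :
    (X 1 + X 3) * ((X 1 + 1) * pderiv 1 T.weight)
      = ((T.impp : MvPolynomial (Fin 4) ℚ) * (X 1 + 1)
          + ((T.impe - T.impp : ℕ) : MvPolynomial (Fin 4) ℚ) * (X 1 + X 3)) * T.weight := by
  have hpow (u : MvPolynomial (Fin 4) ℚ) (k : ℕ) := mul_derivation_pow (pderiv 1) u k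
  have h0 (k : ℕ) : pderiv 1 ((X 0 : MvPolynomial (Fin 4) ℚ) ^ k) = 0 := by
    simp [pderiv_X]
  have h2 (k : ℕ) : pderiv 1 ((X 2 : MvPolynomial (Fin 4) ℚ) ^ k) = 0 := by
    simp [pderiv_X]
  have h1 := hpow (X 1 + 1) (T.impe - T.impp)
  have h3 := hpow (X 1 + X 3) T.impp
  rw [show pderiv 1 (X 1 + 1 : MvPolynomial (Fin 4) ℚ) = 1 by simp, mul_one] at h1
  rw [show pderiv 1 (X 1 + X 3 : MvPolynomial (Fin 4) ℚ) = 1 by simp [pderiv_X], mul_one] at h3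
  simp only [weight, pderiv_mul, h0, h2]
  linear_combination
    X 0 ^ (T.degRoot - 1) * X 2 ^ (T.lead - T.degRoot - 1)
      * ((X 1 + X 3) ^ (T.impp + 1) * h1 + (X 1 + 1) ^ (T.impe - T.impp + 1) * h3)

lemma sum_weight_succ (hn : 1 ≤ n) :
    ∑ T' : CayleyTree (n + 2), T'.weight
      = (X 0 + (n : MvPolynomial (Fin 4) ℚ) * X 2 + (n : MvPolynomial (Fin 4) ℚ) * (X 1 + X 3))
          * ∑ T : CayleyTree (n + 1), T.weight
        + (X 1 + X 3) * ((X 1 + 1) * pderiv 1 (∑ T : CayleyTree (n + 1), T.weight)) := by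
  simp_rw [sum_cayleyTree_succ, sum_weight_addLeaf _ hn, sum_weight_tree_empty,
    sum_weight_tree_siblingsUpTo, ← pderiv_weight, map_sum, Finset.mul_sum,
    ← Finset.sum_add_distrib]
  exact Finset.sum_congr rfl fun T _ => by ring

end Recursion

section TwoVertices

lemma parent_eq_zero_of_size_two (T : CayleyTree 2) (c : Fin 2) : T.1 c = 0 := by
  rcases eq_or_ne c 0 with rfl | hc
  · exact T.map_zero
  · have hne := parent_ne_self (T := T) hc
    lia

lemma weight_eq_one_of_size_two (T : CayleyTree 2) : T.weight = 1 := by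
  have himpe : T.impe = 0 := by
    refine (Set.ncard_eq_zero).mpr (Set.eq_empty_of_forall_notMem fun c hc => ?_)
    exact hc.parent_ne_zero (T.parent_eq_zero_of_size_two c)
  have himpp : T.impp = 0 := Nat.le_zero.mp (himpe ▸ T.impp_le_impe)
  have hdeg := T.one_le_degRoot le_rfl
  have hlead := T.degRoot_lt_lead
  have hle : T.lead ≤ 2 := (Set.ncard_le_card _).trans_eq (Nat.card_fin 2)
  rw [weight, himpe, himpp, show T.degRoot - 1 = 0 by lia,
    show T.lead - T.degRoot - 1 = 0 by lia]
  ring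

lemma sum_weight_two : ∑ T : CayleyTree 2, T.weight = 1 := by
  let T₀ : CayleyTree 2 := ofParent (fun _ => 0) rfl fun _ => .single ⟨rfl, Fin.zero_le _⟩
  have huniq (T : CayleyTree 2) : T = T₀ := Subtype.ext (funext T.parent_eq_zero_of_size_two)
  rw [Fintype.sum_eq_single T₀ fun T hT => absurd (huniq T) hT, weight_eq_one_of_size_two]

end TwoVertices

end CayleyTree

/-- For every `n ≥ 1`,
`R_n(x,y,z,t) = Σ_{T ∈ C_{n+1}} (y+1)^{impe T - impp T} (y+t)^{impp T} x^{deg_T(1)-1}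
  z^{lead T - deg_T(1) - 1}`. -/
theorem Rpoly_eq_sum_cayleyTree (n : ℕ) (hn : 1 ≤ n) :
    Rpoly n = ∑ T : CayleyTree (n + 1),
      ((X 1 : MvPolynomial (Fin 4) ℚ) + 1) ^ (T.impe - T.impp) * (X 1 + X 3) ^ T.impp
        * X 0 ^ (T.degRoot - 1) * X 2 ^ (T.lead - T.degRoot - 1) := by
  change Rpoly n = ∑ T : CayleyTree (n + 1), T.weight
  induction n, hn using Nat.le_induction with
  | base => rw [Rpoly_one, CayleyTree.sum_weight_two]
  | succ n hn ih => rw [Rpoly_succ hn, ih, CayleyTree.sum_weight_succ hn]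

end
end
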